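/- Let a ∈ (0,1), let t* < ∞, and let (f,p) be a solution of problem (P) on (0,t*) with initial datum f_I satisfying conditions (i)–(iii) and with λ ∈ L¹(0,t*). Suppose L := liminf_{t→t*} p(t) < R := limsup_{t→t*} p(t). Then for every integer m ≥ 0 there exists a constant C(m) such that, whenever β > 0 is sufficiently small, the following holds: for every sequence t_n → t* with p(t_n) → R, one has limsup_{n→∞} |∂_x^m f(x, t_n)| ≤ C(m) for every x ∈ [R − β, R + β]. The parallel statement holds at L along sequences with p(t_n) → L. -/

import Mathlib

open MeasureTheory

/-- The 1D heat kernel `K(x,t) = (4πt)^{-1/2} exp(-x²/(4t))`. -/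
noncomputable def heatK (x t : ℝ) : ℝ :=
  (Real.sqrt (4 * Real.pi * t))⁻¹ * Real.exp (-(x ^ 2) / (4 * t))

/-- The Neumann heat kernel on `[-1,1]`:
`Γ(x,x';t) = Σ_{k∈ℤ} K(x − (2k + (−1)^{|k|} x'), t)`. -/
noncomputable def heatGamma (x x' t : ℝ) : ℝ :=
  ∑' k : ℤ, heatK (x - (2 * (k : ℝ) + (-1 : ℝ) ^ k.natAbs * x')) t

/-- The flux `λ(s) = −∂ₓ f(p(s), s)` at the free boundary. -/
noncomputable def flux (f : ℝ → ℝ → ℝ) (p : ℝ → ℝ) (s : ℝ) : ℝ :=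
  -deriv (fun x => f x s) (p s)

/-- `ā(s) = min {a, 1 − p(s), 1 + p(s)}`. -/
noncomputable def abar (a : ℝ) (p : ℝ → ℝ) (s : ℝ) : ℝ :=
  min a (min (1 - p s) (1 + p s))

/-- The sup norm `‖h‖_{L^∞(−1,1)}` (for continuous `h`). -/
noncomputable def supNorm (h : ℝ → ℝ) : ℝ := ⨆ x : Set.Icc (-1:ℝ) 1, |h x.1|

/-- Conditions (i)–(iii) on the initial datum `f_I ∈ C²([−1,1])`:
(i) unique zero `p_I ∈ (−1,1)`, positive to the left, negative to the right;
(ii) Neumann conditions `∂ₓf_I(±1) = 0`;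
(iii) `λ_I = −∂ₓ f_I(p_I) > 0` and `−∂ₓ f_I > λ_I/2` on `(p_I − a₀, p_I + a₀)`. -/
structure IsInitialDatum (fI : ℝ → ℝ) (pI a₀ lamI : ℝ) : Prop where
  smooth : ContDiffOn ℝ 2 fI (Set.Icc (-1) 1)
  pI_mem : pI ∈ Set.Ioo (-1 : ℝ) 1
  zero_at : fI pI = 0
  pos_left : ∀ x ∈ Set.Ico (-1 : ℝ) pI, 0 < fI x
  neg_right : ∀ x ∈ Set.Ioc pI 1, fI x < 0
  neumann_left : derivWithin fI (Set.Icc (-1) 1) (-1) = 0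
  neumann_right : derivWithin fI (Set.Icc (-1) 1) 1 = 0
  lamI_eq : lamI = -deriv fI pI
  lamI_pos : 0 < lamI
  slope : ∀ x ∈ Set.Ioo (pI - a₀) (pI + a₀), lamI / 2 < -deriv fI x

/-- A solution `(f, p)` of problem (P) on the time set `J` with parameter `a` and
initial datum `f_I`: `p` is a continuous curve in `(−1,1)`, `p(t)` is the unique zero
of `f(·,t)` (positive to the left, negative to the right), `f(·,t)` is differentiable
at `p(t)`, the flux is locally integrable on `J`, and the Duhamel identity holds. -/
structure IsSolutionP (a : ℝ) (fI : ℝ → ℝ) (J : Set ℝ) (f : ℝ → ℝ → ℝ) (p : ℝ → ℝ) : Prop where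
  p_cont : ContinuousOn p J
  p_mem : ∀ t ∈ J, p t ∈ Set.Ioo (-1 : ℝ) 1
  zero_at : ∀ t ∈ J, f (p t) t = 0
  pos_left : ∀ t ∈ J, ∀ x ∈ Set.Ico (-1 : ℝ) (p t), 0 < f x t
  neg_right : ∀ t ∈ J, ∀ x ∈ Set.Ioc (p t) 1, f x t < 0
  diff_at : ∀ t ∈ J, DifferentiableAt ℝ (fun x => f x t) (p t)
  flux_loc_int : LocallyIntegrableOn (flux f p) J
  duhamel : ∀ t ∈ J, ∀ x ∈ Set.Icc (-1 : ℝ) 1,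
      f x t = (∫ x' in (-1 : ℝ)..1, heatGamma x x' t * fI x')
        + ∫ s in (0 : ℝ)..t,
            (heatGamma x (p s - abar a p s) (t - s)
              - heatGamma x (p s + abar a p s) (t - s)) * flux f p s

/-- The Duhamel iterate with data `(p_n, λ_n)` and initial datum `f_I`. -/
noncomputable def duhamelIterate (a : ℝ) (fI pn lamn : ℝ → ℝ) (x t : ℝ) : ℝ :=
  (∫ x' in (-1 : ℝ)..1, heatGamma x x' t * fI x')
    + ∫ s in (0 : ℝ)..t,
        (heatGamma x (pn s - a) (t - s) - heatGamma x (pn s + a) (t - s)) * lamn s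

namespace HG
open Set Filter Topology

noncomputable def img (k : ℤ) (y : ℝ) : ℝ := 2 * (k : ℝ) + (-1 : ℝ) ^ k.natAbs * y

lemma sgn_cases (k : ℤ) : (Even k ∧ (-1 : ℝ) ^ k.natAbs = 1) ∨ (Odd k ∧ (-1 : ℝ) ^ k.natAbs = -1) := by
  rcases Int.even_or_odd k with h | h
  · left; exact ⟨h, (Int.natAbs_even.2 h).neg_one_pow⟩
  · right; exact ⟨h, (Int.natAbs_odd.2 h).neg_one_pow⟩

lemma heatK_nonneg (x t : ℝ) : 0 ≤ heatK x t := by unfold heatK; positivity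

lemma heatK_nonpos (x : ℝ) {t : ℝ} (ht : t ≤ 0) : heatK x t = 0 := by
  unfold heatK
  rw [Real.sqrt_eq_zero_of_nonpos (by nlinarith [Real.pi_pos])]; simp

lemma heatK_neg (x t : ℝ) : heatK (-x) t = heatK x t := by unfold heatK; simp

lemma measurable_heatK : Measurable (fun q : ℝ × ℝ => heatK q.1 q.2) := by
  unfold heatK; fun_prop

lemma summable_exp_natAbs {c : ℝ} (hc : 0 < c) : Summable (fun k : ℤ => Real.exp (-(k.natAbs : ℝ) * c)) := by
  have h : Summable (fun n : ℕ => Real.exp (-(n : ℝ) * c)) := by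
    have := Real.summable_exp_nat_mul_iff.2 (neg_lt_zero.2 hc)
    refine this.congr fun n => ?_
    ring_nf
  refine Summable.of_nat_of_neg ?_ ?_
  · simpa using h
  · simpa using h

lemma img_abs (k : ℤ) (x y : ℝ) : 2 * (k.natAbs : ℝ) - (|x| + |y|) ≤ |x - img k y| := by
  have h1 : (k.natAbs : ℝ) = |(k : ℝ)| := by
    rw [Nat.cast_natAbs]; simp
  rw [h1]
  have : |2 * (k : ℝ)| = 2 * |(k : ℝ)| := by rw [abs_mul]; simp
  have h2 : |2 * (k : ℝ)| ≤ |x - img k y| + (|x| + |y|) := by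
    have h3 : 2 * (k : ℝ) = -(x - img k y) + (x - (-1 : ℝ) ^ k.natAbs * y) := by unfold img; ring
    rw [h3]
    refine (abs_add_le _ _).trans ?_
    rw [abs_neg]
    gcongr
    refine (abs_sub _ _).trans ?_
    rw [abs_mul]; simp
  linarith

lemma summable_exp_img (x y : ℝ) {t : ℝ} (ht : 0 < t) :
    Summable (fun k : ℤ => Real.exp (-((x - img k y) ^ 2) / (4 * t))) := by
  have h := (summable_exp_natAbs (c := 1 / t) (by positivity)).mul_left (Real.exp ((2 * (|x| + |y|) + 1) / (4 * t)))
  refine Summable.of_nonneg_of_le (fun k => (Real.exp_pos _).le) (fun k => ?_) h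
  rw [← Real.exp_add]
  apply Real.exp_le_exp.2
  have h1 := img_abs k x y
  have h2 : (x - img k y) ^ 2 ≥ 4 * (k.natAbs : ℝ) - 2 * (|x| + |y|) - 1 := by
    rw [← sq_abs]; nlinarith [sq_nonneg (|x - img k y| - 1)]
  have : (2 * (|x| + |y|) + 1) / (4 * t) + -(k.natAbs : ℝ) * (1 / t) = (2 * (|x| + |y|) + 1 - 4 * (k.natAbs : ℝ)) / (4 * t) := by
    field_simp; ring
  rw [this]
  gcongr
  linarith

lemma summable_heatK (x y t : ℝ) : Summable (fun k : ℤ => heatK (x - img k y) t) := by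
  rcases le_or_gt t 0 with h | h
  · simp only [heatK_nonpos _ h]; exact summable_zero
  · exact (summable_exp_img x y h).mul_left _

lemma heatGamma_eq (x y t : ℝ) : heatGamma x y t = ∑' k : ℤ, heatK (x - img k y) t := rfl

lemma heatGamma_nonneg (x y t : ℝ) : 0 ≤ heatGamma x y t := tsum_nonneg fun _ => heatK_nonneg _ _

lemma heatGamma_nonpos (x y : ℝ) {t : ℝ} (ht : t ≤ 0) : heatGamma x y t = 0 := by
  simp [heatGamma_eq, heatK_nonpos _ ht]

lemma measurable_img (k : ℤ) : Measurable (img k) := by unfold img; fun_prop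

lemma measurable_heatGamma : Measurable (fun q : ℝ × ℝ × ℝ => heatGamma q.1 q.2.1 q.2.2) := by
  have h : ∀ s : Finset ℤ, Measurable (fun q : ℝ × ℝ × ℝ => ∑ k ∈ s, heatK (q.1 - img k q.2.1) q.2.2) := by
    intro s
    refine Finset.measurable_sum _ fun k _ => ?_
    exact measurable_heatK.comp (f := fun q : ℝ × ℝ × ℝ => (q.1 - img k q.2.1, q.2.2))
      (by have := measurable_img k; fun_prop)
  refine measurable_of_tendsto_metrizable' atTop h ?_
  rw [tendsto_pi_nhds]
  intro q
  exact (summable_heatK q.1 q.2.1 q.2.2).hasSum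

lemma heatK_le_heatGamma (x y t : ℝ) : heatK (x - y) t ≤ heatGamma x y t := by
  have := (summable_heatK x y t).le_tsum 0 (fun j _ => heatK_nonneg _ _)
  simpa [img, heatGamma_eq] using this

def flipPerm : Equiv.Perm ℤ :=
  Function.Involutive.toPerm (fun k : ℤ => if Even k then -k else k) (by
    intro k
    by_cases h : Even k <;> simp [h])

lemma heatGamma_symm (x y t : ℝ) : heatGamma x y t = heatGamma y x t := by
  rw [heatGamma_eq, heatGamma_eq, ← flipPerm.tsum_eq]
  refine tsum_congr fun k => ?_
  have : flipPerm k = if Even k then -k else k := rfl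
  rw [this]
  rcases sgn_cases k with ⟨h, h2⟩ | ⟨h, h2⟩
  · rw [if_pos h, ← heatK_neg]
    congr 1
    unfold img
    rw [Int.natAbs_neg, h2]; push_cast; ring
  · rw [if_neg (Int.not_even_iff_odd.2 h)]
    congr 1
    unfold img
    rw [h2]; ring

lemma heatGamma_neg (x y t : ℝ) : heatGamma (-x) (-y) t = heatGamma x y t := by
  rw [heatGamma_eq, heatGamma_eq, ← (Equiv.neg ℤ).tsum_eq]
  refine tsum_congr fun k => ?_
  rw [← heatK_neg]
  congr 1
  simp only [img, Equiv.neg_apply, Int.natAbs_neg]; push_cast; ring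

lemma img_sq (k : ℤ) {x y : ℝ} (hx : x ∈ Icc (-1 : ℝ) 1) (hy : y ∈ Icc (-1 : ℝ) 1) :
    (x - y) ^ 2 + ((k.natAbs - 2 : ℕ) : ℝ) ≤ (x - img k y) ^ 2 := by
  obtain ⟨hx1, hx2⟩ := hx
  obtain ⟨hy1, hy2⟩ := hy
  have h1 : (k.natAbs : ℝ) = |(k : ℝ)| := by
    rw [Nat.cast_natAbs]; simp
  have hsq : (k : ℝ) ^ 2 = |(k : ℝ)| ^ 2 := (sq_abs _).symm
  have hkk := le_abs_self (k : ℝ)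
  have hkk2 := neg_abs_le (k : ℝ)
  unfold img
  rcases sgn_cases k with ⟨h, h2⟩ | ⟨h, h2⟩
  · rw [h2]
    have e : (x - (2 * (k : ℝ) + 1 * y)) ^ 2 = (x - y) ^ 2 + (4 * (k : ℝ) ^ 2 - 4 * (k * (x - y))) := by ring
    rw [e]
    rcases Nat.lt_or_ge k.natAbs 2 with hk | hk
    · have : k = 0 := by
        rcases h with ⟨j, rfl⟩; omega
      subst this; simp
    · rw [Nat.cast_sub hk, h1]
      have hk' : (2 : ℝ) ≤ |(k : ℝ)| := by rw [← h1]; exact_mod_cast hk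
      have : (k : ℝ) * (x - y) ≤ |(k : ℝ)| * 2 := by
        refine (le_abs_self _).trans ?_
        rw [abs_mul]
        gcongr
        rw [abs_le]; constructor <;> linarith
      push_cast
      nlinarith
  · rw [h2]
    have e : (x - (2 * (k : ℝ) + -1 * y)) ^ 2 = (x - y) ^ 2 + 4 * ((k - x) * (k - y)) := by ring
    rw [e]
    have hk1 : 1 ≤ k ∨ k ≤ -1 := by rcases h with ⟨j, rfl⟩; omega
    have hpos : (0 : ℝ) ≤ (k - x) * (k - y) ∧ (|(k : ℝ)| - 1) ^ 2 ≤ (k - x) * (k - y) := by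
      rcases hk1 with hk | hk
      · have : (1 : ℝ) ≤ k := by exact_mod_cast hk
        rw [abs_of_nonneg (by linarith)]
        constructor
        · exact mul_nonneg (by linarith) (by linarith)
        · nlinarith [mul_nonneg (by linarith : (0:ℝ) ≤ 1 - x) (by linarith : (0:ℝ) ≤ k - y), mul_nonneg (by linarith : (0:ℝ) ≤ 1 - y) (by linarith : (0:ℝ) ≤ (k:ℝ) - 1)]
      · have : (k : ℝ) ≤ -1 := by exact_mod_cast hk
        rw [abs_of_nonpos (by linarith)]
        constructor
        · exact mul_nonneg_of_nonpos_of_nonpos (by linarith) (by linarith)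
        · nlinarith [mul_nonneg (by linarith : (0:ℝ) ≤ 1 + x) (by linarith : (0:ℝ) ≤ -k + y), mul_nonneg (by linarith : (0:ℝ) ≤ 1 + y) (by linarith : (0:ℝ) ≤ -(k:ℝ) - 1)]
    rcases Nat.lt_or_ge k.natAbs 2 with hk | hk
    · have : k.natAbs - 2 = 0 := by omega
      rw [this]; simp; linarith [hpos.1]
    · rw [Nat.cast_sub hk, h1]
      have hk' : (2 : ℝ) ≤ |(k : ℝ)| := by rw [← h1]; exact_mod_cast hk
      push_cast
      nlinarith [hpos.2]

/-- doubling trick -/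
lemma heatK_double (w : ℝ) {t : ℝ} (ht : 0 < t) :
    heatK w t = Real.sqrt 2 * Real.exp (-(w ^ 2) / (8 * t)) * heatK w (2 * t) := by
  unfold heatK
  have h1 : Real.sqrt (4 * Real.pi * (2 * t)) = Real.sqrt 2 * Real.sqrt (4 * Real.pi * t) := by
    rw [← Real.sqrt_mul (by norm_num)]; congr 1; ring
  rw [h1, mul_inv]
  have h2 : -(w ^ 2) / (4 * t) = -(w ^ 2) / (8 * t) + -(w ^ 2) / (4 * (2 * t)) := by field_simp; ring
  rw [h2, Real.exp_add]
  have : Real.sqrt 2 ≠ 0 := by positivity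
  field_simp

lemma heatGamma_double {x y δ t : ℝ} (hx : x ∈ Icc (-1 : ℝ) 1) (hy : y ∈ Icc (-1 : ℝ) 1) (ht : 0 < t)
    (hδ : 0 ≤ δ) (h : δ ≤ |x - y|) :
    heatGamma x y t ≤ Real.sqrt 2 * Real.exp (-(δ ^ 2) / (8 * t)) * heatGamma x y (2 * t) := by
  rw [heatGamma_eq, heatGamma_eq, ← tsum_mul_left]
  refine Summable.tsum_le_tsum (fun k => ?_) (summable_heatK _ _ _) ((summable_heatK _ _ _).mul_left _)
  rw [heatK_double _ ht]
  have := img_sq k hx hy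
  have h3 : δ ^ 2 ≤ (x - y) ^ 2 := by rw [← sq_abs (x - y)]; gcongr
  have h4 : (0 : ℝ) ≤ ((k.natAbs - 2 : ℕ) : ℝ) := by positivity
  have := heatK_nonneg (x - img k y) (2 * t)
  have h5 : Real.exp (-((x - img k y) ^ 2) / (8 * t)) ≤ Real.exp (-(δ ^ 2) / (8 * t)) := by
    apply Real.exp_le_exp.2
    apply div_le_div_of_nonneg_right _ (by positivity)
    linarith
  gcongr

end HG

namespace HG
open Set Filter Topology ENNReal

lemma lintegral_unfold (φ : ℝ → ℝ≥0∞) :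
    ∫⁻ y, φ y = ∑' k : ℤ, ∫⁻ y in Ioc (-1 : ℝ) 1, φ (img k y) := by
  have hU : (⋃ n : ℤ, Ioc ((-1 : ℝ) + n • (2:ℝ)) (-1 + (n + 1) • (2:ℝ))) = univ :=
    iUnion_Ioc_add_zsmul (by norm_num) (-1)
  rw [← setLIntegral_univ, ← hU, lintegral_iUnion (fun _ => measurableSet_Ioc)
    (pairwise_disjoint_Ioc_add_zsmul (-1 : ℝ) 2)]
  refine tsum_congr fun k => ?_
  have e1 : ∫⁻ y in Ioc (-1 : ℝ) 1, φ (img k y) = ∫⁻ y in Ioo (-1 : ℝ) 1, φ (img k y) :=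
    setLIntegral_congr Ioo_ae_eq_Ioc.symm
  have e2 : ∫⁻ y in Ioc ((-1 : ℝ) + k • (2:ℝ)) (-1 + (k + 1) • (2:ℝ)), φ y
      = ∫⁻ y in Ioo (2 * (k : ℝ) - 1) (2 * (k : ℝ) + 1), φ y := by
    have : Ioc ((-1 : ℝ) + k • (2:ℝ)) (-1 + (k + 1) • (2:ℝ)) = Ioc (2 * (k : ℝ) - 1) (2 * (k : ℝ) + 1) := by
      simp only [zsmul_eq_mul]; push_cast; congr 1 <;> ring
    rw [this]
    exact setLIntegral_congr Ioo_ae_eq_Ioc.symm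
  rw [e1, e2]
  rcases sgn_cases k with ⟨h, h2⟩ | ⟨h, h2⟩
  · have mp : MeasurePreserving (fun y : ℝ => 2 * (k : ℝ) + y) volume volume := measurePreserving_add_left volume _
    have me : MeasurableEmbedding (fun y : ℝ => 2 * (k : ℝ) + y) := measurableEmbedding_addLeft _
    have := mp.setLIntegral_comp_preimage_emb me φ (Ioo (2 * (k : ℝ) - 1) (2 * (k : ℝ) + 1))
    rw [← this]
    have hs : (fun y : ℝ => 2 * (k : ℝ) + y) ⁻¹' Ioo (2 * (k : ℝ) - 1) (2 * (k : ℝ) + 1) = Ioo (-1) 1 := by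
      ext y; simp only [mem_preimage, mem_Ioo]; constructor <;> rintro ⟨h1, h2⟩ <;> constructor <;> linarith
    rw [hs]
    simp [img, h2]
  · have mp : MeasurePreserving (fun y : ℝ => 2 * (k : ℝ) - y) volume volume := Measure.measurePreserving_sub_left volume _
    have me : MeasurableEmbedding (fun y : ℝ => 2 * (k : ℝ) - y) := measurableEmbedding_subLeft _
    have := mp.setLIntegral_comp_preimage_emb me φ (Ioo (2 * (k : ℝ) - 1) (2 * (k : ℝ) + 1))
    rw [← this]
    have hs : (fun y : ℝ => 2 * (k : ℝ) - y) ⁻¹' Ioo (2 * (k : ℝ) - 1) (2 * (k : ℝ) + 1) = Ioo (-1) 1 := by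
      ext y; simp only [mem_preimage, mem_Ioo]; constructor <;> rintro ⟨h1, h2⟩ <;> constructor <;> linarith
    rw [hs]
    simp [img, h2, sub_eq_add_neg]

lemma meas_heatK_sub (v t : ℝ) : Measurable (fun y => heatK (v - y) t) :=
  measurable_heatK.comp (f := fun y : ℝ => (v - y, t)) (by fun_prop)

lemma lintegral_fold (x t : ℝ) (φ : ℝ → ℝ) (hφm : Measurable φ) (hφ : ∀ y, 0 ≤ φ y)
    (hinv : ∀ k y, φ (img k y) = φ y) :
    ∫⁻ y in Ioc (-1 : ℝ) 1, ENNReal.ofReal (heatGamma x y t * φ y)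
      = ∫⁻ y, ENNReal.ofReal (heatK (x - y) t * φ y) := by
  rw [lintegral_unfold, ← lintegral_tsum]
  · refine lintegral_congr fun y => ?_
    simp only [hinv]
    rw [heatGamma_eq, ← tsum_mul_right, ENNReal.ofReal_tsum_of_nonneg]
    · intro n; exact mul_nonneg (heatK_nonneg _ _) (hφ _)
    · exact (summable_heatK x y t).mul_right _
  · intro k
    have := (meas_heatK_sub x t).comp (measurable_img k)
    have h2 := hφm.comp (measurable_img k)
    exact ((this.mul h2).ennreal_ofReal).aemeasurable

lemma heatK_eq_gauss (x y : ℝ) {t : ℝ} (ht : 0 < t) :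
    heatK (x - y) t = ProbabilityTheory.gaussianPDFReal x (2 * t).toNNReal y := by
  unfold heatK ProbabilityTheory.gaussianPDFReal
  rw [Real.coe_toNNReal _ (by linarith)]
  congr 2
  · congr 1; ring
  · congr 1 <;> ring

lemma lintegral_heatK (x : ℝ) {t : ℝ} (ht : 0 < t) : ∫⁻ y, ENNReal.ofReal (heatK (x - y) t) = 1 := by
  simp only [heatK_eq_gauss _ _ ht]
  exact ProbabilityTheory.lintegral_gaussianPDFReal_eq_one x (by simp [ht])

lemma heatK_mul (x y v : ℝ) {t s : ℝ} (ht : 0 < t) (hs : 0 < s) :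
    heatK (x - y) t * heatK (y - v) s =
      heatK (x - v) (t + s) * heatK ((s * x + t * v) / (t + s) - y) (t * s / (t + s)) := by
  unfold heatK
  have h1 : (Real.sqrt (4 * Real.pi * t))⁻¹ * (Real.sqrt (4 * Real.pi * s))⁻¹
     = (Real.sqrt (4 * Real.pi * (t + s)))⁻¹ * (Real.sqrt (4 * Real.pi * (t * s / (t + s))))⁻¹ := by
    rw [← mul_inv, ← mul_inv, ← Real.sqrt_mul (by positivity), ← Real.sqrt_mul (by positivity)]
    congr 2; field_simp
  have h2 : -((x - y) ^ 2) / (4 * t) + -((y - v) ^ 2) / (4 * s)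
     = -((x - v) ^ 2) / (4 * (t + s)) + -(((s * x + t * v) / (t + s) - y) ^ 2) / (4 * (t * s / (t + s))) := by
    field_simp; ring
  have h3 := congrArg Real.exp h2
  rw [Real.exp_add, Real.exp_add] at h3
  rw [mul_mul_mul_comm, h1, h3, mul_mul_mul_comm]

lemma lintegral_heatK_mul (x v : ℝ) {t s : ℝ} (ht : 0 < t) (hs : 0 < s) :
    ∫⁻ y, ENNReal.ofReal (heatK (x - y) t * heatK (y - v) s) = ENNReal.ofReal (heatK (x - v) (t + s)) := by
  simp only [heatK_mul x _ v ht hs]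
  simp only [ENNReal.ofReal_mul (heatK_nonneg _ _)]
  rw [lintegral_const_mul _ (meas_heatK_sub _ _).ennreal_ofReal, lintegral_heatK _ (by positivity), mul_one]

lemma img_img (k : ℤ) : ∃ e : Equiv.Perm ℤ, ∀ j (y w : ℝ), heatK (img k y - img j w) = heatK (y - img (e j) w) := by
  rcases sgn_cases k with ⟨h, h2⟩ | ⟨h, h2⟩
  · refine ⟨Equiv.subRight k, fun j y w => ?_⟩
    congr 1
    have : (-1 : ℝ) ^ (j - k).natAbs = (-1 : ℝ) ^ j.natAbs := by
      rcases sgn_cases j with ⟨g, g2⟩ | ⟨g, g2⟩ <;> rcases sgn_cases (j - k) with ⟨g', g2'⟩ | ⟨g', g2'⟩ <;> rw [g2, g2'] <;>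
      exfalso <;> rcases h with ⟨a, rfl⟩ <;> rcases g with ⟨b, rfl⟩ <;> rcases g' with ⟨c, hc⟩ <;> omega
    simp only [img, h2, Equiv.subRight_apply, this]; push_cast; ring
  · refine ⟨Equiv.subLeft k, fun j y w => ?_⟩
    funext t
    rw [← heatK_neg]
    congr 1
    have : (-1 : ℝ) ^ (k - j).natAbs = -(-1 : ℝ) ^ j.natAbs := by
      rcases sgn_cases j with ⟨g, g2⟩ | ⟨g, g2⟩ <;> rcases sgn_cases (k - j) with ⟨g', g2'⟩ | ⟨g', g2'⟩ <;> rw [g2, g2'] <;>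
      first
      | (exfalso ; rcases h with ⟨a, rfl⟩ ; rcases g with ⟨b, rfl⟩ ; rcases g' with ⟨c, hc⟩ ; omega)
      | norm_num
    simp only [img, h2, Equiv.subLeft_apply, this]; push_cast; ring

lemma heatGamma_img (k : ℤ) (y w s : ℝ) : heatGamma (img k y) w s = heatGamma y w s := by
  obtain ⟨e, he⟩ := img_img k
  rw [heatGamma_eq, heatGamma_eq, ← e.tsum_eq (fun j => heatK (y - img j w) s)]
  exact tsum_congr fun j => by rw [he]

lemma meas_heatGamma_left (y t : ℝ) : Measurable (fun x => heatGamma x y t) :=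
  measurable_heatGamma.comp (f := fun x : ℝ => (x, y, t)) (by fun_prop)

lemma meas_heatGamma_right (x t : ℝ) : Measurable (fun y => heatGamma x y t) :=
  measurable_heatGamma.comp (f := fun y : ℝ => (x, y, t)) (by fun_prop)

lemma lintegral_heatGamma (x : ℝ) {t : ℝ} (ht : 0 < t) :
    ∫⁻ y in Ioc (-1 : ℝ) 1, ENNReal.ofReal (heatGamma x y t) = 1 := by
  have := lintegral_fold x t (fun _ => 1) measurable_const (fun _ => zero_le_one) (fun _ _ => rfl)
  simpa [lintegral_heatK x ht] using this

lemma lintegral_heatGamma_mul (x w : ℝ) {t s : ℝ} (ht : 0 < t) (hs : 0 < s) :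
    ∫⁻ y in Ioc (-1 : ℝ) 1, ENNReal.ofReal (heatGamma x y t * heatGamma y w s)
      = ENNReal.ofReal (heatGamma x w (t + s)) := by
  rw [lintegral_fold x t (fun y => heatGamma y w s) (meas_heatGamma_left w s) (fun _ => heatGamma_nonneg _ _ _)
    (fun k y => heatGamma_img k y w s)]
  have : ∀ y, ENNReal.ofReal (heatK (x - y) t * heatGamma y w s)
     = ∑' k : ℤ, ENNReal.ofReal (heatK (x - y) t * heatK (y - img k w) s) := by
    intro y
    rw [heatGamma_eq, ← tsum_mul_left, ENNReal.ofReal_tsum_of_nonneg]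
    · intro n; exact mul_nonneg (heatK_nonneg _ _) (heatK_nonneg _ _)
    · exact (summable_heatK y w s).mul_left _
  simp only [this]
  rw [lintegral_tsum]
  · simp only [lintegral_heatK_mul x _ ht hs]
    rw [heatGamma_eq, ENNReal.ofReal_tsum_of_nonneg (fun _ => heatK_nonneg _ _) (summable_heatK _ _ _)]
  · intro k
    have h1 := meas_heatK_sub x t
    have h2 : Measurable (fun y => heatK (y - img k w) s) :=
      measurable_heatK.comp (f := fun y : ℝ => (y - img k w, s)) (by fun_prop)
    exact ((h1.mul h2).ennreal_ofReal).aemeasurable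

lemma integrable_heatGamma (x : ℝ) (t : ℝ) : IntegrableOn (fun y => heatGamma x y t) (Ioc (-1 : ℝ) 1) := by
  refine ⟨(meas_heatGamma_right x t).aestronglyMeasurable, ?_⟩
  rw [hasFiniteIntegral_iff_ofReal (ae_of_all _ fun y => heatGamma_nonneg _ _ _)]
  rcases le_or_gt t 0 with h | h
  · simp [heatGamma_nonpos _ _ h]
  · rw [lintegral_heatGamma x h]; simp

lemma integral_heatGamma (x : ℝ) {t : ℝ} (ht : 0 < t) :
    ∫ y in Ioc (-1 : ℝ) 1, heatGamma x y t = 1 := by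
  rw [integral_eq_lintegral_of_nonneg_ae (ae_of_all _ fun y => heatGamma_nonneg _ _ _) (meas_heatGamma_right x t).aestronglyMeasurable,
    lintegral_heatGamma x ht]; simp

lemma integral_heatGamma_mul (x w : ℝ) {t s : ℝ} (ht : 0 < t) (hs : 0 < s) :
    ∫ y in Ioc (-1 : ℝ) 1, heatGamma x y t * heatGamma y w s = heatGamma x w (t + s) := by
  rw [integral_eq_lintegral_of_nonneg_ae
    (ae_of_all _ fun y => mul_nonneg (heatGamma_nonneg _ _ _) (heatGamma_nonneg _ _ _))
    ((meas_heatGamma_right x t).mul (meas_heatGamma_left w s)).aestronglyMeasurable,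
    lintegral_heatGamma_mul x w ht hs, ENNReal.toReal_ofReal (heatGamma_nonneg _ _ _)]

lemma integral_heatK_sin (x : ℝ) {t : ℝ} (ht : 0 < t) :
    ∫ y, heatK (x - y) t * Real.sin (Real.pi / 2 * y) = Real.exp (-(Real.pi ^ 2 / 4) * t) * Real.sin (Real.pi / 2 * x) := by
  have h := ProbabilityTheory.charFun_gaussianReal (μ := x) (v := (2 * t).toNNReal) (Real.pi / 2)
  rw [charFun_apply_real, ProbabilityTheory.integral_gaussianReal_eq_integral_smul (by simp [ht])] at h
  have h2 := congrArg Complex.im h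
  have hint : Integrable (fun y : ℝ => ProbabilityTheory.gaussianPDFReal x (2 * t).toNNReal y • Complex.exp (((Real.pi / 2 : ℝ) : ℂ) * y * Complex.I)) := by
    refine (ProbabilityTheory.integrable_gaussianPDFReal x (2 * t).toNNReal).smul_bdd (C := 1) ?_ ?_
    · exact (by fun_prop : Continuous fun y : ℝ => Complex.exp (((Real.pi / 2 : ℝ) : ℂ) * y * Complex.I)).aestronglyMeasurable
    · refine ae_of_all _ fun y => ?_
      rw [← Complex.ofReal_mul, Complex.norm_exp_ofReal_mul_I]
  have e1 := integral_im hint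
  simp only [RCLike.im_to_complex] at e1
  rw [← e1] at h2
  have e2 : ∀ y : ℝ, (ProbabilityTheory.gaussianPDFReal x (2 * t).toNNReal y • Complex.exp (((Real.pi / 2 : ℝ) : ℂ) * y * Complex.I)).im
    = heatK (x - y) t * Real.sin (Real.pi / 2 * y) := by
    intro y
    rw [Complex.smul_im, ← Complex.ofReal_mul, Complex.exp_ofReal_mul_I_im, heatK_eq_gauss _ _ ht, smul_eq_mul]
  simp only [e2] at h2
  rw [h2]
  have e3 : ((Real.pi / 2 : ℝ) : ℂ) * (x : ℂ) * Complex.I - ((2 * t).toNNReal : ℂ) * ((Real.pi / 2 : ℝ) : ℂ) ^ 2 / 2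
     = ((-(Real.pi ^ 2 / 4) * t : ℝ) : ℂ) + ((Real.pi / 2 * x : ℝ) : ℂ) * Complex.I := by
    have : (((2 * t).toNNReal : ℝ) : ℂ) = ((2 * t : ℝ) : ℂ) := by rw [Real.coe_toNNReal _ (by linarith)]
    rw [show (((2 * t).toNNReal : ℂ)) = ((((2 * t).toNNReal : ℝ)) : ℂ) from rfl, this]
    push_cast; ring
  rw [e3, Complex.exp_add, ← Complex.ofReal_exp, Complex.im_ofReal_mul, Complex.exp_ofReal_mul_I_im]

lemma sin_img (k : ℤ) (y : ℝ) : Real.sin (Real.pi / 2 * img k y) = Real.sin (Real.pi / 2 * y) := by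
  unfold img
  rcases sgn_cases k with ⟨h, h2⟩ | ⟨h, h2⟩
  · rw [h2]
    obtain ⟨j, rfl⟩ := h
    rw [← Real.sin_add_int_mul_two_pi (Real.pi / 2 * y) j]
    congr 1; push_cast; ring
  · rw [h2]
    obtain ⟨j, rfl⟩ := h
    rw [← Real.sin_pi_sub, ← Real.sin_sub_int_mul_two_pi (Real.pi / 2 * y) j]
    congr 1; push_cast; ring

lemma integrable_heatK (x : ℝ) {t : ℝ} (ht : 0 < t) : Integrable (fun y => heatK (x - y) t) := by
  simp only [heatK_eq_gauss _ _ ht]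
  exact ProbabilityTheory.integrable_gaussianPDFReal _ _

lemma integral_heatGamma_sin (x : ℝ) {t : ℝ} (ht : 0 < t) :
    ∫ y in Ioc (-1 : ℝ) 1, heatGamma x y t * Real.sin (Real.pi / 2 * y)
      = Real.exp (-(Real.pi ^ 2 / 4) * t) * Real.sin (Real.pi / 2 * x) := by
  have hnn : ∀ y, 0 ≤ 1 + Real.sin (Real.pi / 2 * y) := fun y => by linarith [Real.neg_one_le_sin (Real.pi / 2 * y)]
  have hm : Measurable (fun y => 1 + Real.sin (Real.pi / 2 * y)) := by fun_prop
  have h := lintegral_fold x t (fun y => 1 + Real.sin (Real.pi / 2 * y)) hm hnn (fun k y => by rw [sin_img])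
  have h' := congrArg ENNReal.toReal h
  rw [← integral_eq_lintegral_of_nonneg_ae (ae_of_all _ fun y => mul_nonneg (heatGamma_nonneg _ _ _) (hnn y))
      ((meas_heatGamma_right x t).mul hm).aestronglyMeasurable,
    ← integral_eq_lintegral_of_nonneg_ae (ae_of_all _ fun y => mul_nonneg (heatK_nonneg _ _) (hnn y))
      ((meas_heatK_sub x t).mul hm).aestronglyMeasurable] at h'
  simp only [mul_add, mul_one] at h'
  have hb : ∀ (μ : Measure ℝ) (g : ℝ → ℝ), Integrable g μ → Integrable (fun y => g y * Real.sin (Real.pi / 2 * y)) μ := by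
    intro μ g hg
    refine hg.mul_bdd (c := 1) ?_ (ae_of_all _ fun y => ?_)
    · exact (by fun_prop : Continuous fun y : ℝ => Real.sin (Real.pi / 2 * y)).aestronglyMeasurable
    · exact Real.abs_sin_le_one _
  rw [integral_add (integrable_heatGamma x t) (hb _ _ (integrable_heatGamma x t)),
    integral_add (integrable_heatK x ht) (hb _ _ (integrable_heatK x ht)), integral_heatGamma x ht, integral_heatK_sin x ht] at h'
  have : ∫ y, heatK (x - y) t = 1 := by
    simp only [heatK_eq_gauss _ _ ht]
    exact ProbabilityTheory.integral_gaussianPDFReal_eq_one _ (by simp [ht])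
  rw [this] at h'
  linarith

end HG

namespace HG
open Set Filter Topology ENNReal

noncomputable def KC (z : ℂ) (t : ℝ) : ℂ :=
  (((Real.sqrt (4 * Real.pi * t))⁻¹ : ℝ) : ℂ) * Complex.exp (-(z ^ 2) / ((4 * t : ℝ) : ℂ))

noncomputable def GC (z : ℂ) (y t : ℝ) : ℂ := ∑' k : ℤ, KC (z - (img k y : ℝ)) t

noncomputable def SS (T : ℝ) : ℝ := ∑' k : ℤ, Real.exp (-((k.natAbs - 2 : ℕ) : ℝ) / (4 * T))

lemma KC_ofReal (x t : ℝ) : KC (x : ℂ) t = (heatK x t : ℂ) := by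
  unfold KC heatK
  push_cast
  rfl

lemma GC_ofReal (x y t : ℝ) : GC (x : ℂ) y t = (heatGamma x y t : ℂ) := by
  unfold GC
  rw [heatGamma_eq, Complex.ofReal_tsum]
  refine tsum_congr fun k => ?_
  rw [← KC_ofReal]; push_cast; rfl

lemma norm_KC (z : ℂ) (w t : ℝ) : ‖KC (z - (w : ℝ)) t‖
    = (Real.sqrt (4 * Real.pi * t))⁻¹ * Real.exp ((z.im ^ 2 - (z.re - w) ^ 2) / (4 * t)) := by
  unfold KC
  rw [norm_mul, Complex.norm_real, Complex.norm_exp, Complex.div_ofReal_re]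
  congr 1
  · rw [Real.norm_of_nonneg (by positivity)]
  · congr 2
    simp [pow_two, Complex.mul_re]

lemma KC_nonpos (z : ℂ) {t : ℝ} (ht : t ≤ 0) : KC z t = 0 := by
  unfold KC
  rw [Real.sqrt_eq_zero_of_nonpos (by nlinarith [Real.pi_pos])]; simp

lemma summable_KC (z : ℂ) (y t : ℝ) : Summable (fun k : ℤ => KC (z - (img k y : ℝ)) t) := by
  rcases le_or_gt t 0 with h | h
  · simp only [KC_nonpos _ h]; exact summable_zero
  · refine Summable.of_norm ?_
    simp only [norm_KC]
    refine Summable.mul_left _ ?_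
    refine ((summable_exp_img z.re y h).mul_left (Real.exp (z.im ^ 2 / (4 * t)))).congr fun k => ?_
    rw [← Real.exp_add]; congr 1; ring

lemma measurable_GC (z : ℂ) : Measurable (fun q : ℝ × ℝ => GC z q.1 q.2) := by
  have h : ∀ s : Finset ℤ, Measurable (fun q : ℝ × ℝ => ∑ k ∈ s, KC (z - (img k q.1 : ℝ)) q.2) := by
    intro s
    refine Finset.measurable_sum _ fun k _ => ?_
    have := measurable_img k
    unfold KC
    fun_prop
  refine measurable_of_tendsto_metrizable' atTop h ?_
  rw [tendsto_pi_nhds]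
  intro q
  exact (summable_KC z q.1 q.2).hasSum

lemma summable_SS {T : ℝ} (hT : 0 < T) : Summable (fun k : ℤ => Real.exp (-((k.natAbs - 2 : ℕ) : ℝ) / (4 * T))) := by
  have h := (summable_exp_natAbs (c := 1 / (4 * T)) (by positivity)).mul_left (Real.exp (2 / (4 * T)))
  refine Summable.of_nonneg_of_le (fun k => (Real.exp_pos _).le) (fun k => ?_) h
  rw [← Real.exp_add]
  apply Real.exp_le_exp.2
  have : ((k.natAbs : ℝ)) ≤ ((k.natAbs - 2 : ℕ) : ℝ) + 2 := by
    have : k.natAbs ≤ (k.natAbs - 2) + 2 := by omega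
    exact_mod_cast this
  rw [show 2 / (4 * T) + -(k.natAbs : ℝ) * (1 / (4 * T)) = (2 - (k.natAbs : ℝ)) / (4 * T) by ring]
  gcongr
  linarith

lemma SS_nonneg (T : ℝ) : 0 ≤ SS T := tsum_nonneg fun _ => (Real.exp_pos _).le

lemma norm_KC_le {z : ℂ} {y t T : ℝ} (k : ℤ) (ht : 0 < t) (htT : t ≤ T) (hz : z.re ∈ Icc (-1 : ℝ) 1)
    (hy : y ∈ Icc (-1 : ℝ) 1) :
    ‖KC (z - (img k y : ℝ)) t‖ ≤ (Real.sqrt (4 * Real.pi * t))⁻¹ * Real.exp ((z.im ^ 2 - (z.re - y) ^ 2) / (4 * t))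
      * Real.exp (-((k.natAbs - 2 : ℕ) : ℝ) / (4 * T)) := by
  rw [norm_KC, mul_assoc (Real.sqrt (4 * Real.pi * t))⁻¹, ← Real.exp_add]
  gcongr
  have h := img_sq k hz hy
  have h4 : (0 : ℝ) ≤ ((k.natAbs - 2 : ℕ) : ℝ) := by positivity
  have h5 : ((k.natAbs - 2 : ℕ) : ℝ) / (4 * T) ≤ ((k.natAbs - 2 : ℕ) : ℝ) / (4 * t) := by gcongr
  have h6 : (z.im ^ 2 - (z.re - img k y) ^ 2) / (4 * t) ≤ (z.im ^ 2 - (z.re - y) ^ 2 - ((k.natAbs - 2 : ℕ) : ℝ)) / (4 * t) := by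
    apply div_le_div_of_nonneg_right _ (by positivity)
    linarith
  rw [sub_div _ (((k.natAbs - 2 : ℕ) : ℝ))] at h6
  rw [neg_div]
  linarith

lemma norm_GC_le {z : ℂ} {y t T : ℝ} (ht : 0 < t) (htT : t ≤ T) (hz : z.re ∈ Icc (-1 : ℝ) 1)
    (hy : y ∈ Icc (-1 : ℝ) 1) :
    ‖GC z y t‖ ≤ (Real.sqrt (4 * Real.pi * t))⁻¹ * Real.exp ((z.im ^ 2 - (z.re - y) ^ 2) / (4 * t)) * SS T := by
  unfold SS GC
  rw [← tsum_mul_left]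
  refine tsum_of_norm_bounded ((summable_SS (ht.trans_le htT)).mul_left _).hasSum fun k => ?_
  exact norm_KC_le k ht htT hz hy

lemma heatGamma_le {x y t T : ℝ} (ht : 0 < t) (htT : t ≤ T) (hx : x ∈ Icc (-1 : ℝ) 1)
    (hy : y ∈ Icc (-1 : ℝ) 1) :
    heatGamma x y t ≤ (Real.sqrt (4 * Real.pi * t))⁻¹ * Real.exp (-(x - y) ^ 2 / (4 * t)) * SS T := by
  have := norm_GC_le (z := (x : ℂ)) ht htT (by simpa using hx) hy
  rw [GC_ofReal, Complex.norm_real, Real.norm_of_nonneg (heatGamma_nonneg _ _ _)] at this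
  simpa using this

def strip : Set ℂ := {z | z.re ∈ Ioo (-1 : ℝ) 1 ∧ z.im ∈ Ioo (-1 : ℝ) 1}

lemma isOpen_strip : IsOpen strip :=
  (isOpen_Ioo.preimage Complex.continuous_re).inter (isOpen_Ioo.preimage Complex.continuous_im)

lemma diff_GC {y t : ℝ} (hy : y ∈ Icc (-1 : ℝ) 1) : DifferentiableOn ℂ (fun z => GC z y t) strip := by
  rcases le_or_gt t 0 with h | h
  · have : (fun z => GC z y t) = fun _ => 0 := by
      funext z; simp [GC, KC_nonpos _ h]
    rw [this]; exact differentiableOn_const _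
  · refine Complex.differentiableOn_tsum_of_summable_norm
      ((summable_SS h).mul_left ((Real.sqrt (4 * Real.pi * t))⁻¹ * Real.exp (1 / (4 * t)))) ?_ isOpen_strip ?_
    · intro k
      unfold KC
      fun_prop
    · intro k z hz
      refine (norm_KC_le k h le_rfl ⟨hz.1.1.le, hz.1.2.le⟩ hy).trans ?_
      have : z.im ^ 2 ≤ 1 := by have := hz.2.1; have := hz.2.2; nlinarith
      gcongr
      nlinarith [sq_nonneg (z.re - y)]

lemma diff_integral {α : Type*} [MeasurableSpace α] {μ : Measure α} {k : ℂ → α → ℂ} {U : Set ℂ} (hU : IsOpen U)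
    {b : α → ℝ} (hb : Integrable b μ) (hm : ∀ z ∈ U, AEStronglyMeasurable (k z) μ)
    (hd : ∀ᵐ a ∂μ, DifferentiableOn ℂ (fun z => k z a) U) (hbd : ∀ᵐ a ∂μ, ∀ z ∈ U, ‖k z a‖ ≤ b a) :
    DifferentiableOn ℂ (fun z => ∫ a, k z a ∂μ) U := by
  intro z₀ hz₀
  obtain ⟨r, hr, hball⟩ := Metric.isOpen_iff.1 hU z₀ hz₀
  have hsub : Metric.ball z₀ (r / 2) ∈ 𝓝 z₀ := Metric.ball_mem_nhds _ (by positivity)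
  have hF' : AEStronglyMeasurable (fun a => deriv (fun z => k z a) z₀) μ := by
    have hseq : Tendsto (fun n : ℕ => z₀ + ((r / 2 / ((n : ℝ) + 1) : ℝ) : ℂ)) atTop (𝓝[≠] z₀) := by
      rw [tendsto_nhdsWithin_iff]
      constructor
      · have h1 : Tendsto (fun n : ℕ => ((r / 2 / ((n : ℝ) + 1) : ℝ))) atTop (𝓝 0) :=
          Tendsto.div_atTop tendsto_const_nhds (tendsto_atTop_add_const_right _ _ tendsto_natCast_atTop_atTop)
        have := (Complex.continuous_ofReal.tendsto 0).comp h1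
        simpa using this.const_add z₀
      · refine Eventually.of_forall fun n => ?_
        simp only [mem_compl_iff, mem_singleton_iff, add_eq_left, Complex.ofReal_eq_zero]
        positivity
    refine aestronglyMeasurable_of_tendsto_ae atTop
      (f := fun (n : ℕ) a => slope (fun z => k z a) z₀ (z₀ + ((r / 2 / ((n : ℝ) + 1) : ℝ) : ℂ))) ?_ ?_
    · intro n
      have hmem : z₀ + ((r / 2 / ((n : ℝ) + 1) : ℝ) : ℂ) ∈ U := by
        apply hball
        rw [Metric.mem_ball, dist_eq_norm, add_sub_cancel_left, Complex.norm_real, Real.norm_of_nonneg (by positivity)]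
        have : r / 2 / ((n : ℝ) + 1) ≤ r / 2 := div_le_self (by positivity) (by linarith [Nat.cast_nonneg (α := ℝ) n])
        linarith
      simp only [slope, vsub_eq_sub]
      exact ((hm _ hmem).sub (hm _ hz₀)).const_smul ((z₀ + ((r / 2 / ((n : ℝ) + 1) : ℝ) : ℂ) - z₀)⁻¹)
    · filter_upwards [hd] with a ha
      have := ((ha z₀ hz₀).differentiableAt (hU.mem_nhds hz₀)).hasDerivAt
      exact (hasDerivAt_iff_tendsto_slope.1 this).comp hseq
  have key := hasDerivAt_integral_of_dominated_loc_of_deriv_le (μ := μ) (F := k) (F' := fun z a => deriv (fun z => k z a) z)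
    (bound := fun a => b a / (r / 4)) (x₀ := z₀) (s := Metric.ball z₀ (r / 2)) hsub ?_ ?_ hF' ?_ (hb.div_const _) ?_
  · exact key.2.differentiableAt.differentiableWithinAt
  · filter_upwards [hU.mem_nhds hz₀] with z hz using hm z hz
  · refine Integrable.mono' hb (hm _ hz₀) ?_
    filter_upwards [hbd] with a ha using ha _ hz₀
  · filter_upwards [hd, hbd] with a ha ha2 z hz
    have hsub2 : Metric.closedBall z (r / 4) ⊆ U := by
      refine subset_trans ?_ hball
      intro w hw
      rw [Metric.mem_closedBall] at hw
      rw [Metric.mem_ball] at hz ⊢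
      linarith [dist_triangle w z z₀]
    refine Complex.norm_deriv_le_of_forall_mem_sphere_norm_le (by positivity) ?_ ?_
    · exact DifferentiableOn.diffContOnCl_ball (ha.mono hsub2) (subset_refl _)
    · intro w hw
      exact ha2 w (hsub2 (Metric.sphere_subset_closedBall hw))
  · filter_upwards [hd] with a ha z hz
    have hzU : z ∈ U := hball (Metric.ball_subset_ball (by linarith) hz)
    exact ((ha z hzU).differentiableAt (hU.mem_nhds hzU)).hasDerivAt

lemma real_deriv {F : ℂ → ℂ} {f : ℝ → ℝ} {U : Set ℂ} (hU : IsOpen U) (hF : DifferentiableOn ℂ F U)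
    (hf : ∀ x : ℝ, (x : ℂ) ∈ U → f x = (F x).re) (m : ℕ) :
    ∀ x : ℝ, (x : ℂ) ∈ U → iteratedDeriv m f x = (iteratedDeriv m F x).re ∧
      HasDerivAt (iteratedDeriv m f) (iteratedDeriv (m + 1) f x) x := by
  have hdi : ∀ m, ∀ z ∈ U, HasDerivAt (iteratedDeriv m F) (iteratedDeriv (m + 1) F z) z := by
    intro m z hz
    rw [iteratedDeriv_succ]
    have h1 : ContDiffAt ℂ (m + 1 : ℕ) F z := (hF.contDiffOn hU).contDiffAt (hU.mem_nhds hz)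
    have := (hF.analyticOnNhd hU z hz).iterated_deriv m
    rw [← iteratedDeriv_eq_iterate] at this
    exact this.differentiableAt.hasDerivAt
  have step : ∀ m, (∀ x : ℝ, (x : ℂ) ∈ U → iteratedDeriv m f x = (iteratedDeriv m F x).re) →
      ∀ x : ℝ, (x : ℂ) ∈ U → HasDerivAt (iteratedDeriv m f) ((iteratedDeriv (m + 1) F x).re) x := by
    intro m ih x hx
    have h1 := (hdi m x hx).real_of_complex
    refine h1.congr_of_eventuallyEq ?_
    have : (fun y : ℝ => (y : ℂ)) ⁻¹' U ∈ 𝓝 x := (hU.preimage Complex.continuous_ofReal).mem_nhds hx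
    filter_upwards [this] with y hy using ih y hy
  have all : ∀ m, ∀ x : ℝ, (x : ℂ) ∈ U → iteratedDeriv m f x = (iteratedDeriv m F x).re := by
    intro m
    induction m with
    | zero => intro x hx; simpa using hf x hx
    | succ m ih =>
      intro x hx
      rw [iteratedDeriv_succ]
      exact (step m ih x hx).deriv
  intro x hx
  refine ⟨all m x hx, ?_⟩
  rw [all (m + 1) x hx]
  exact step m (all m) x hx

lemma real_deriv_bound {F : ℂ → ℂ} {f : ℝ → ℝ} {U : Set ℂ} (hU : IsOpen U) (hF : DifferentiableOn ℂ F U)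
    (hf : ∀ x : ℝ, (x : ℂ) ∈ U → f x = (F x).re) {x ρ B : ℝ} (hρ : 0 < ρ)
    (hx : Metric.closedBall (x : ℂ) ρ ⊆ U) (hB : ∀ z ∈ Metric.closedBall (x : ℂ) ρ, ‖F z‖ ≤ B) (m : ℕ) :
    |iteratedDeriv m f x| ≤ m.factorial * B / ρ ^ m := by
  rw [(real_deriv hU hF hf m x (hx (Metric.mem_closedBall_self hρ.le))).1]
  refine (Complex.abs_re_le_norm _).trans ?_
  refine Complex.norm_iteratedDeriv_le_of_forall_mem_sphere_norm_le m hρ ?_ ?_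
  · exact DifferentiableOn.diffContOnCl_ball (hF.mono hx) (subset_refl _)
  · intro z hz; exact hB z (Metric.sphere_subset_closedBall hz)

lemma sqrt_exp_bound {ε : ℝ} (hε : 0 < ε) : ∃ C : ℝ, 0 ≤ C ∧ ∀ t : ℝ, 0 < t →
    (Real.sqrt (4 * Real.pi * t))⁻¹ * Real.exp (-ε / (4 * t)) ≤ C * t := by
  refine ⟨4 / ε + 32 / ε ^ 2, by positivity, fun t ht => ?_⟩
  have h1 : (Real.sqrt (4 * Real.pi * t))⁻¹ ≤ 1 + 1 / t := by
    have hs : Real.sqrt t ≤ Real.sqrt (4 * Real.pi * t) := by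
      apply Real.sqrt_le_sqrt
      nlinarith [Real.pi_gt_three]
    have hst : 0 < Real.sqrt t := Real.sqrt_pos.2 ht
    have h2 : (Real.sqrt (4 * Real.pi * t))⁻¹ ≤ (Real.sqrt t)⁻¹ := by gcongr
    have h3 : (Real.sqrt t)⁻¹ ≤ 1 + (Real.sqrt t)⁻¹ ^ 2 := by nlinarith [sq_nonneg ((Real.sqrt t)⁻¹ - 1), sq_nonneg (Real.sqrt t)⁻¹]
    have h4 : (Real.sqrt t)⁻¹ ^ 2 = 1 / t := by rw [inv_pow, Real.sq_sqrt ht.le, one_div]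
    linarith
  set v := ε / (4 * t) with hv
  have hvpos : 0 < v := by positivity
  have e0 : Real.exp (-ε / (4 * t)) = (Real.exp v)⁻¹ := by rw [← Real.exp_neg, hv]; congr 1; ring
  have e1 : (Real.exp v)⁻¹ ≤ v⁻¹ := by
    gcongr; linarith [Real.add_one_le_exp v]
  have e2 : (Real.exp v)⁻¹ ≤ (v ^ 2 / 2)⁻¹ := by
    gcongr; linarith [Real.quadratic_le_exp_of_nonneg hvpos.le]
  have e3 : v⁻¹ = 4 / ε * t := by rw [hv]; field_simp
  have e4 : 1 / t * (v ^ 2 / 2)⁻¹ = 32 / ε ^ 2 * t := by rw [hv]; field_simp; norm_num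
  rw [e0]
  calc (Real.sqrt (4 * Real.pi * t))⁻¹ * (Real.exp v)⁻¹ ≤ (1 + 1 / t) * (Real.exp v)⁻¹ := by gcongr
    _ = (Real.exp v)⁻¹ + 1 / t * (Real.exp v)⁻¹ := by ring
    _ ≤ v⁻¹ + 1 / t * (v ^ 2 / 2)⁻¹ := by gcongr
    _ = _ := by rw [e3, e4]; ring

end HG

namespace HG
open Set Filter Topology ENNReal

/-- restricted measure on (-1,1] -/
noncomputable abbrev vI : Measure ℝ := volume.restrict (Ioc (-1 : ℝ) 1)

set_option linter.unusedSectionVars false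
set_option linter.unusedSimpArgs false
section prod
variable {μ : Measure ℝ} [SFinite μ] {Y θ w : ℝ → ℝ}

lemma ker_aesm {ν : Measure ℝ} [SFinite ν] (hY : AEMeasurable Y μ) (hθ : AEMeasurable θ μ)
    (hw : AEStronglyMeasurable w μ) :
    AEStronglyMeasurable (fun q : ℝ × ℝ => heatGamma q.1 (Y q.2) (θ q.2) * w q.2) (ν.prod μ) := by
  have h1 : AEMeasurable (fun q : ℝ × ℝ => Y q.2) (ν.prod μ) := hY.comp_snd
  have h2 : AEMeasurable (fun q : ℝ × ℝ => θ q.2) (ν.prod μ) := hθ.comp_snd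
  have h3 : AEMeasurable (fun q : ℝ × ℝ => w q.2) (ν.prod μ) := hw.aemeasurable.comp_snd
  have h4 : AEMeasurable (fun q : ℝ × ℝ => (q.1, Y q.2, θ q.2)) (ν.prod μ) :=
    measurable_fst.aemeasurable.prodMk (h1.prodMk h2)
  exact ((measurable_heatGamma.comp_aemeasurable h4).mul h3).aestronglyMeasurable

lemma ker_aesm1 (hY : AEMeasurable Y μ) (hθ : AEMeasurable θ μ)
    (hw : AEStronglyMeasurable w μ) (x : ℝ) :
    AEStronglyMeasurable (fun s => heatGamma x (Y s) (θ s) * w s) μ := by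
  have h4 : AEMeasurable (fun s => (x, Y s, θ s)) μ :=
    aemeasurable_const.prodMk (hY.prodMk hθ)
  exact ((measurable_heatGamma.comp_aemeasurable h4).mul hw.aemeasurable).aestronglyMeasurable

lemma integrable_heatGamma_left (y t : ℝ) : Integrable (fun x => heatGamma x y t) vI := by
  have h := integrable_heatGamma y t
  have e : (fun x => heatGamma x y t) = fun x => heatGamma y x t := funext fun x => heatGamma_symm _ _ _
  rw [e]; exact h

lemma integral_heatGamma_left (y : ℝ) {t : ℝ} (ht : 0 < t) : ∫ x, heatGamma x y t ∂vI = 1 := by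
  have h := integral_heatGamma y ht
  have e : (fun x => heatGamma x y t) = fun x => heatGamma y x t := funext fun x => heatGamma_symm _ _ _
  rw [e]; exact h

lemma integral_heatGamma_left_le (y t : ℝ) : ∫ x, heatGamma x y t ∂vI ≤ 1 := by
  rcases le_or_gt t 0 with h | h
  · simp [heatGamma_nonpos _ _ h]
  · rw [integral_heatGamma_left y h]

lemma ker_prod (hY : AEMeasurable Y μ) (hθ : AEMeasurable θ μ) (hw : Integrable w μ) :
    Integrable (fun q : ℝ × ℝ => heatGamma q.1 (Y q.2) (θ q.2) * w q.2) (Measure.prod vI μ) := by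
  have hm : AEStronglyMeasurable (fun q : ℝ × ℝ => heatGamma q.1 (Y q.2) (θ q.2) * w q.2) (Measure.prod vI μ) := ker_aesm (ν := vI) hY hθ hw.1
  have hm2 : AEStronglyMeasurable (fun s => ∫ x, ‖heatGamma x (Y s) (θ s) * w s‖ ∂vI) μ := by
    have := hm.norm.prod_swap
    exact AEStronglyMeasurable.integral_prod_right' (f := fun q : ℝ × ℝ => ‖heatGamma q.2 (Y q.1) (θ q.1) * w q.1‖) this
  have hi : Integrable (fun s => ∫ x, ‖heatGamma x (Y s) (θ s) * w s‖ ∂vI) μ := by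
    refine Integrable.mono' hw.norm hm2 (ae_of_all _ fun s => ?_)
    have e : ∫ x, ‖heatGamma x (Y s) (θ s) * w s‖ ∂vI = (∫ x, heatGamma x (Y s) (θ s) ∂vI) * ‖w s‖ := by
      rw [← integral_mul_const]
      refine integral_congr_ae (ae_of_all _ fun x => ?_)
      simp only [norm_mul, Real.norm_of_nonneg (heatGamma_nonneg _ _ _)]
    rw [e, norm_mul, norm_norm]
    refine mul_le_of_le_one_left (norm_nonneg _) ?_
    rw [Real.norm_of_nonneg (integral_nonneg fun x => heatGamma_nonneg _ _ _)]
    exact integral_heatGamma_left_le _ _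
  have ha : ∀ᵐ s ∂μ, Integrable (fun x => heatGamma x (Y s) (θ s) * w s) vI :=
    ae_of_all _ fun s => (integrable_heatGamma_left (Y s) (θ s)).mul_const (w s)
  exact (integrable_prod_iff' hm).2 ⟨ha, hi⟩

lemma ker_ae (hY : AEMeasurable Y μ) (hθ : AEMeasurable θ μ) (hw : Integrable w μ) :
    ∀ᵐ x ∂vI, Integrable (fun s => heatGamma x (Y s) (θ s) * w s) μ := by
  have := (ker_prod hY hθ hw).prod_right_ae
  simpa using this

lemma ker_int (hY : AEMeasurable Y μ) (hθ : AEMeasurable θ μ) (hw : Integrable w μ) :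
    Integrable (fun x => ∫ s, heatGamma x (Y s) (θ s) * w s ∂μ) vI :=
  (ker_prod hY hθ hw).integral_prod_left

lemma ker_swap (hY : AEMeasurable Y μ) (hθ : AEMeasurable θ μ) (hw : Integrable w μ)
    {W : ℝ → ℝ} (hW : Measurable W) {C : ℝ} (hC : ∀ x ∈ Ioc (-1 : ℝ) 1, ‖W x‖ ≤ C) :
    ∫ x, W x * (∫ s, heatGamma x (Y s) (θ s) * w s ∂μ) ∂vI
      = ∫ s, (∫ x, W x * heatGamma x (Y s) (θ s) ∂vI) * w s ∂μ := by
  have hp := ker_prod hY hθ hw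
  have hp2 : Integrable (fun q : ℝ × ℝ => W q.1 * (heatGamma q.1 (Y q.2) (θ q.2) * w q.2)) (vI.prod μ) := by
    refine hp.bdd_mul (c := C) (hW.comp measurable_fst).aestronglyMeasurable ?_
    have : ∀ᵐ x ∂vI, ‖W x‖ ≤ C := by
      filter_upwards [ae_restrict_mem measurableSet_Ioc] with x hx using hC x hx
    exact Measure.quasiMeasurePreserving_fst.ae this
  have := integral_integral_swap (μ := vI) (ν := μ) (f := fun x s => W x * (heatGamma x (Y s) (θ s) * w s)) hp2
  simp only [integral_const_mul] at this
  rw [this]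
  refine integral_congr_ae (ae_of_all _ fun s => ?_)
  simp only [← mul_assoc]
  rw [integral_mul_const]

lemma ker_norm (hY : AEMeasurable Y μ) (hθ : AEMeasurable θ μ) (hw : Integrable w μ) :
    ∫ x, |∫ s, heatGamma x (Y s) (θ s) * w s ∂μ| ∂vI ≤ ∫ s, |w s| ∂μ := by
  have hi := ker_int hY hθ hw
  have hi2 := ker_int hY hθ hw.abs
  calc ∫ x, |∫ s, heatGamma x (Y s) (θ s) * w s ∂μ| ∂vI
      ≤ ∫ x, 1 * ∫ s, heatGamma x (Y s) (θ s) * |w s| ∂μ ∂vI := by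
        refine integral_mono hi.abs (by simpa using hi2) fun x => ?_
        simp only [one_mul]
        refine (abs_integral_le_integral_abs).trans (le_of_eq ?_)
        refine integral_congr_ae (ae_of_all _ fun s => ?_)
        simp only [abs_mul, abs_of_nonneg (heatGamma_nonneg _ _ _)]
    _ = ∫ s, (∫ x, 1 * heatGamma x (Y s) (θ s) ∂vI) * |w s| ∂μ :=
        ker_swap hY hθ hw.abs measurable_const (C := 1) (by simp)
    _ ≤ ∫ s, |w s| ∂μ := by
        refine integral_mono_of_nonneg (ae_of_all _ fun s => ?_) hw.abs (ae_of_all _ fun s => ?_)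
        · exact mul_nonneg (integral_nonneg fun x => by simpa using heatGamma_nonneg _ _ _) (abs_nonneg _)
        · simp only [one_mul]
          exact mul_le_of_le_one_left (abs_nonneg _) (integral_heatGamma_left_le _ _)

lemma heatGamma_bdd {x y t : ℝ} (ht : 0 < t) (hx : x ∈ Icc (-1 : ℝ) 1) (hy : y ∈ Icc (-1 : ℝ) 1) :
    heatGamma x y t ≤ (Real.sqrt (4 * Real.pi * t))⁻¹ * SS t := by
  refine (heatGamma_le ht le_rfl hx hy).trans ?_
  have := SS_nonneg t
  have h : Real.exp (-(x - y) ^ 2 / (4 * t)) ≤ 1 := by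
    rw [Real.exp_le_one_iff]
    apply div_nonpos_of_nonpos_of_nonneg _ (by positivity)
    linarith [sq_nonneg (x - y)]
  have h2 : (0:ℝ) ≤ (Real.sqrt (4 * Real.pi * t))⁻¹ := by positivity
  calc _ ≤ (Real.sqrt (4 * Real.pi * t))⁻¹ * 1 * SS t := by gcongr
    _ = _ := by ring

lemma ker_restart (hY : AEMeasurable Y μ) (hθ : AEMeasurable θ μ) (hw : Integrable w μ)
    (hpos : ∀ᵐ s ∂μ, 0 < θ s) {x h : ℝ} (hx : x ∈ Icc (-1 : ℝ) 1) (hh : 0 < h) :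
    ∫ y, heatGamma x y h * (∫ s, heatGamma y (Y s) (θ s) * w s ∂μ) ∂vI
      = ∫ s, heatGamma x (Y s) (h + θ s) * w s ∂μ := by
  rw [ker_swap hY hθ hw (meas_heatGamma_right x h) (C := (Real.sqrt (4 * Real.pi * h))⁻¹ * SS h)]
  · refine integral_congr_ae ?_
    filter_upwards [hpos] with s hs
    rw [integral_heatGamma_mul x (Y s) hh hs]
  · intro y hy
    rw [Real.norm_of_nonneg (heatGamma_nonneg _ _ _)]
    exact heatGamma_bdd hh hx ⟨hy.1.le, hy.2⟩

end prod

structure Duh (T : ℝ) (g y₁ y₂ lam : ℝ → ℝ) (f : ℝ → ℝ → ℝ) : Prop where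
  hT : 0 < T
  g_int : Integrable g vI
  m1 : AEMeasurable y₁ (volume.restrict (Ioo 0 T))
  m2 : AEMeasurable y₂ (volume.restrict (Ioo 0 T))
  mem1 : ∀ s ∈ Ioo 0 T, y₁ s ∈ Icc (-1 : ℝ) 1
  mem2 : ∀ s ∈ Ioo 0 T, y₂ s ∈ Icc (-1 : ℝ) 1
  lam_nn : ∀ s ∈ Ioo 0 T, 0 ≤ lam s
  lam_int : IntegrableOn lam (Ioo 0 T)
  duh : ∀ t ∈ Ioo 0 T, ∀ x ∈ Icc (-1 : ℝ) 1,
    f x t = (∫ y, heatGamma x y t * g y ∂vI) +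
      ∫ s in Ioo 0 t, (heatGamma x (y₁ s) (t - s) - heatGamma x (y₂ s) (t - s)) * lam s

/-- source potential -/
noncomputable def BB (y lam : ℝ → ℝ) (a b t x : ℝ) : ℝ := ∫ s in Ioo a b, heatGamma x (y s) (t - s) * lam s

noncomputable def mass (T : ℝ) (g lam : ℝ → ℝ) : ℝ := (∫ y, |g y| ∂vI) + 2 * ∫ s in Ioo 0 T, lam s

namespace Duh
variable {T : ℝ} {g y₁ y₂ lam : ℝ → ℝ} {f : ℝ → ℝ → ℝ}

lemma sub_m {y : ℝ → ℝ} {a b : ℝ} (h : AEMeasurable y (volume.restrict (Ioo 0 T))) (ha : 0 ≤ a) (hb : b ≤ T) :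
    AEMeasurable y (volume.restrict (Ioo a b)) :=
  h.mono_measure (Measure.restrict_mono (Ioo_subset_Ioo ha hb) le_rfl)

lemma lam_sub (H : Duh T g y₁ y₂ lam f) {a b : ℝ} (ha : 0 ≤ a) (hb : b ≤ T) : IntegrableOn lam (Ioo a b) :=
  H.lam_int.mono_set (Ioo_subset_Ioo ha hb)

lemma th_m {a b t : ℝ} : AEMeasurable (fun s : ℝ => t - s) (volume.restrict (Ioo a b)) := by fun_prop

lemma int_lam_nonneg (H : Duh T g y₁ y₂ lam f) {a b : ℝ} (ha : 0 ≤ a) (hb : b ≤ T) : 0 ≤ ∫ s in Ioo a b, lam s :=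
  setIntegral_nonneg measurableSet_Ioo fun s hs => H.lam_nn s (Ioo_subset_Ioo ha hb hs)

lemma int_lam_le (H : Duh T g y₁ y₂ lam f) {a b : ℝ} (ha : 0 ≤ a) (hb : b ≤ T) :
    ∫ s in Ioo a b, lam s ≤ ∫ s in Ioo 0 T, lam s := by
  refine setIntegral_mono_set H.lam_int ?_ (Ioo_subset_Ioo ha hb).eventuallyLE
  filter_upwards [ae_restrict_mem measurableSet_Ioo] with s hs using H.lam_nn s hs

lemma mass_nonneg (H : Duh T g y₁ y₂ lam f) : 0 ≤ mass T g lam := by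
  have := H.int_lam_nonneg le_rfl le_rfl
  have : 0 ≤ ∫ y, |g y| ∂vI := integral_nonneg fun _ => abs_nonneg _
  unfold mass; linarith

lemma swap_good {a b t x : ℝ}
    (h1 : IntegrableOn (fun s => heatGamma x (y₁ s) (t - s) * lam s) (Ioo a b))
    (h2 : IntegrableOn (fun s => heatGamma x (y₂ s) (t - s) * lam s) (Ioo a b)) :
    ∫ s in Ioo a b, (heatGamma x (y₁ s) (t - s) - heatGamma x (y₂ s) (t - s)) * lam s
      = BB y₁ lam a b t x - BB y₂ lam a b t x := by
  unfold BB
  rw [← integral_sub h1 h2]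
  simp only [sub_mul]

lemma BB_int (H : Duh T g y₁ y₂ lam f) {y : ℝ → ℝ} (hy : AEMeasurable y (volume.restrict (Ioo 0 T)))
    {a b t : ℝ} (ha : 0 ≤ a) (hb : b ≤ T) : Integrable (BB y lam a b t) vI :=
  ker_int (sub_m hy ha hb) th_m (H.lam_sub ha hb)

lemma BB_norm (H : Duh T g y₁ y₂ lam f) {y : ℝ → ℝ} (hy : AEMeasurable y (volume.restrict (Ioo 0 T)))
    {a b t : ℝ} (ha : 0 ≤ a) (hb : b ≤ T) : ∫ x, |BB y lam a b t x| ∂vI ≤ ∫ s in Ioo a b, lam s := by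
  refine (ker_norm (sub_m hy ha hb) th_m (H.lam_sub ha hb)).trans (le_of_eq ?_)
  refine setIntegral_congr_fun measurableSet_Ioo fun s hs => ?_
  exact abs_of_nonneg (H.lam_nn s (Ioo_subset_Ioo ha hb hs))

lemma BB_ae (H : Duh T g y₁ y₂ lam f) {y : ℝ → ℝ} (hy : AEMeasurable y (volume.restrict (Ioo 0 T)))
    {a b t : ℝ} (ha : 0 ≤ a) (hb : b ≤ T) :
    ∀ᵐ x ∂vI, IntegrableOn (fun s => heatGamma x (y s) (t - s) * lam s) (Ioo a b) :=
  ker_ae (sub_m hy ha hb) th_m (H.lam_sub ha hb)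

lemma f_ae (H : Duh T g y₁ y₂ lam f) {t : ℝ} (ht : t ∈ Ioo 0 T) :
    (fun x => f x t) =ᵐ[vI] fun x => (∫ y, heatGamma x y t * g y ∂vI) + (BB y₁ lam 0 t t x - BB y₂ lam 0 t t x) := by
  filter_upwards [H.BB_ae H.m1 (t := t) le_rfl ht.2.le, H.BB_ae H.m2 (t := t) le_rfl ht.2.le,
    ae_restrict_mem measurableSet_Ioc] with x h1 h2 hx
  rw [H.duh t ht x ⟨hx.1.le, hx.2⟩, swap_good h1 h2]

lemma f_int (H : Duh T g y₁ y₂ lam f) {t : ℝ} (ht : t ∈ Ioo 0 T) : Integrable (fun x => f x t) vI := by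
  refine Integrable.congr ?_ (H.f_ae ht).symm
  exact (ker_int (Y := id) (θ := fun _ => t) aemeasurable_id aemeasurable_const H.g_int).add
    ((H.BB_int H.m1 le_rfl ht.2.le).sub (H.BB_int H.m2 le_rfl ht.2.le))

lemma f_mass (H : Duh T g y₁ y₂ lam f) {t : ℝ} (ht : t ∈ Ioo 0 T) : ∫ x, |f x t| ∂vI ≤ mass T g lam := by
  have i0 := ker_int (Y := id) (θ := fun _ => t) aemeasurable_id aemeasurable_const H.g_int
  have i1 := H.BB_int H.m1 (t := t) le_rfl ht.2.le
  have i2 := H.BB_int H.m2 (t := t) le_rfl ht.2.le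
  calc ∫ x, |f x t| ∂vI ≤ ∫ x, (|∫ y, heatGamma x y t * g y ∂vI| + (|BB y₁ lam 0 t t x| + |BB y₂ lam 0 t t x|)) ∂vI := by
        refine integral_mono_ae (H.f_int ht).abs (i0.abs.add (i1.abs.add i2.abs)) ?_
        filter_upwards [H.f_ae ht] with x hx
        rw [hx]
        refine (abs_add_le _ _).trans ?_
        exact add_le_add le_rfl (abs_sub _ _)
    _ = (∫ x, |∫ y, heatGamma x y t * g y ∂vI| ∂vI) + ((∫ x, |BB y₁ lam 0 t t x| ∂vI) + ∫ x, |BB y₂ lam 0 t t x| ∂vI) := by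
        have a1 := integral_add i0.abs (i1.abs.add i2.abs)
        have a2 := integral_add i1.abs i2.abs
        simp only [Pi.add_apply] at a1 a2
        rw [← a2]; exact a1
    _ ≤ mass T g lam := by
        have n0 := ker_norm (Y := id) (θ := fun _ => t) aemeasurable_id aemeasurable_const H.g_int
        have n1 := H.BB_norm H.m1 (t := t) le_rfl ht.2.le
        have n2 := H.BB_norm H.m2 (t := t) le_rfl ht.2.le
        have n3 := H.int_lam_le le_rfl ht.2.le
        simp only [id] at n0
        unfold mass
        linarith

/-- integrability of the source far in the past -/
lemma past_int (H : Duh T g y₁ y₂ lam f) {y : ℝ → ℝ} (hy : AEMeasurable y (volume.restrict (Ioo 0 T)))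
    {a b t x : ℝ} (ha : 0 ≤ a) (hb : b ≤ T) {C : ℝ}
    (hC : ∀ s ∈ Ioo a b, heatGamma x (y s) (t - s) ≤ C) :
    IntegrableOn (fun s => heatGamma x (y s) (t - s) * lam s) (Ioo a b) := by
  refine Integrable.mono' ((H.lam_sub ha hb).const_mul C) (ker_aesm1 (sub_m hy ha hb) th_m (H.lam_sub ha hb).1 x) ?_
  filter_upwards [ae_restrict_mem measurableSet_Ioo] with s hs
  rw [Real.norm_of_nonneg (mul_nonneg (heatGamma_nonneg _ _ _) (H.lam_nn s (Ioo_subset_Ioo ha hb hs)))]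
  exact mul_le_mul_of_nonneg_right (hC s hs) (H.lam_nn s (Ioo_subset_Ioo ha hb hs))

lemma past_bound {x y t s σ : ℝ} (hσ : σ ∈ Ioo 0 s) (hst : s < t) (hx : x ∈ Icc (-1 : ℝ) 1) (hy : y ∈ Icc (-1 : ℝ) 1) :
    heatGamma x y (t - σ) ≤ (Real.sqrt (4 * Real.pi * (t - s)))⁻¹ * 1 * SS t := by
  refine (heatGamma_le (T := t) (by linarith [hσ.2]) (by linarith [hσ.1]) hx hy).trans ?_
  have := SS_nonneg t
  have h : Real.exp (-(x - y) ^ 2 / (4 * (t - σ))) ≤ 1 := by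
    rw [Real.exp_le_one_iff]
    apply div_nonpos_of_nonpos_of_nonneg _ (by linarith [hσ.2])
    linarith [sq_nonneg (x - y)]
  have h1 : 0 < t - s := by linarith
  gcongr
  linarith [hσ.2]

lemma split_int {a b c : ℝ} (hab : a ≤ b) (hbc : b ≤ c) {h : ℝ → ℝ} (h1 : IntegrableOn h (Ioo a b)) (h2 : IntegrableOn h (Ioo b c)) :
    IntegrableOn h (Ioo a c) ∧ ∫ s in Ioo a c, h s = (∫ s in Ioo a b, h s) + ∫ s in Ioo b c, h s := by
  have e : (Ioo a c : Set ℝ) =ᵐ[volume] (Ioo a b ∪ Ioo b c : Set ℝ) := by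
    have e1 : (Ioo a c : Set ℝ) =ᵐ[volume] Ioc a c := Ioo_ae_eq_Ioc
    have e2 : (Ioo a b ∪ Ioo b c : Set ℝ) =ᵐ[volume] (Ioc a b ∪ Ioc b c : Set ℝ) := Ioo_ae_eq_Ioc.union Ioo_ae_eq_Ioc
    rw [Ioc_union_Ioc_eq_Ioc hab hbc] at e2
    exact e1.trans e2.symm
  constructor
  · exact (h1.union h2).congr_set_ae e
  · rw [setIntegral_congr_set e, setIntegral_union _ measurableSet_Ioo h1 h2]
    rw [Set.disjoint_left]
    intro x hx hx2
    exact absurd hx.2 (not_lt.2 hx2.1.le)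

lemma restart (H : Duh T g y₁ y₂ lam f) {s t x : ℝ} (hs : 0 < s) (hst : s < t) (ht : t < T) (hx : x ∈ Icc (-1 : ℝ) 1)
    (h1 : IntegrableOn (fun σ => heatGamma x (y₁ σ) (t - σ) * lam σ) (Ioo s t))
    (h2 : IntegrableOn (fun σ => heatGamma x (y₂ σ) (t - σ) * lam σ) (Ioo s t)) :
    f x t = (∫ y, heatGamma x y (t - s) * f y s ∂vI) + (BB y₁ lam s t t x - BB y₂ lam s t t x) := by
  have hsT : s ∈ Ioo 0 T := ⟨hs, hst.trans ht⟩
  have hh : 0 < t - s := by linarith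
  have p1 := H.past_int H.m1 (x := x) (t := t) le_rfl hsT.2.le
    (fun σ hσ => past_bound hσ hst hx (H.mem1 σ (Ioo_subset_Ioo le_rfl hsT.2.le hσ)))
  have p2 := H.past_int H.m2 (x := x) (t := t) le_rfl hsT.2.le
    (fun σ hσ => past_bound hσ hst hx (H.mem2 σ (Ioo_subset_Ioo le_rfl hsT.2.le hσ)))
  have s1 := split_int hs.le hst.le p1 h1
  have s2 := split_int hs.le hst.le p2 h2
  rw [H.duh t ⟨hs.trans hst, ht⟩ x hx, swap_good s1.1 s2.1]
  have bdd : ∀ᵐ y ∂vI, ‖heatGamma x y (t - s)‖ ≤ (Real.sqrt (4 * Real.pi * (t - s)))⁻¹ * SS (t - s) := by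
    filter_upwards [ae_restrict_mem measurableSet_Ioc] with y hy
    rw [Real.norm_of_nonneg (heatGamma_nonneg _ _ _)]
    exact heatGamma_bdd hh hx ⟨hy.1.le, hy.2⟩
  have bi : ∀ {F : ℝ → ℝ}, Integrable F vI → Integrable (fun y => heatGamma x y (t - s) * F y) vI :=
    fun hF => hF.bdd_mul (meas_heatGamma_right x (t - s)).aestronglyMeasurable bdd
  have i0 := ker_int (Y := id) (θ := fun _ => s) aemeasurable_id aemeasurable_const H.g_int
  have i1 := H.BB_int H.m1 (t := s) le_rfl hsT.2.le
  have i2 := H.BB_int H.m2 (t := s) le_rfl hsT.2.le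
  have e : ∫ y, heatGamma x y (t - s) * f y s ∂vI
     = ∫ y, (heatGamma x y (t - s) * (∫ y', heatGamma y y' s * g y' ∂vI) + (heatGamma x y (t - s) * BB y₁ lam 0 s s y - heatGamma x y (t - s) * BB y₂ lam 0 s s y)) ∂vI := by
    refine integral_congr_ae ?_
    filter_upwards [H.f_ae hsT] with y hy
    rw [hy]; ring
  have a1 := integral_add (bi i0) ((bi i1).sub (bi i2))
  have a2 := integral_sub (bi i1) (bi i2)
  simp only [Pi.add_apply, Pi.sub_apply, id] at a1 a2
  rw [e, a1, a2]
  have r0 := ker_restart (Y := id) (θ := fun _ => s) aemeasurable_id aemeasurable_const H.g_int (ae_of_all _ fun _ => hs) hx hh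
  have pos : ∀ᵐ σ ∂(volume.restrict (Ioo 0 s)), 0 < s - σ := by
    filter_upwards [ae_restrict_mem measurableSet_Ioo] with σ hσ
    linarith [hσ.2]
  have r1 := ker_restart (sub_m H.m1 le_rfl hsT.2.le) th_m (H.lam_sub le_rfl hsT.2.le) pos hx hh
  have r2 := ker_restart (sub_m H.m2 le_rfl hsT.2.le) th_m (H.lam_sub le_rfl hsT.2.le) pos hx hh
  simp only [id, sub_add_cancel, sub_add_sub_cancel] at r0 r1 r2
  unfold BB
  rw [r0, r1, r2, s1.2, s2.2]
  ring

lemma restart_ae (H : Duh T g y₁ y₂ lam f) {s t : ℝ} (hs : 0 < s) (hst : s < t) (ht : t < T) :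
    ∀ᵐ x ∂vI, f x t = (∫ y, heatGamma x y (t - s) * f y s ∂vI) + (BB y₁ lam s t t x - BB y₂ lam s t t x) := by
  filter_upwards [H.BB_ae H.m1 (t := t) hs.le ht.le, H.BB_ae H.m2 (t := t) hs.le ht.le,
    ae_restrict_mem measurableSet_Ioc] with x h1 h2 hx
  exact H.restart hs hst ht ⟨hx.1.le, hx.2⟩ h1 h2

end Duh
end HG

namespace HG
open Set Filter Topology ENNReal

lemma ball_re_im {c r : ℝ} {z : ℂ} (hz : z ∈ Metric.ball (c : ℂ) r) : |z.re - c| < r ∧ |z.im| < r := by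
  rw [Metric.mem_ball, Complex.dist_eq] at hz
  constructor
  · have := Complex.abs_re_le_norm (z - c); simp at this; linarith
  · have := Complex.abs_im_le_norm (z - c); simp at this; linarith

lemma ball_sub_strip {c r : ℝ} (hr : 0 < r) (hc : |c| + 6 * r ≤ 1) : Metric.ball (c : ℂ) (2 * r) ⊆ strip := by
  intro z hz
  obtain ⟨h1, h2⟩ := ball_re_im hz
  have := abs_nonneg c
  rw [abs_lt] at h1 h2
  have h3 := abs_le.1 (show |c| ≤ 1 - 6 * r by linarith)
  refine ⟨⟨?_, ?_⟩, ⟨?_, ?_⟩⟩ <;> linarith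

namespace Duh
variable {T : ℝ} {g y₁ y₂ lam : ℝ → ℝ} {f : ℝ → ℝ → ℝ}

lemma src_bound {r C : ℝ} (hr : 0 < r) (hC0 : 0 ≤ C) (hC : ∀ t : ℝ, 0 < t →
    (Real.sqrt (4 * Real.pi * t))⁻¹ * Real.exp (-(12 * r ^ 2) / (4 * t)) ≤ C * t)
    {c y τ : ℝ} (hτ : 0 < τ) (hτT : τ ≤ T) (hc : |c| + 6 * r ≤ 1) (hy : y ∈ Icc (-1 : ℝ) 1) (hyc : 6 * r ≤ |y - c|)
    {z : ℂ} (hz : z ∈ Metric.ball (c : ℂ) (2 * r)) : ‖GC z y τ‖ ≤ C * T * SS T := by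
  have hs := ball_sub_strip hr hc hz
  refine (norm_GC_le hτ hτT ⟨hs.1.1.le, hs.1.2.le⟩ hy).trans ?_
  refine mul_le_mul_of_nonneg_right ?_ (SS_nonneg _)
  refine le_trans ?_ ((hC τ hτ).trans (mul_le_mul_of_nonneg_left hτT hC0))
  obtain ⟨h1, h2⟩ := ball_re_im hz
  have h3 : z.im ^ 2 ≤ (2 * r) ^ 2 := sq_le_sq' (by linarith [(abs_lt.1 h2).1]) (by linarith [(abs_lt.1 h2).2])
  have h4 : 4 * r ≤ |z.re - y| := by
    have : |y - c| ≤ |z.re - y| + |z.re - c| := by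
      have := abs_sub_le y z.re c
      rwa [abs_sub_comm y z.re] at this
    linarith
  have h5 : (4 * r) ^ 2 ≤ (z.re - y) ^ 2 := by
    rw [← sq_abs (z.re - y)]; exact pow_le_pow_left₀ (by positivity) h4 2
  gcongr
  nlinarith

set_option maxHeartbeats 1000000 in
lemma reg (H : Duh T g y₁ y₂ lam f) {r : ℝ} (hr : 0 < r) : ∃ C₂ : ℝ, 0 ≤ C₂ ∧ ∀ c s t B₁ : ℝ, 0 < s → s < t → t < T →
    |c| + 6 * r ≤ 1 → (∀ σ ∈ Ioo s t, 6 * r ≤ |y₁ σ - c|) → (∀ σ ∈ Ioo s t, 6 * r ≤ |y₂ σ - c|) →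
    (∀ z ∈ Metric.ball (c : ℂ) (2 * r), ∫ y, ‖GC z y (t - s)‖ * |f y s| ∂vI ≤ B₁) →
    ∀ x, |x - c| ≤ r → ∀ m : ℕ, |iteratedDeriv m (fun z => f z t) x| ≤ m.factorial * (B₁ + C₂) / (r / 2) ^ m ∧
      HasDerivAt (iteratedDeriv m (fun z => f z t)) (iteratedDeriv (m + 1) (fun z => f z t) x) x := by
  obtain ⟨C, hC0, hC⟩ := sqrt_exp_bound (ε := 12 * r ^ 2) (by positivity)
  have hT := H.hT
  have hSS := SS_nonneg T
  have hlam0 := H.int_lam_nonneg le_rfl le_rfl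
  refine ⟨2 * (C * T * SS T * ∫ s in Ioo 0 T, lam s), by positivity, ?_⟩
  intro c s t B₁ hs hst ht hc hy1 hy2 hB x hx m
  have hh : 0 < t - s := by linarith
  have hhT : t - s ≤ T := by linarith
  set U := Metric.ball (c : ℂ) (2 * r) with hU
  have hUo : IsOpen U := Metric.isOpen_ball
  have hUs : U ⊆ strip := ball_sub_strip hr hc
  have hsT : s ∈ Ioo 0 T := ⟨hs, hst.trans ht⟩
  set F0 : ℂ → ℂ := fun z => ∫ y, GC z y (t - s) * (f y s : ℂ) ∂vI with hF0
  set F1 : (ℝ → ℝ) → ℂ → ℂ := fun y z => ∫ σ in Ioo s t, GC z (y σ) (t - σ) * (lam σ : ℂ) with hF1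
  have d0 : DifferentiableOn ℂ F0 U := by
    refine diff_integral (b := fun y => (Real.sqrt (4 * Real.pi * (t - s)))⁻¹ * Real.exp (1 / (4 * (t - s))) * SS T * |f y s|) hUo
      ((H.f_int hsT).abs.const_mul _) ?_ ?_ ?_
    · intro z _
      have h1 : Measurable (fun y => GC z y (t - s)) :=
        (measurable_GC z).comp (measurable_id.prodMk measurable_const)
      exact h1.aestronglyMeasurable.mul (Complex.continuous_ofReal.comp_aestronglyMeasurable (H.f_int hsT).1)
    · filter_upwards [ae_restrict_mem measurableSet_Ioc] with y hy
      exact ((diff_GC ⟨hy.1.le, hy.2⟩).mono hUs).mul_const _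
    · filter_upwards [ae_restrict_mem measurableSet_Ioc] with y hy z hz
      have hzs := hUs hz
      rw [norm_mul, Complex.norm_real, Real.norm_eq_abs]
      refine mul_le_mul_of_nonneg_right ?_ (abs_nonneg _)
      refine (norm_GC_le hh hhT ⟨hzs.1.1.le, hzs.1.2.le⟩ ⟨hy.1.le, hy.2⟩).trans ?_
      gcongr
      nlinarith [hzs.2.1, hzs.2.2, sq_nonneg (z.re - y)]
  have bsrc : ∀ y : ℝ → ℝ, (∀ s ∈ Ioo 0 T, y s ∈ Icc (-1 : ℝ) 1) → (∀ σ ∈ Ioo s t, 6 * r ≤ |y σ - c|) →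
      ∀ σ ∈ Ioo s t, ∀ z ∈ U, ‖GC z (y σ) (t - σ)‖ ≤ C * T * SS T := by
    intro y hym hyc σ hσ z hz
    exact src_bound hr hC0 hC (by linarith [hσ.2]) (by linarith [hσ.1]) hc
      (hym σ ⟨hs.trans hσ.1, hσ.2.trans ht⟩) (hyc σ hσ) hz
  have nsrc : ∀ y : ℝ → ℝ, (∀ s ∈ Ioo 0 T, y s ∈ Icc (-1 : ℝ) 1) → (∀ σ ∈ Ioo s t, 6 * r ≤ |y σ - c|) →
      ∀ σ ∈ Ioo s t, ∀ z ∈ U, ‖GC z (y σ) (t - σ) * (lam σ : ℂ)‖ ≤ C * T * SS T * lam σ := by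
    intro y hym hyc σ hσ z hz
    have hl := H.lam_nn σ ⟨hs.trans hσ.1, hσ.2.trans ht⟩
    rw [norm_mul, Complex.norm_real, Real.norm_of_nonneg hl]
    exact mul_le_mul_of_nonneg_right (bsrc y hym hyc σ hσ z hz) hl
  have li : IntegrableOn (fun σ => C * T * SS T * lam σ) (Ioo s t) := (H.lam_sub hs.le ht.le).const_mul _
  have d1 : ∀ y : ℝ → ℝ, AEMeasurable y (volume.restrict (Ioo 0 T)) → (∀ s ∈ Ioo 0 T, y s ∈ Icc (-1 : ℝ) 1) →
      (∀ σ ∈ Ioo s t, 6 * r ≤ |y σ - c|) → DifferentiableOn ℂ (F1 y) U := by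
    intro y hm hym hyc
    refine diff_integral (b := fun σ => C * T * SS T * lam σ) hUo li ?_ ?_ ?_
    · intro z _
      have h1 : AEMeasurable (fun σ => GC z (y σ) (t - σ)) (volume.restrict (Ioo s t)) :=
        (measurable_GC z).comp_aemeasurable (f := fun σ => (y σ, t - σ)) ((sub_m hm hs.le ht.le).prodMk th_m)
      exact h1.aestronglyMeasurable.mul (Complex.continuous_ofReal.comp_aestronglyMeasurable (H.lam_sub hs.le ht.le).1)
    · filter_upwards [ae_restrict_mem measurableSet_Ioo] with σ hσ
      exact ((diff_GC (hym σ ⟨hs.trans hσ.1, hσ.2.trans ht⟩)).mono hUs).mul_const _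
    · filter_upwards [ae_restrict_mem measurableSet_Ioo] with σ hσ z hz
      exact nsrc y hym hyc σ hσ z hz
  have n1 : ∀ y : ℝ → ℝ, (∀ s ∈ Ioo 0 T, y s ∈ Icc (-1 : ℝ) 1) →
      (∀ σ ∈ Ioo s t, 6 * r ≤ |y σ - c|) → ∀ z ∈ U, ‖F1 y z‖ ≤ C * T * SS T * ∫ s in Ioo 0 T, lam s := by
    intro y hym hyc z hz
    calc ‖F1 y z‖ ≤ ∫ σ in Ioo s t, C * T * SS T * lam σ := by
          refine norm_integral_le_of_norm_le li ?_
          filter_upwards [ae_restrict_mem measurableSet_Ioo] with σ hσ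
          exact nsrc y hym hyc σ hσ z hz
      _ = C * T * SS T * ∫ σ in Ioo s t, lam σ := integral_const_mul _ _
      _ ≤ _ := by
          have := H.int_lam_le hs.le ht.le
          gcongr
  have hdF : DifferentiableOn ℂ (fun z => F0 z + (F1 y₁ z - F1 y₂ z)) U :=
    d0.add ((d1 y₁ H.m1 H.mem1 hy1).sub (d1 y₂ H.m2 H.mem2 hy2))
  have re1 : ∀ (y : ℝ → ℝ) (x : ℝ), F1 y x = (BB y lam s t t x : ℂ) := by
    intro y x
    simp only [hF1, BB, GC_ofReal, ← Complex.ofReal_mul]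
    exact integral_ofReal
  have re0 : ∀ (x : ℝ), F0 x = ((∫ y, heatGamma x y (t - s) * f y s ∂vI : ℝ) : ℂ) := by
    intro x
    simp only [hF0, GC_ofReal, ← Complex.ofReal_mul]
    exact integral_ofReal
  have hreal : ∀ x : ℝ, (x : ℂ) ∈ U → f x t = ((fun z => F0 z + (F1 y₁ z - F1 y₂ z)) (x : ℂ)).re := by
    intro x hxU
    have hxs := hUs hxU
    have hxI : x ∈ Icc (-1 : ℝ) 1 := ⟨by simpa using hxs.1.1.le, by simpa using hxs.1.2.le⟩
    have gb : ∀ y : ℝ → ℝ, (∀ s ∈ Ioo 0 T, y s ∈ Icc (-1 : ℝ) 1) → (∀ σ ∈ Ioo s t, 6 * r ≤ |y σ - c|) →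
      ∀ σ ∈ Ioo s t, heatGamma x (y σ) (t - σ) ≤ C * T * SS T := by
      intro y hym hyc σ hσ
      have := bsrc y hym hyc σ hσ x hxU
      rwa [GC_ofReal, Complex.norm_real, Real.norm_of_nonneg (heatGamma_nonneg _ _ _)] at this
    rw [H.restart hs hst ht hxI (H.past_int H.m1 hs.le ht.le (gb y₁ H.mem1 hy1)) (H.past_int H.m2 hs.le ht.le (gb y₂ H.mem2 hy2))]
    simp only [re0, re1]
    norm_cast
  have hxb : Metric.closedBall (x : ℂ) (r / 2) ⊆ U := by
    intro z hz
    rw [Metric.mem_closedBall] at hz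
    rw [hU, Metric.mem_ball]
    have : dist (x : ℂ) (c : ℂ) ≤ r := by
      rw [Complex.dist_eq, ← Complex.ofReal_sub, Complex.norm_real]; exact hx
    linarith [dist_triangle z (x : ℂ) (c : ℂ)]
  constructor
  · refine real_deriv_bound hUo hdF hreal (by positivity) hxb ?_ m
    intro z hz
    have hzU := hxb hz
    have b0 : ‖F0 z‖ ≤ B₁ := by
      refine le_trans ?_ (hB z hzU)
      refine (norm_integral_le_integral_norm _).trans (le_of_eq ?_)
      refine integral_congr_ae (ae_of_all _ fun y => ?_)
      simp
    have b1 := n1 y₁ H.mem1 hy1 z hzU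
    have b2 := n1 y₂ H.mem2 hy2 z hzU
    have := norm_add_le (F0 z) (F1 y₁ z - F1 y₂ z)
    have := norm_sub_le (F1 y₁ z) (F1 y₂ z)
    linarith
  · refine (real_deriv hUo hdF hreal m x ?_).2
    exact hxb (Metric.mem_closedBall_self (by positivity))

end Duh
end HG

namespace HG
open Set Filter Topology ENNReal

lemma z_exp_le (z : ℝ) : z * Real.exp (-z) ≤ 1 := by
  have h := Real.add_one_le_exp z
  have : z ≤ Real.exp z := by linarith
  calc z * Real.exp (-z) ≤ Real.exp z * Real.exp (-z) := by gcongr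
    _ = 1 := by rw [← Real.exp_add]; simp

lemma bdd_ker {x h : ℝ} (hx : x ∈ Icc (-1 : ℝ) 1) (hh : 0 < h) {F : ℝ → ℝ} (hF : Integrable F vI) :
    Integrable (fun y => heatGamma x y h * F y) vI := by
  refine hF.bdd_mul (c := (Real.sqrt (4 * Real.pi * h))⁻¹ * SS h) (meas_heatGamma_right x h).aestronglyMeasurable ?_
  filter_upwards [ae_restrict_mem measurableSet_Ioc] with y hy
  rw [Real.norm_of_nonneg (heatGamma_nonneg _ _ _)]
  exact heatGamma_bdd hh hx ⟨hy.1.le, hy.2⟩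

/-- Lemma A -/
lemma near_far {r : ℝ} (hr : 0 < r) : ∃ C : ℝ, 0 ≤ C ∧ ∀ h x K : ℝ, ∀ u : ℝ → ℝ, 0 < h → h ≤ 1 → x ∈ Icc (-1 : ℝ) 1 → 0 ≤ K →
    Integrable u vI → (∀ y, |y - x| ≤ r → |u y| ≤ K * (y - x) ^ 2) → ∫ y, |u y| ∂vI ≤ K →
    ∫ y, heatGamma x y h * |u y| ∂vI ≤ C * K * h := by
  obtain ⟨C, hC0, hC⟩ := sqrt_exp_bound (ε := r ^ 2) (by positivity)
  have hSS := SS_nonneg 1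
  refine ⟨8 * Real.sqrt 2 + C * SS 1, by positivity, ?_⟩
  intro h x K u hh h1 hx hK hu hnear hmass
  have i1 : Integrable (fun y => K * (Real.sqrt 2 * (8 * h)) * heatGamma x y (2 * h)) vI :=
    (integrable_heatGamma x (2 * h)).const_mul _
  have i2 : Integrable (fun y => C * h * SS 1 * |u y|) vI := hu.abs.const_mul _
  have key : ∫ y, heatGamma x y h * |u y| ∂vI ≤ ∫ y, (K * (Real.sqrt 2 * (8 * h)) * heatGamma x y (2 * h) + C * h * SS 1 * |u y|) ∂vI := by
    refine integral_mono_ae (bdd_ker hx hh hu.abs) (i1.add i2) ?_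
    filter_upwards [ae_restrict_mem measurableSet_Ioc] with y hy
    have hyI : y ∈ Icc (-1 : ℝ) 1 := ⟨hy.1.le, hy.2⟩
    have g2 := heatGamma_nonneg x y (2 * h)
    have g1 := heatGamma_nonneg x y h
    rcases le_or_gt |y - x| r with hyx | hyx
    · have hd := heatGamma_double hx hyI hh (abs_nonneg (x - y)) le_rfl
      rw [sq_abs] at hd
      have e1 : (y - x) ^ 2 * Real.exp (-((x - y) ^ 2) / (8 * h)) ≤ 8 * h := by
        have := z_exp_le ((x - y) ^ 2 / (8 * h))
        rw [div_mul_eq_mul_div, div_le_one (by positivity)] at this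
        rw [neg_div, show (y - x) ^ 2 = (x - y) ^ 2 by ring]; exact this
      have s2 : 0 ≤ Real.sqrt 2 := Real.sqrt_nonneg 2
      calc heatGamma x y h * |u y| ≤ (Real.sqrt 2 * Real.exp (-((x - y) ^ 2) / (8 * h)) * heatGamma x y (2 * h)) * (K * (y - x) ^ 2) := by
            gcongr; exact hnear y hyx
        _ = K * (Real.sqrt 2 * ((y - x) ^ 2 * Real.exp (-((x - y) ^ 2) / (8 * h)))) * heatGamma x y (2 * h) := by ring
        _ ≤ K * (Real.sqrt 2 * (8 * h)) * heatGamma x y (2 * h) := by gcongr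
        _ ≤ _ := by have : 0 ≤ C * h * SS 1 * |u y| := by positivity
                    linarith
    · have hb : heatGamma x y h ≤ C * h * SS 1 := by
        refine (heatGamma_le hh h1 hx hyI).trans (mul_le_mul_of_nonneg_right ?_ hSS)
        refine le_trans ?_ (hC h hh)
        have : r ^ 2 ≤ (x - y) ^ 2 := by
          rw [← sq_abs (x - y), abs_sub_comm]; exact pow_le_pow_left₀ hr.le hyx.le 2
        gcongr
      have : 0 ≤ K * (Real.sqrt 2 * (8 * h)) * heatGamma x y (2 * h) := by positivity
      have := mul_le_mul_of_nonneg_right hb (abs_nonneg (u y))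
      linarith
  have e : ∫ y, (K * (Real.sqrt 2 * (8 * h)) * heatGamma x y (2 * h) + C * h * SS 1 * |u y|) ∂vI
      = K * (Real.sqrt 2 * (8 * h)) * 1 + C * h * SS 1 * ∫ y, |u y| ∂vI := by
    rw [integral_add i1 i2, integral_const_mul, integral_const_mul]
    congr 2
    exact integral_heatGamma x (by positivity)
  rw [e] at key
  refine key.trans ?_
  have : C * h * SS 1 * ∫ y, |u y| ∂vI ≤ C * h * SS 1 * K := by gcongr
  nlinarith

/-- weight -/
noncomputable def Wt (c : ℝ) : ℝ → ℝ := (Ioi c).indicator 1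

lemma Wt_meas (c : ℝ) : Measurable (Wt c) := measurable_one.indicator measurableSet_Ioi
lemma Wt_of_gt {c x : ℝ} (h : c < x) : Wt c x = 1 := by simp [Wt, h]
lemma Wt_of_le {c x : ℝ} (h : x ≤ c) : Wt c x = 0 := by simp [Wt, h]
lemma Wt_norm (c x : ℝ) : ‖Wt c x‖ ≤ 1 := by
  rcases le_or_gt x c with h | h
  · simp [Wt_of_le h]
  · simp [Wt_of_gt h]
lemma Wt_int {c : ℝ} {u : ℝ → ℝ} (hu : Integrable u vI) : Integrable (fun x => Wt c x * u x) vI :=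
  hu.bdd_mul (Wt_meas c).aestronglyMeasurable (ae_of_all _ fun x => Wt_norm c x)

lemma Psi_bound {c y τ : ℝ} (hy : y ∈ Icc (-1 : ℝ) 1) (hτ : 0 < τ) :
    |∫ x, Wt c x * heatGamma x y τ ∂vI - Wt c y| ≤ Real.sqrt 2 * Real.exp (-((y - c) ^ 2) / (8 * τ)) := by
  have ig := integrable_heatGamma_left y τ
  have ig2 := integrable_heatGamma_left y (2 * τ)
  have iw := Wt_int (c := c) ig
  have s2 : 0 ≤ Real.sqrt 2 := Real.sqrt_nonneg 2
  -- general bound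
  have gen : ∀ V : ℝ → ℝ, Integrable (fun x => V x * heatGamma x y τ) vI → (∀ x, 0 ≤ V x) → (∀ x, V x ≤ 1) →
      (∀ x, |x - y| < |y - c| → V x = 0) →
      |∫ x, V x * heatGamma x y τ ∂vI| ≤ Real.sqrt 2 * Real.exp (-((y - c) ^ 2) / (8 * τ)) := by
    intro V hV h0 h1 hz
    rw [abs_of_nonneg (integral_nonneg fun x => mul_nonneg (h0 x) (heatGamma_nonneg _ _ _))]
    calc ∫ x, V x * heatGamma x y τ ∂vI ≤ ∫ x, Real.sqrt 2 * Real.exp (-((y - c) ^ 2) / (8 * τ)) * heatGamma x y (2 * τ) ∂vI := by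
          refine integral_mono_ae hV (ig2.const_mul _) ?_
          filter_upwards [ae_restrict_mem measurableSet_Ioc] with x hx
          have g2 := heatGamma_nonneg x y (2 * τ)
          have g1 := heatGamma_nonneg x y τ
          rcases lt_or_ge |x - y| |y - c| with h | h
          · rw [hz x h, zero_mul]; positivity
          · have hd := heatGamma_double ⟨hx.1.le, hx.2⟩ hy hτ (abs_nonneg _) h
            rw [sq_abs] at hd
            exact (mul_le_of_le_one_left g1 (h1 x)).trans hd
      _ = Real.sqrt 2 * Real.exp (-((y - c) ^ 2) / (8 * τ)) := by
          rw [integral_const_mul, integral_heatGamma_left y (by positivity), mul_one]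
  rcases le_or_gt y c with h | h
  · rw [Wt_of_le h, sub_zero]
    refine gen _ iw (fun x => ?_) (fun x => (Real.norm_eq_abs _ ▸ le_abs_self (Wt c x)).trans (Wt_norm c x)) (fun x hx => Wt_of_le ?_)
    · rcases le_or_gt x c with h | h
      · simp [Wt_of_le h]
      · simp [Wt_of_gt h]
    · rw [abs_of_nonpos (by linarith : y - c ≤ 0)] at hx
      linarith [(abs_lt.1 hx).2]
  · rw [Wt_of_gt h]
    have e : ∫ x, Wt c x * heatGamma x y τ ∂vI - 1 = -∫ x, (1 - Wt c x) * heatGamma x y τ ∂vI := by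
      have := integral_sub ig iw
      rw [integral_heatGamma_left y hτ] at this
      simp only [sub_mul, one_mul]
      rw [this]; ring
    rw [e, abs_neg]
    refine gen _ ?_ (fun x => ?_) (fun x => ?_) (fun x hx => ?_)
    · simp only [sub_mul, one_mul]; exact ig.sub iw
    · linarith [(le_abs_self (Wt c x)).trans (Real.norm_eq_abs (Wt c x) ▸ Wt_norm c x)]
    · rcases le_or_gt x c with h | h
      · simp [Wt_of_le h]
      · simp [Wt_of_gt h]
    · rw [Wt_of_gt, sub_self]
      rw [abs_of_pos (by linarith : 0 < y - c)] at hx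
      linarith [(abs_lt.1 hx).1]

end HG

namespace HG
open Set Filter Topology ENNReal

structure Loc (r K c α : ℝ) (u : ℝ → ℝ) : Prop where
  int : Integrable u vI
  mass : ∫ y, |u y| ∂vI ≤ K
  val : |u c| ≤ K
  slope : |α| ≤ K
  taylor : ∀ y, |y - c| ≤ r → |u y - u c - α * (y - c)| ≤ K * (y - c) ^ 2

noncomputable abbrev ph (y : ℝ) : ℝ := Real.sin (Real.pi / 2 * y)

lemma sin_taylor (c y : ℝ) : |ph y - ph c - Real.pi / 2 * Real.cos (Real.pi / 2 * c) * (y - c)| ≤ 4 * (y - c) ^ 2 := by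
  have h := Convex.norm_image_sub_le_of_norm_hasDerivWithin_le (s := uIcc c y) (x := c) (y := y)
    (f := fun x => ph x - Real.pi / 2 * Real.cos (Real.pi / 2 * c) * x)
    (f' := fun x => Real.cos (Real.pi / 2 * x) * (Real.pi / 2) - Real.pi / 2 * Real.cos (Real.pi / 2 * c)) (C := 4 * |y - c|) ?_ ?_ (convex_uIcc _ _) left_mem_uIcc right_mem_uIcc
  · rw [Real.norm_eq_abs, Real.norm_eq_abs] at h
    rw [show 4 * (y - c) ^ 2 = 4 * |y - c| * |y - c| by rw [mul_assoc, ← sq, sq_abs]]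
    refine le_trans (le_of_eq ?_) h
    congr 1; ring
  · intro x _
    refine HasDerivAt.hasDerivWithinAt ?_
    have h1 : HasDerivAt (fun x : ℝ => Real.pi / 2 * x) (Real.pi / 2) x := by
      simpa using (hasDerivAt_id x).const_mul (Real.pi / 2)
    refine h1.sin.sub ?_
    simpa using (hasDerivAt_id x).const_mul (Real.pi / 2 * Real.cos (Real.pi / 2 * c))
  · intro x hx
    have hxc : |x - c| ≤ |y - c| := by
      have := abs_sub_left_of_mem_uIcc hx
      exact this
    have hcos : |Real.cos (Real.pi / 2 * x) - Real.cos (Real.pi / 2 * c)| ≤ |Real.pi / 2 * x - Real.pi / 2 * c| := by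
      have h := Real.abs_cos_sub_cos_le (Real.pi / 2 * x) (Real.pi / 2 * c)
      exact h
    rw [Real.norm_eq_abs, show Real.cos (Real.pi / 2 * x) * (Real.pi / 2) - Real.pi / 2 * Real.cos (Real.pi / 2 * c)
      = Real.pi / 2 * (Real.cos (Real.pi / 2 * x) - Real.cos (Real.pi / 2 * c)) by ring, abs_mul]
    rw [← mul_sub, abs_mul] at hcos
    have hp : |Real.pi / 2| ≤ 2 := by
      rw [abs_of_pos (by positivity)]; linarith [Real.pi_le_four]
    calc |Real.pi / 2| * |Real.cos (Real.pi / 2 * x) - Real.cos (Real.pi / 2 * c)| ≤ 2 * (2 * |y - c|) := by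
          gcongr
          exact hcos.trans (by gcongr)
      _ = _ := by ring

lemma cos_lower {r c : ℝ} (hr : 0 < r) (hc : |c| + r ≤ 1) :
    Real.cos (Real.pi / 2 * (1 - r)) ≤ Real.cos (Real.pi / 2 * c) ∧ 0 < Real.cos (Real.pi / 2 * (1 - r)) := by
  have hp := Real.pi_pos
  have h0 := abs_nonneg c
  constructor
  · rw [← Real.cos_abs (Real.pi / 2 * c), abs_mul, abs_of_pos (by positivity : 0 < Real.pi / 2)]
    apply Real.cos_le_cos_of_nonneg_of_le_pi (by positivity)
    · nlinarith
    · gcongr; linarith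
  · apply Real.cos_pos_of_mem_Ioo
    constructor <;> nlinarith

lemma decomp {r : ℝ} (hr : 0 < r) : ∃ D : ℝ, 0 ≤ D ∧ ∀ (K c α : ℝ) (u : ℝ → ℝ), |c| + r ≤ 1 → Loc r K c α u →
    ∃ (B : ℝ) (v : ℝ → ℝ), |B| ≤ D * K ∧ B * (Real.pi / 2 * Real.cos (Real.pi / 2 * c)) = α ∧ (∀ y, u y = (u c - B * ph c) + B * ph y + v y) ∧ Integrable v vI ∧
      (∀ y, |y - c| ≤ r → |v y| ≤ D * K * (y - c) ^ 2) ∧ ∫ y, |v y| ∂vI ≤ D * K := by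
  set κ := Real.cos (Real.pi / 2 * (1 - r)) with hκ
  rcases lt_or_ge 1 r with hr1 | hr1
  · exact ⟨0, le_rfl, fun K c α u hc => absurd hc (by linarith [abs_nonneg c])⟩
  have hκ0 : 0 < κ := (cos_lower (c := 0) hr (by simpa using hr1)).2
  refine ⟨4 * (1 / κ) + 4, by positivity, ?_⟩
  intro K c α u hc hu
  have hcos := (cos_lower hr hc).1
  have hK : 0 ≤ K := (abs_nonneg _).trans hu.val
  have hp := Real.pi_gt_three
  have hden : κ ≤ Real.pi / 2 * Real.cos (Real.pi / 2 * c) := by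
    have : 0 < Real.cos (Real.pi / 2 * c) := hκ0.trans_le hcos
    nlinarith
  set B := α / (Real.pi / 2 * Real.cos (Real.pi / 2 * c)) with hBdef
  have hBm : B * (Real.pi / 2 * Real.cos (Real.pi / 2 * c)) = α := div_mul_cancel₀ _ (by linarith)
  have hB : |B| ≤ 1 / κ * K := by
    rw [hBdef, abs_div, abs_of_pos (hκ0.trans_le hden), div_le_iff₀ (hκ0.trans_le hden)]
    calc |α| ≤ K := hu.slope
      _ = 1 / κ * K * κ := by field_simp
      _ ≤ _ := by gcongr
  have hi : Integrable ph vI := by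
    have : Continuous ph := by unfold ph; fun_prop
    exact (this.integrableOn_Icc (a := -1) (b := 1)).mono_set Ioc_subset_Icc_self
  have h0 : 0 ≤ 1 / κ * K := by positivity
  have vint : Integrable (fun y => u y - (u c - B * ph c) - B * ph y) vI :=
    (hu.int.sub (integrable_const _)).sub (hi.const_mul B)
  refine ⟨B, fun y => u y - (u c - B * ph c) - B * ph y, ?_, hBm, fun y => by ring, vint, ?_, ?_⟩
  · nlinarith
  · intro y hy
    have h1 := hu.taylor y hy
    have h2 := sin_taylor c y
    have e : u y - (u c - B * ph c) - B * ph y = (u y - u c - α * (y - c)) - B * (ph y - ph c - Real.pi / 2 * Real.cos (Real.pi / 2 * c) * (y - c)) := by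
      rw [← hBm]; ring
    simp only
    rw [e]
    refine (abs_sub _ _).trans ?_
    rw [abs_mul]
    calc _ ≤ K * (y - c) ^ 2 + 1 / κ * K * (4 * (y - c) ^ 2) := by gcongr
      _ ≤ _ := by nlinarith [sq_nonneg (y - c), mul_nonneg hK (sq_nonneg (y - c))]
  · have : ∫ y, |u y - (u c - B * ph c) - B * ph y| ∂vI ≤ ∫ y, (|u y| + (K + 2 * (1 / κ * K))) ∂vI := by
      refine integral_mono vint.abs (hu.int.abs.add (integrable_const _)) fun y => ?_
      have a1 : |ph c| ≤ 1 := Real.abs_sin_le_one _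
      have a2 : |ph y| ≤ 1 := Real.abs_sin_le_one _
      have a3 : |B * ph c| ≤ 1 / κ * K := by
        rw [abs_mul]; exact (mul_le_of_le_one_right (abs_nonneg _) a1).trans hB
      have a4 : |B * ph y| ≤ 1 / κ * K := by
        rw [abs_mul]; exact (mul_le_of_le_one_right (abs_nonneg _) a2).trans hB
      have b1 := abs_sub (u y - (u c - B * ph c)) (B * ph y)
      have b2 := abs_sub (u y) (u c - B * ph c)
      have b3 := abs_sub (u c) (B * ph c)
      have := hu.val
      simp only
      linarith
    refine this.trans ?_
    rw [integral_add hu.int.abs (integrable_const _), integral_const]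
    have e : (vI).real univ = 2 := by simp [Measure.real, vI]; norm_num
    rw [e, smul_eq_mul]
    have := hu.mass
    nlinarith

lemma exp_est1 {h : ℝ} (hh : 0 < h) : |Real.exp (-(Real.pi ^ 2 / 4) * h) - 1| ≤ 4 * h := by
  have h1 : Real.exp (-(Real.pi ^ 2 / 4) * h) ≤ 1 := by
    rw [Real.exp_le_one_iff]; have : 0 ≤ Real.pi ^ 2 / 4 * h := by positivity
    linarith
  have h2 := Real.add_one_le_exp (-(Real.pi ^ 2 / 4) * h)
  rw [abs_of_nonpos (by linarith)]
  have : Real.pi ^ 2 / 4 ≤ 4 := by nlinarith [Real.pi_pos, Real.pi_le_four]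
  nlinarith

lemma exp_est2 {h : ℝ} (hh : 0 < h) : |(Real.exp (-(Real.pi ^ 2 / 4) * h) - 1) * (4 / Real.pi ^ 2) + h| ≤ 4 * h ^ 2 := by
  set z := Real.pi ^ 2 / 4 * h with hz
  have hz0 : 0 ≤ z := by positivity
  have h1 := Real.add_one_le_exp (-z)
  have h2 : Real.exp (-z) ≤ 1 - z + z ^ 2 := by
    have a := Real.add_one_le_exp z
    have : Real.exp (-z) ≤ 1 / (1 + z) := by
      rw [Real.exp_neg, ← one_div]; apply one_div_le_one_div_of_le <;> linarith
    refine this.trans ?_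
    rw [div_le_iff₀ (by linarith)]
    nlinarith [pow_nonneg hz0 3]
  have hp : 0 < Real.pi ^ 2 := by positivity
  have e : (Real.exp (-(Real.pi ^ 2 / 4) * h) - 1) * (4 / Real.pi ^ 2) + h = (Real.exp (-z) - 1 + z) * (4 / Real.pi ^ 2) := by
    rw [hz, show -(Real.pi ^ 2 / 4) * h = -(Real.pi ^ 2 / 4 * h) by ring]; field_simp
  rw [e, abs_of_nonneg (mul_nonneg (by linarith) (by positivity))]
  calc _ ≤ z ^ 2 * (4 / Real.pi ^ 2) := by gcongr; linarith
    _ = Real.pi ^ 2 / 4 * h ^ 2 := by rw [hz]; field_simp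
    _ ≤ 4 * h ^ 2 := by
      have : Real.pi ^ 2 / 4 ≤ 4 := by nlinarith [Real.pi_pos, Real.pi_le_four]
      gcongr

lemma ph_int : Integrable ph vI := by
  have : Continuous ph := by unfold ph; fun_prop
  exact (this.integrableOn_Icc (a := -1) (b := 1)).mono_set Ioc_subset_Icc_self

lemma semi_decomp {x h A B : ℝ} (hx : x ∈ Icc (-1 : ℝ) 1) (hh : 0 < h) {u v : ℝ → ℝ} (hv : Integrable v vI)
    (hu : ∀ y, u y = A + B * ph y + v y) :
    ∫ y, heatGamma x y h * u y ∂vI = A + B * (Real.exp (-(Real.pi ^ 2 / 4) * h) * ph x) + ∫ y, heatGamma x y h * v y ∂vI := by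
  have i1 : Integrable (fun y => heatGamma x y h * A) vI := (integrable_heatGamma x h).mul_const A
  have i2 : Integrable (fun y => heatGamma x y h * ph y) vI := bdd_ker hx hh ph_int
  have i3 := bdd_ker hx hh hv
  have e : ∀ y, heatGamma x y h * u y = heatGamma x y h * A + B * (heatGamma x y h * ph y) + heatGamma x y h * v y := by
    intro y; rw [hu]; ring
  simp only [e]
  have a1 := integral_add (i1.add (i2.const_mul B)) i3
  have a2 := integral_add i1 (i2.const_mul B)
  simp only [Pi.add_apply] at a1
  rw [a1, a2, integral_mul_const, integral_const_mul]
  have g1 : ∫ y, heatGamma x y h ∂vI = 1 := integral_heatGamma x hh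
  have g2 : ∫ y, heatGamma x y h * ph y ∂vI = _ := integral_heatGamma_sin x hh
  rw [g1, g2]; ring

lemma semi_lip {r : ℝ} (hr : 0 < r) : ∃ C : ℝ, 0 ≤ C ∧ ∀ (K c α h : ℝ) (u : ℝ → ℝ), |c| + r ≤ 1 → 0 < h → h ≤ 1 → Loc r K c α u →
    |∫ y, heatGamma c y h * u y ∂vI - u c| ≤ C * K * h := by
  obtain ⟨D, hD, hdec⟩ := decomp hr
  obtain ⟨C, hC, hnf⟩ := near_far hr
  refine ⟨4 * D + C * D, by positivity, ?_⟩
  intro K c α h u hc hh h1 hu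
  obtain ⟨B, v, hB, -, huv, hv, hvn, hvm⟩ := hdec K c α u hc hu
  have hK : 0 ≤ K := (abs_nonneg _).trans hu.val
  have hcI : c ∈ Icc (-1 : ℝ) 1 := by
    have := abs_le.1 (show |c| ≤ 1 by linarith); exact this
  rw [semi_decomp hcI hh hv huv]
  have e : u c - B * ph c + B * (Real.exp (-(Real.pi ^ 2 / 4) * h) * ph c) + (∫ y, heatGamma c y h * v y ∂vI) - u c
     = B * (Real.exp (-(Real.pi ^ 2 / 4) * h) - 1) * ph c + ∫ y, heatGamma c y h * v y ∂vI := by ring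
  rw [e]
  have b1 : |B * (Real.exp (-(Real.pi ^ 2 / 4) * h) - 1) * ph c| ≤ D * K * (4 * h) := by
    rw [abs_mul, abs_mul]
    have a1 : |ph c| ≤ 1 := Real.abs_sin_le_one _
    refine (mul_le_of_le_one_right (by positivity) a1).trans ?_
    gcongr
    exact exp_est1 hh
  have b2 : |∫ y, heatGamma c y h * v y ∂vI| ≤ C * (D * K) * h := by
    refine (abs_integral_le_integral_abs).trans ?_
    refine le_trans (le_of_eq ?_) (hnf h c (D * K) v hh h1 hcI (by positivity) hv hvn hvm)
    simp only [abs_mul, abs_of_nonneg (heatGamma_nonneg _ _ _)]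
  have := abs_add_le (B * (Real.exp (-(Real.pi ^ 2 / 4) * h) - 1) * ph c) (∫ y, heatGamma c y h * v y ∂vI)
  nlinarith

lemma int_W_sin {c : ℝ} (hc : c ∈ Icc (-1 : ℝ) 1) : ∫ x, Wt c x * ph x ∂vI = 2 / Real.pi * Real.cos (Real.pi / 2 * c) := by
  have e : (fun x => Wt c x * ph x) = (Ioi c).indicator ph := by
    funext x
    rcases le_or_gt x c with h | h
    · simp [Wt_of_le h, h]
    · simp [Wt_of_gt h, h]
  rw [e, integral_indicator measurableSet_Ioi, Measure.restrict_restrict measurableSet_Ioi]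
  have : Ioi c ∩ Ioc (-1) 1 = Ioc c 1 := by
    ext x; simp only [mem_inter_iff, mem_Ioi, mem_Ioc]
    constructor
    · rintro ⟨a, b, d⟩; exact ⟨a, d⟩
    · rintro ⟨a, d⟩; exact ⟨a, by linarith [hc.1], d⟩
  rw [this, ← intervalIntegral.integral_of_le hc.2]
  have hd : ∀ x ∈ uIcc c 1, HasDerivAt (fun x => -(2 / Real.pi * Real.cos (Real.pi / 2 * x))) (ph x) x := by
    intro x _
    have h1 : HasDerivAt (fun x : ℝ => Real.pi / 2 * x) (Real.pi / 2) x := by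
      simpa using (hasDerivAt_id x).const_mul (Real.pi / 2)
    have := (h1.cos.const_mul (2 / Real.pi)).neg
    refine HasDerivAt.congr_deriv this ?_
    have := Real.pi_pos
    unfold ph; field_simp
  rw [intervalIntegral.integral_eq_sub_of_hasDerivAt hd]
  · simp
  · have : Continuous ph := by unfold ph; fun_prop
    exact this.intervalIntegrable _ _

lemma semi_flux {r : ℝ} (hr : 0 < r) : ∃ C : ℝ, 0 ≤ C ∧ ∀ (K c α h : ℝ) (u : ℝ → ℝ), |c| + r ≤ 1 → 0 < h → h ≤ 1 / 2 → Loc r K c α u →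
    u c = 0 →
    |(∫ x, Wt c x * (∫ y, heatGamma x y h * u y ∂vI) ∂vI) - (∫ x, Wt c x * u x ∂vI) + α * h| ≤ C * K * (h * Real.sqrt h) := by
  obtain ⟨D, hD, hdec⟩ := decomp hr
  obtain ⟨C, hC, hnf⟩ := near_far hr
  refine ⟨4 + Real.sqrt 2 * Real.sqrt (8 * Real.pi) * (C * D * 2), by positivity, ?_⟩
  intro K c α h u hc hh h1 hu huc
  obtain ⟨B, v, hB, hBα, huv, hv, hvn, hvm⟩ := hdec K c α u hc hu
  have hK : 0 ≤ K := (abs_nonneg _).trans hu.val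
  have hcI : c ∈ Icc (-1 : ℝ) 1 := abs_le.1 (show |c| ≤ 1 by linarith)
  set E := Real.exp (-(Real.pi ^ 2 / 4) * h) with hE
  set N : ℝ → ℝ := fun x => ∫ y, heatGamma x y h * v y ∂vI with hN
  have hNi : Integrable N vI := ker_int (Y := id) (θ := fun _ => h) aemeasurable_id aemeasurable_const hv
  have hphi := Wt_int (c := c) ph_int
  have e1 : (∫ x, Wt c x * (∫ y, heatGamma x y h * u y ∂vI) ∂vI) - (∫ x, Wt c x * u x ∂vI)
      = ∫ x, (B * (E - 1) * (Wt c x * ph x) + (Wt c x * N x - Wt c x * v x)) ∂vI := by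
    have hui : Integrable (fun x => ∫ y, heatGamma x y h * u y ∂vI) vI :=
      ker_int (Y := id) (θ := fun _ => h) aemeasurable_id aemeasurable_const hu.int
    rw [← integral_sub (Wt_int hui) (Wt_int hu.int)]
    refine integral_congr_ae ?_
    filter_upwards [ae_restrict_mem measurableSet_Ioc] with x hx
    rw [semi_decomp ⟨hx.1.le, hx.2⟩ hh hv huv, huv x]
    ring
  have e2 : ∫ x, (B * (E - 1) * (Wt c x * ph x) + (Wt c x * N x - Wt c x * v x)) ∂vI
      = B * (E - 1) * (2 / Real.pi * Real.cos (Real.pi / 2 * c)) + ∫ y, ((∫ x, Wt c x * heatGamma x y h ∂vI) - Wt c y) * v y ∂vI := by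
    have sw := ker_swap (μ := vI) (Y := id) (θ := fun _ => h) aemeasurable_id aemeasurable_const hv (Wt_meas c) (C := 1) (fun x _ => Wt_norm c x)
    have pint : Integrable (fun y => (∫ x, Wt c x * heatGamma x y h ∂vI) * v y) vI := by
      have hp := ker_prod (μ := vI) (Y := id) (θ := fun _ => h) aemeasurable_id aemeasurable_const hv
      have hp2 : Integrable (fun q : ℝ × ℝ => Wt c q.1 * (heatGamma q.1 (id q.2) h * v q.2)) (Measure.prod vI vI) :=
        hp.bdd_mul (c := 1) ((Wt_meas c).comp measurable_fst).aestronglyMeasurable (ae_of_all _ fun q => Wt_norm c q.1)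
      have := hp2.integral_prod_right
      refine this.congr (ae_of_all _ fun y => ?_)
      simp only [← mul_assoc, id]
      rw [integral_mul_const]
    have a1 := integral_add (hphi.const_mul (B * (E - 1))) ((Wt_int (c := c) hNi).sub (Wt_int (c := c) hv))
    have a2 := integral_sub (Wt_int (c := c) hNi) (Wt_int (c := c) hv)
    simp only [Pi.sub_apply] at a1
    rw [a1, a2, integral_const_mul, int_W_sin hcI]
    congr 1
    simp only [id] at sw
    simp only [hN]
    rw [sw, ← integral_sub pint (Wt_int hv)]
    refine integral_congr_ae (ae_of_all _ fun y => ?_)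
    simp only; ring
  rw [e1, e2]
  have e3 : B * (E - 1) * (2 / Real.pi * Real.cos (Real.pi / 2 * c)) = α * ((E - 1) * (4 / Real.pi ^ 2)) := by
    rw [← hBα]; have := Real.pi_pos; field_simp; ring
  rw [e3]
  have b1 : |α * ((E - 1) * (4 / Real.pi ^ 2) + h)| ≤ K * (4 * (h * Real.sqrt h)) := by
    rw [abs_mul]
    have hs : h ^ 2 ≤ h * Real.sqrt h := by
      rw [sq]; gcongr
      apply Real.le_sqrt_of_sq_le; nlinarith
    have := exp_est2 hh
    gcongr
    · exact hu.slope
    · linarith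
  have b2 : |∫ y, ((∫ x, Wt c x * heatGamma x y h ∂vI) - Wt c y) * v y ∂vI| ≤ Real.sqrt 2 * Real.sqrt (8 * Real.pi * h) * (C * (D * K) * (2 * h)) := by
    refine (abs_integral_le_integral_abs).trans ?_
    have h2 := hnf (2 * h) c (D * K) v (by positivity) (by linarith) hcI (by positivity) hv hvn hvm
    calc _ ≤ ∫ y, Real.sqrt 2 * Real.sqrt (8 * Real.pi * h) * (heatGamma c y (2 * h) * |v y|) ∂vI := by
          refine integral_mono_of_nonneg (ae_of_all _ fun y => abs_nonneg _) ((bdd_ker hcI (by positivity) hv.abs).const_mul _) ?_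
          filter_upwards [ae_restrict_mem measurableSet_Ioc] with y hy
          rw [abs_mul]
          have p1 := Psi_bound (c := c) ⟨hy.1.le, hy.2⟩ hh
          have p2 : Real.exp (-((y - c) ^ 2) / (8 * h)) ≤ Real.sqrt (8 * Real.pi * h) * heatGamma c y (2 * h) := by
            have q := heatK_le_heatGamma c y (2 * h)
            unfold heatK at q
            rw [show 4 * Real.pi * (2 * h) = 8 * Real.pi * h by ring, show 4 * (2 * h) = 8 * h by ring,
              show (c - y) ^ 2 = (y - c) ^ 2 by ring] at q
            have hsq : 0 < Real.sqrt (8 * Real.pi * h) := Real.sqrt_pos.2 (by positivity)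
            rwa [inv_mul_le_iff₀ hsq] at q
          calc _ ≤ Real.sqrt 2 * (Real.sqrt (8 * Real.pi * h) * heatGamma c y (2 * h)) * |v y| := by
                gcongr; exact p1.trans (by gcongr)
            _ = _ := by ring
      _ = Real.sqrt 2 * Real.sqrt (8 * Real.pi * h) * ∫ y, heatGamma c y (2 * h) * |v y| ∂vI := integral_const_mul _ _
      _ ≤ _ := by gcongr
  rw [Real.sqrt_mul (by positivity)] at b2
  have := abs_add_le (α * ((E - 1) * (4 / Real.pi ^ 2) + h)) (∫ y, ((∫ x, Wt c x * heatGamma x y h ∂vI) - Wt c y) * v y ∂vI)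
  have e4 : α * ((E - 1) * (4 / Real.pi ^ 2)) + (∫ y, ((∫ x, Wt c x * heatGamma x y h ∂vI) - Wt c y) * v y ∂vI) + α * h
     = α * ((E - 1) * (4 / Real.pi ^ 2) + h) + ∫ y, ((∫ x, Wt c x * heatGamma x y h ∂vI) - Wt c y) * v y ∂vI := by ring
  rw [e4]
  refine this.trans ((add_le_add b1 b2).trans (le_of_eq ?_))
  ring

end HG

namespace HG
open Set Filter Topology ENNReal

lemma lip1 {u u1 : ℝ → ℝ} {K x y : ℝ} (h : ∀ ξ ∈ uIcc x y, HasDerivAt u (u1 ξ) ξ) (hb : ∀ ξ ∈ uIcc x y, |u1 ξ| ≤ K) :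
    |u y - u x| ≤ K * |y - x| := by
  have := Convex.norm_image_sub_le_of_norm_hasDerivWithin_le (s := uIcc x y) (x := x) (y := y) (f := u) (f' := u1) (C := K)
    (fun ξ hξ => (h ξ hξ).hasDerivWithinAt) (fun ξ hξ => by simpa using hb ξ hξ) (convex_uIcc _ _) left_mem_uIcc right_mem_uIcc
  simpa using this

lemma tay {u u1 u2 : ℝ → ℝ} {K x y : ℝ} (h : ∀ ξ ∈ uIcc x y, HasDerivAt u (u1 ξ) ξ)
    (h1 : ∀ ξ ∈ uIcc x y, HasDerivAt u1 (u2 ξ) ξ) (hb : ∀ ξ ∈ uIcc x y, |u2 ξ| ≤ K) :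
    |u y - u x - u1 x * (y - x)| ≤ K * (y - x) ^ 2 := by
  have hK : 0 ≤ K := (abs_nonneg _).trans (hb x left_mem_uIcc)
  have h2 := lip1 (u := fun ξ => u ξ - u1 x * ξ) (u1 := fun ξ => u1 ξ - u1 x) (K := K * |y - x|) (x := x) (y := y)
    (fun ξ hξ => (h ξ hξ).sub (by simpa using (hasDerivAt_id ξ).const_mul (u1 x))) ?_
  · rw [mul_assoc, ← sq, sq_abs] at h2
    refine le_trans (le_of_eq ?_) h2
    congr 1; ring
  · intro ξ hξ
    have hs : uIcc x ξ ⊆ uIcc x y := uIcc_subset_uIcc left_mem_uIcc hξ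
    have := lip1 (u := u1) (u1 := u2) (K := K) (x := x) (y := ξ) (fun η hη => h1 η (hs hη)) (fun η hη => hb η (hs hη))
    refine this.trans ?_
    have : |ξ - x| ≤ |y - x| := abs_sub_left_of_mem_uIcc hξ
    gcongr

structure Sol (a T : ℝ) (g p : ℝ → ℝ) (f : ℝ → ℝ → ℝ) : Prop where
  a_pos : 0 < a
  D : Duh T g (fun s => p s - abar a p s) (fun s => p s + abar a p s) (flux f p) f
  p_cont : ContinuousOn p (Ioo 0 T)
  p_mem : ∀ t ∈ Ioo 0 T, p t ∈ Ioo (-1 : ℝ) 1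
  zero_at : ∀ t ∈ Ioo 0 T, f (p t) t = 0
  pos_left : ∀ t ∈ Ioo 0 T, ∀ x ∈ Ico (-1 : ℝ) (p t), 0 < f x t
  neg_right : ∀ t ∈ Ioo 0 T, ∀ x ∈ Ioc (p t) 1, f x t < 0

lemma abar_lip (a : ℝ) (p : ℝ → ℝ) (s t : ℝ) : abar a p s ≤ abar a p t + |p s - p t| := by
  unfold abar
  have h := abs_le.1 (le_refl |p s - p t|)
  rcases min_cases (1 - p t) (1 + p t) with h1 | h1 <;> rcases min_cases a (min (1 - p t) (1 + p t)) with h2 | h2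
  all_goals rw [h2.1]
  · exact (min_le_left _ _).trans (by linarith [abs_nonneg (p s - p t)])
  · rw [h1.1]; exact (min_le_right _ _).trans ((min_le_left _ _).trans (by linarith))
  · exact (min_le_left _ _).trans (by linarith [abs_nonneg (p s - p t)])
  · rw [h1.1]; exact (min_le_right _ _).trans ((min_le_right _ _).trans (by linarith))

structure LocS (T t₀ c ε r K : ℝ) (p y₁ y₂ lam : ℝ → ℝ) (f f1 f2 : ℝ → ℝ → ℝ) : Prop where
  hr : 0 < r
  hε : 0 < ε
  hc : |c| + 6 * r ≤ 1
  times : ∀ t, |t - t₀| ≤ ε → t ∈ Ioo 0 T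
  pc : ∀ t, |t - t₀| ≤ ε → |p t - c| ≤ r / 4
  y1 : ∀ t, |t - t₀| ≤ ε → y₁ t ≤ c - 6 * r
  y2 : ∀ t, |t - t₀| ≤ ε → c + 6 * r ≤ y₂ t
  b0 : ∀ t, |t - t₀| ≤ ε → ∀ x, |x - c| ≤ r → |f x t| ≤ K
  b1 : ∀ t, |t - t₀| ≤ ε → ∀ x, |x - c| ≤ r → |f1 x t| ≤ K
  b2 : ∀ t, |t - t₀| ≤ ε → ∀ x, |x - c| ≤ r → |f2 x t| ≤ K
  d0 : ∀ t, |t - t₀| ≤ ε → ∀ x, |x - c| ≤ r → HasDerivAt (fun x => f x t) (f1 x t) x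
  d1 : ∀ t, |t - t₀| ≤ ε → ∀ x, |x - c| ≤ r → HasDerivAt (fun x => f1 x t) (f2 x t) x
  mass : ∀ t, |t - t₀| ≤ ε → ∫ y, |f y t| ∂vI ≤ K
  lam_eq : ∀ t, |t - t₀| ≤ ε → lam t = - f1 (p t) t

lemma Sol.loc {a T : ℝ} {g p : ℝ → ℝ} {f : ℝ → ℝ → ℝ} (S : Sol a T g p f) {t₀ : ℝ} (ht₀ : t₀ ∈ Ioo 0 T) :
    ∃ ε r K f1 f2, LocS T t₀ (p t₀) ε r K p (fun s => p s - abar a p s) (fun s => p s + abar a p s) (flux f p) f f1 f2 := by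
  have hp := S.p_mem t₀ ht₀
  have hab : 0 < abar a p t₀ := lt_min S.a_pos (lt_min (by linarith [hp.2]) (by linarith [hp.1]))
  set r := abar a p t₀ / 16 with hr
  have hr0 : 0 < r := by positivity
  have hc : |p t₀| + 16 * r ≤ 1 := by
    have h1 : abar a p t₀ ≤ 1 - p t₀ := (min_le_right _ _).trans (min_le_left _ _)
    have h2 : abar a p t₀ ≤ 1 + p t₀ := (min_le_right _ _).trans (min_le_right _ _)
    have : |p t₀| ≤ 1 - abar a p t₀ := abs_le.2 ⟨by linarith, by linarith⟩
    rw [hr]; linarith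
  have hcont : ContinuousAt p t₀ := S.p_cont.continuousAt (isOpen_Ioo.mem_nhds ht₀)
  obtain ⟨δ, hδ, hpδ⟩ := Metric.continuousAt_iff.1 hcont (r / 4) (by positivity)
  set ε := min (δ / 4) (min (t₀ / 4) ((T - t₀) / 4)) with hε
  have hε0 : 0 < ε := lt_min (by positivity) (lt_min (by linarith [ht₀.1]) (by linarith [ht₀.2]))
  have hε1 : ε ≤ δ / 4 := min_le_left _ _
  have hε2 : ε ≤ t₀ / 4 := (min_le_right _ _).trans (min_le_left _ _)
  have hε3 : ε ≤ (T - t₀) / 4 := (min_le_right _ _).trans (min_le_right _ _)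
  have htm : ∀ t, |t - t₀| ≤ 2 * ε → t ∈ Ioo 0 T := by
    intro t ht; have := abs_le.1 ht; exact ⟨by linarith, by linarith [ht₀.1, ht₀.2]⟩
  have hpc : ∀ t, |t - t₀| ≤ 2 * ε → |p t - p t₀| ≤ r / 4 := by
    intro t ht
    have := @hpδ t (by rw [Real.dist_eq]; linarith)
    rw [Real.dist_eq] at this; exact this.le
  have hy1 : ∀ t, |t - t₀| ≤ 2 * ε → p t - abar a p t ≤ p t₀ - 6 * r := by
    intro t ht
    have h1 := hpc t ht
    have h2 := abar_lip a p t₀ t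
    rw [abs_sub_comm] at h2
    have := abs_le.1 h1
    have : abar a p t₀ = 16 * r := by rw [hr]; ring
    linarith
  have hy2 : ∀ t, |t - t₀| ≤ 2 * ε → p t₀ + 6 * r ≤ p t + abar a p t := by
    intro t ht
    have h1 := hpc t ht
    have h2 := abar_lip a p t₀ t
    rw [abs_sub_comm] at h2
    have := abs_le.1 h1
    have : abar a p t₀ = 16 * r := by rw [hr]; ring
    linarith
  obtain ⟨C₂, hC₂, hreg⟩ := S.D.reg hr0
  have hSS := SS_nonneg T
  have hM := S.D.mass_nonneg
  set G := (Real.sqrt (4 * Real.pi * ε))⁻¹ * Real.exp (1 / (4 * ε)) * SS T with hG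
  set B₁ := G * mass T g (flux f p) with hB₁
  have hs : |t₀ - 2 * ε - t₀| ≤ 2 * ε := by rw [abs_le]; constructor <;> linarith
  have key := fun t (ht : |t - t₀| ≤ ε) => hreg (p t₀) (t₀ - 2 * ε) t B₁ (htm _ hs).1 (by linarith [(abs_le.1 ht).1])
    (htm t (by linarith)).2 (by linarith)
    (fun σ hσ => by
      have := hy1 σ (abs_le.2 ⟨by linarith [hσ.1], by linarith [hσ.2, (abs_le.1 ht).2]⟩)
      rw [abs_sub_comm]; exact (by linarith : 6 * r ≤ p t₀ - (p σ - abar a p σ)).trans (le_abs_self _))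
    (fun σ hσ => by
      have := hy2 σ (abs_le.2 ⟨by linarith [hσ.1], by linarith [hσ.2, (abs_le.1 ht).2]⟩)
      exact (by linarith : 6 * r ≤ (p σ + abar a p σ) - p t₀).trans (le_abs_self _))
    (by
      intro z hz
      have hzs := ball_sub_strip hr0 (by linarith : |p t₀| + 6 * r ≤ 1) hz
      have hτ : ε ≤ t - (t₀ - 2 * ε) := by linarith [(abs_le.1 ht).1]
      have hτT : t - (t₀ - 2 * ε) ≤ T := by linarith [(abs_le.1 ht).2]
      calc _ ≤ ∫ y, G * |f y (t₀ - 2 * ε)| ∂vI := by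
            refine integral_mono_of_nonneg (ae_of_all _ fun y => by positivity) ((S.D.f_int (htm _ hs)).abs.const_mul _) ?_
            filter_upwards [ae_restrict_mem measurableSet_Ioc] with y hy
            refine mul_le_mul_of_nonneg_right ?_ (abs_nonneg _)
            refine (norm_GC_le (hε0.trans_le hτ) hτT ⟨hzs.1.1.le, hzs.1.2.le⟩ ⟨hy.1.le, hy.2⟩).trans ?_
            rw [hG]
            have q : (z.im ^ 2 - (z.re - y) ^ 2) / (4 * (t - (t₀ - 2 * ε))) ≤ 1 / (4 * ε) := by
              have : z.im ^ 2 - (z.re - y) ^ 2 ≤ 1 := by nlinarith [hzs.2.1, hzs.2.2, sq_nonneg (z.re - y)]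
              calc _ ≤ 1 / (4 * (t - (t₀ - 2 * ε))) := by
                    apply div_le_div_of_nonneg_right this; linarith
                _ ≤ _ := by gcongr
            gcongr
        _ = G * ∫ y, |f y (t₀ - 2 * ε)| ∂vI := integral_const_mul _ _
        _ ≤ B₁ := by
            have := S.D.f_mass (htm _ hs)
            rw [hB₁]; gcongr)
  have hB₁0 : 0 ≤ B₁ := by positivity
  set q : ℕ → ℝ := fun m => m.factorial * (B₁ + C₂) / (r / 2) ^ m with hq
  have hq0 : ∀ m, 0 ≤ q m := fun m => by rw [hq]; positivity
  refine ⟨ε, r, q 0 + q 1 + q 2 + mass T g (flux f p), fun x t => iteratedDeriv 1 (fun z => f z t) x,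
    fun x t => iteratedDeriv 2 (fun z => f z t) x, ?_⟩
  have q0 := hq0 0
  have q1 := hq0 1
  have q2 := hq0 2
  refine ⟨hr0, hε0, by linarith, fun t ht => htm t (by linarith), fun t ht => hpc t (by linarith), fun t ht => hy1 t (by linarith),
    fun t ht => hy2 t (by linarith), ?_, ?_, ?_, ?_, ?_, ?_, ?_⟩
  · intro t ht x hx
    have := (key t ht x hx 0).1
    rw [iteratedDeriv_zero] at this
    exact this.trans (show q 0 ≤ _ by linarith)
  · intro t ht x hx
    exact (key t ht x hx 1).1.trans (show q 1 ≤ _ by linarith)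
  · intro t ht x hx
    exact (key t ht x hx 2).1.trans (show q 2 ≤ _ by linarith)
  · intro t ht x hx
    have := (key t ht x hx 0).2
    rwa [iteratedDeriv_zero] at this
  · intro t ht x hx
    exact (key t ht x hx 1).2
  · intro t ht
    have := S.D.f_mass (htm t (by linarith))
    linarith
  · intro t ht
    simp only [flux, iteratedDeriv_one]

lemma LocS.Kn {T t₀ c ε r K : ℝ} {p y₁ y₂ lam : ℝ → ℝ} {f f1 f2 : ℝ → ℝ → ℝ} (Q : LocS T t₀ c ε r K p y₁ y₂ lam f f1 f2) : 0 ≤ K := by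
  have := Q.b0 t₀ (by simpa using Q.hε.le) c (by simpa using Q.hr.le)
  exact (abs_nonneg _).trans this

lemma LocS.near {T t₀ c ε r K : ℝ} {p y₁ y₂ lam : ℝ → ℝ} {f f1 f2 : ℝ → ℝ → ℝ} (Q : LocS T t₀ c ε r K p y₁ y₂ lam f f1 f2)
    {x y ξ : ℝ} (hx : |x - c| ≤ r / 2) (hy : |y - x| ≤ r / 2) (hξ : ξ ∈ uIcc x y) : |ξ - c| ≤ r := by
  have h1 : |ξ - x| ≤ |y - x| := abs_sub_left_of_mem_uIcc hξ
  linarith [abs_sub_le ξ x c]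

lemma LocS.Loc {T t₀ c ε r K : ℝ} {p y₁ y₂ lam : ℝ → ℝ} {f f1 f2 : ℝ → ℝ → ℝ} (Q : LocS T t₀ c ε r K p y₁ y₂ lam f f1 f2)
    {g : ℝ → ℝ} (D : Duh T g y₁ y₂ lam f) {t x : ℝ} (ht : |t - t₀| ≤ ε) (hx : |x - c| ≤ r / 2) :
    Loc (r / 2) K x (f1 x t) (fun y => f y t) := by
  have hr := Q.hr
  refine ⟨D.f_int (Q.times t ht), Q.mass t ht, Q.b0 t ht x (by linarith), Q.b1 t ht x (by linarith), ?_⟩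
  intro y hy
  exact tay (u := fun y => f y t) (u1 := fun y => f1 y t) (u2 := fun y => f2 y t)
    (fun ξ hξ => Q.d0 t ht ξ (Q.near hx hy hξ)) (fun ξ hξ => Q.d1 t ht ξ (Q.near hx hy hξ)) (fun ξ hξ => Q.b2 t ht ξ (Q.near hx hy hξ))

end HG

namespace HG
open Set Filter Topology ENNReal

section
variable {T t₀ c ε r K : ℝ} {p y₁ y₂ lam g : ℝ → ℝ} {f f1 f2 : ℝ → ℝ → ℝ}

lemma LocS.mid (_Q : LocS T t₀ c ε r K p y₁ y₂ lam f f1 f2) {t t' σ : ℝ} (ht : |t - t₀| ≤ ε) (ht' : |t' - t₀| ≤ ε)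
    (hσ : σ ∈ Icc t t') : |σ - t₀| ≤ ε := by
  rw [abs_le] at *; exact ⟨by linarith [hσ.1], by linarith [hσ.2]⟩

lemma LocS.lam_le (Q : LocS T t₀ c ε r K p y₁ y₂ lam f f1 f2) {t : ℝ} (ht : |t - t₀| ≤ ε) : |lam t| ≤ K := by
  rw [Q.lam_eq t ht, abs_neg]
  exact Q.b1 t ht _ (by linarith [Q.pc t ht, Q.hr])

lemma LocS.lam_int (Q : LocS T t₀ c ε r K p y₁ y₂ lam f f1 f2) (D : Duh T g y₁ y₂ lam f) {t t' : ℝ} (ht : |t - t₀| ≤ ε) (ht' : |t' - t₀| ≤ ε)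
    (htt : t < t') : ∫ σ in Ioo t t', lam σ ≤ K * (t' - t) := by
  calc ∫ σ in Ioo t t', lam σ ≤ ∫ σ in Ioo t t', K := by
        refine setIntegral_mono_on (D.lam_sub (Q.times t ht).1.le (Q.times t' ht').2.le) (by simp) measurableSet_Ioo ?_
        intro σ hσ
        exact (le_abs_self _).trans (Q.lam_le (Q.mid ht ht' ⟨hσ.1.le, hσ.2.le⟩))
    _ = K * (t' - t) := by
        rw [setIntegral_const]
        simp [Measure.real, htt.le]; ring

lemma LocS.src (Q : LocS T t₀ c ε r K p y₁ y₂ lam f f1 f2) (D : Duh T g y₁ y₂ lam f) :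
    ∃ C : ℝ, 0 ≤ C ∧ ∀ t t' x, |t - t₀| ≤ ε → |t' - t₀| ≤ ε → t < t' → t' - t ≤ 1 → |x - c| ≤ r / 2 →
    ∀ y : ℝ → ℝ, (y = y₁ ∨ y = y₂) →
      IntegrableOn (fun σ => heatGamma x (y σ) (t' - σ) * lam σ) (Ioo t t') ∧ |BB y lam t t' t' x| ≤ C * (t' - t) := by
  obtain ⟨C, hC0, hC⟩ := sqrt_exp_bound (ε := r ^ 2) (by have := Q.hr; positivity)
  have hSS := SS_nonneg 1
  have hl0 := D.int_lam_nonneg le_rfl le_rfl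
  have hr := Q.hr
  refine ⟨C * SS 1 * ∫ s in Ioo 0 T, lam s, by positivity, ?_⟩
  intro t t' x ht ht' htt h1 hx y hy
  have hc := Q.hc
  have hxI : x ∈ Icc (-1 : ℝ) 1 := by
    have h2 := abs_le.1 hx
    have h3 := abs_le.1 (le_refl |c|)
    exact ⟨by linarith, by linarith⟩
  have hfar : ∀ σ ∈ Ioo t t', r ≤ |x - y σ| ∧ y σ ∈ Icc (-1 : ℝ) 1 := by
    intro σ hσ
    have hm := Q.mid ht ht' ⟨hσ.1.le, hσ.2.le⟩
    have h2 := abs_le.1 hx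
    rcases hy with rfl | rfl
    · have := Q.y1 σ hm
      exact ⟨(by linarith : r ≤ x - y σ).trans (le_abs_self _), D.mem1 σ (Q.times σ hm)⟩
    · have := Q.y2 σ hm
      rw [abs_sub_comm]
      exact ⟨(by linarith : r ≤ y σ - x).trans (le_abs_self _), D.mem2 σ (Q.times σ hm)⟩
  have hb : ∀ σ ∈ Ioo t t', heatGamma x (y σ) (t' - σ) ≤ C * (t' - t) * SS 1 := by
    intro σ hσ
    obtain ⟨h2, h3⟩ := hfar σ hσ
    refine (heatGamma_le (T := 1) (by linarith [hσ.2]) (by linarith [hσ.1]) hxI h3).trans (mul_le_mul_of_nonneg_right ?_ hSS)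
    refine le_trans ?_ ((hC (t' - σ) (by linarith [hσ.2])).trans ?_)
    · have : r ^ 2 ≤ (x - y σ) ^ 2 := by
        rw [← sq_abs (x - y σ)]; exact pow_le_pow_left₀ hr.le h2 2
      have : 0 < t' - σ := by linarith [hσ.2]
      gcongr
    · gcongr; exact hσ.1.le
  have h0 := (Q.times t ht).1.le
  have hT := (Q.times t' ht').2.le
  have hym : AEMeasurable y (volume.restrict (Ioo 0 T)) := by
    rcases hy with rfl | rfl
    · exact D.m1
    · exact D.m2
  refine ⟨D.past_int hym h0 hT hb, ?_⟩
  unfold BB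
  have hln : ∀ σ ∈ Ioo t t', 0 ≤ lam σ := fun σ hσ => D.lam_nn σ (Ioo_subset_Ioo h0 hT hσ)
  rw [abs_of_nonneg (setIntegral_nonneg measurableSet_Ioo fun σ hσ => mul_nonneg (heatGamma_nonneg _ _ _) (hln σ hσ))]
  calc _ ≤ ∫ σ in Ioo t t', C * (t' - t) * SS 1 * lam σ := by
        refine setIntegral_mono_on (D.past_int hym h0 hT hb) ((D.lam_sub h0 hT).const_mul _) measurableSet_Ioo ?_
        intro σ hσ
        exact mul_le_mul_of_nonneg_right (hb σ hσ) (hln σ hσ)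
    _ = C * (t' - t) * SS 1 * ∫ σ in Ioo t t', lam σ := integral_const_mul _ _
    _ ≤ C * (t' - t) * SS 1 * ∫ σ in Ioo 0 T, lam σ := by
        have := D.int_lam_le h0 hT
        have : 0 ≤ t' - t := by linarith
        gcongr
    _ = _ := by ring

lemma LocS.time_lip (Q : LocS T t₀ c ε r K p y₁ y₂ lam f f1 f2) (D : Duh T g y₁ y₂ lam f) :
    ∃ C : ℝ, 0 ≤ C ∧ ∀ t t', |t - t₀| ≤ ε → |t' - t₀| ≤ ε → t < t' → t' - t ≤ 1 → ∀ x, |x - c| ≤ r / 2 →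
      |f x t' - f x t| ≤ C * (t' - t) := by
  obtain ⟨C1, hC1, h1⟩ := Q.src D
  have hr := Q.hr
  obtain ⟨C2, hC2, h2⟩ := semi_lip (r := r / 2) (by linarith)
  have hK := Q.Kn
  refine ⟨C2 * K + 2 * C1, by positivity, ?_⟩
  intro t t' ht ht' htt hle x hx
  have hc := Q.hc
  have hxc : |x| ≤ |c| + r / 2 := by
    have := abs_sub_le x c 0; simp at this; linarith
  have hxI : x ∈ Icc (-1 : ℝ) 1 := abs_le.1 (by linarith)
  have a1 := h1 t t' x ht ht' htt hle hx y₁ (Or.inl rfl)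
  have a2 := h1 t t' x ht ht' htt hle hx y₂ (Or.inr rfl)
  have hre := D.restart (Q.times t ht).1 htt (Q.times t' ht').2 hxI a1.1 a2.1
  have s := h2 K x (f1 x t) (t' - t) (fun y => f y t) (by linarith) (by linarith) hle (Q.Loc D ht hx)
  rw [hre]
  have b1 := abs_le.1 a1.2
  have b2 := abs_le.1 a2.2
  have b3 := abs_le.1 s
  rw [abs_le]
  constructor <;> nlinarith

lemma LocS.lam_osc (Q : LocS T t₀ c ε r K p y₁ y₂ lam f f1 f2) (D : Duh T g y₁ y₂ lam f) :
    ∃ C : ℝ, 0 ≤ C ∧ ∀ t t', |t - t₀| ≤ ε → |t' - t₀| ≤ ε → t < t' → t' - t ≤ 1 → t' - t ≤ (r / 4) ^ 2 →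
      |lam t' - lam t| ≤ C * (Real.sqrt (t' - t) + |p t' - p t|) := by
  obtain ⟨C, hC, hlip⟩ := Q.time_lip D
  have hK := Q.Kn
  have hr := Q.hr
  refine ⟨2 * K + 2 * C, by positivity, ?_⟩
  intro t t' ht ht' htt h1 hsq
  set η := Real.sqrt (t' - t) with hη
  have hη0 : 0 < η := Real.sqrt_pos.2 (by linarith)
  have hη2 : η ^ 2 = t' - t := Real.sq_sqrt (by linarith)
  have hηr : η ≤ r / 4 := Real.sqrt_le_iff.2 ⟨by positivity, hsq⟩
  set x := p t with hx
  have hpx : |x - c| ≤ r / 4 := Q.pc t ht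
  have hpx' : |p t' - c| ≤ r / 4 := Q.pc t' ht'
  have hx2 : |x - c| ≤ r / 2 := by linarith
  have hxη : |x + η - c| ≤ r / 2 := by
    have := abs_le.1 hpx; rw [abs_le]; constructor <;> linarith
  have hyx : |x + η - x| ≤ r / 2 := by rw [add_sub_cancel_left, abs_of_pos hη0]; linarith
  have T1 := (Q.Loc D ht' hx2).taylor (x + η) hyx
  have T2 := (Q.Loc D ht hx2).taylor (x + η) hyx
  have L1 := hlip t t' ht ht' htt h1 (x + η) hxη
  have L2 := hlip t t' ht ht' htt h1 x hx2
  rw [add_sub_cancel_left] at T1 T2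
  rw [abs_le] at T1 T2 L1 L2
  have d1 : |f1 x t' - f1 x t| ≤ (2 * K + 2 * C) * η := by
    have : |(f1 x t' - f1 x t) * η| ≤ (2 * K + 2 * C) * η * η := by
      rw [← hη2] at L1 L2
      rw [abs_le]; constructor <;> nlinarith
    rw [abs_mul, abs_of_pos hη0] at this
    exact le_of_mul_le_mul_right this hη0
  have d2 : |f1 (p t') t' - f1 x t'| ≤ K * |p t' - x| := by
    have hyx : |p t' - x| ≤ r / 2 := by linarith [abs_sub_le (p t') c x, abs_sub_comm x c]
    exact lip1 (u := fun y => f1 y t') (u1 := fun y => f2 y t')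
      (fun ξ hξ => Q.d1 t' ht' ξ (Q.near hx2 hyx hξ)) (fun ξ hξ => Q.b2 t' ht' ξ (Q.near hx2 hyx hξ))
  rw [Q.lam_eq t ht, Q.lam_eq t' ht']
  have e : -f1 (p t') t' - -f1 x t = -((f1 (p t') t' - f1 x t') + (f1 x t' - f1 x t)) := by ring
  rw [e, abs_neg]
  refine (abs_add_le _ _).trans ?_
  nlinarith [abs_nonneg (p t' - x), mul_nonneg hK (abs_nonneg (p t' - x)), mul_nonneg hC (abs_nonneg (p t' - x))]

/-- flux of sources through c -/
lemma LocS.src_flux (Q : LocS T t₀ c ε r K p y₁ y₂ lam f f1 f2) (D : Duh T g y₁ y₂ lam f) :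
    ∃ C : ℝ, 0 ≤ C ∧ ∀ t t' q, |t - t₀| ≤ ε → |t' - t₀| ≤ ε → t < t' → t' - t ≤ 1 → |q - c| ≤ r / 2 →
      |∫ x, Wt q x * (BB y₁ lam t t' t' x - BB y₂ lam t t' t' x) ∂vI + ∫ σ in Ioo t t', lam σ| ≤ C * ((t' - t) * (t' - t)) := by
  have hK := Q.Kn
  have hr := Q.hr
  refine ⟨2 * (Real.sqrt 2 * (8 / r ^ 2) * K), by positivity, ?_⟩
  intro t t' q ht ht' htt h1 hq
  have h0 := (Q.times t ht).1.le
  have hT := (Q.times t' ht').2.le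
  have hln : ∀ σ ∈ Ioo t t', 0 ≤ lam σ := fun σ hσ => D.lam_nn σ (Ioo_subset_Ioo h0 hT hσ)
  have gen : ∀ (y : ℝ → ℝ) (w : ℝ), AEMeasurable y (volume.restrict (Ioo 0 T)) → (∀ σ ∈ Ioo t t', y σ ∈ Icc (-1 : ℝ) 1 ∧ r ≤ |y σ - q| ∧ Wt q (y σ) = w) →
      |∫ x, Wt q x * BB y lam t t' t' x ∂vI - w * ∫ σ in Ioo t t', lam σ| ≤ Real.sqrt 2 * (8 / r ^ 2) * K * ((t' - t) * (t' - t)) := by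
    intro y w hym hyp
    have hym' := Duh.sub_m hym h0 hT
    have li := D.lam_sub h0 hT
    have sw := ker_swap hym' Duh.th_m (θ := fun s => t' - s) li (Wt_meas q) (C := 1) (fun x _ => Wt_norm q x)
    have pint : IntegrableOn (fun σ => (∫ x, Wt q x * heatGamma x (y σ) (t' - σ) ∂vI) * lam σ) (Ioo t t') := by
      have hp := ker_prod hym' (Duh.th_m (t := t')) li
      have hp2 : Integrable (fun z : ℝ × ℝ => Wt q z.1 * (heatGamma z.1 (y z.2) (t' - z.2) * lam z.2)) (Measure.prod vI (volume.restrict (Ioo t t'))) :=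
        hp.bdd_mul (c := 1) ((Wt_meas q).comp measurable_fst).aestronglyMeasurable (ae_of_all _ fun z => Wt_norm q z.1)
      have := hp2.integral_prod_right
      refine this.congr (ae_of_all _ fun y => ?_)
      simp only [← mul_assoc]
      rw [integral_mul_const]
    unfold BB
    rw [sw, ← integral_const_mul, ← integral_sub pint (li.const_mul w)]
    refine (abs_integral_le_integral_abs).trans ?_
    have hb : ∀ σ ∈ Ioo t t', |(∫ x, Wt q x * heatGamma x (y σ) (t' - σ) ∂vI) * lam σ - w * lam σ| ≤ Real.sqrt 2 * (8 / r ^ 2) * (t' - t) * lam σ := by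
      intro σ hσ
      obtain ⟨m1, m2, m3⟩ := hyp σ hσ
      have hτ : 0 < t' - σ := by linarith [hσ.2]
      rw [← sub_mul, abs_mul, abs_of_nonneg (hln σ hσ), ← m3]
      refine mul_le_mul_of_nonneg_right ?_ (hln σ hσ)
      refine (Psi_bound m1 hτ).trans ?_
      rw [mul_assoc]
      refine mul_le_mul_of_nonneg_left ?_ (Real.sqrt_nonneg 2)
      have hz : r ^ 2 ≤ (y σ - q) ^ 2 := by
        rw [← sq_abs (y σ - q)]; exact pow_le_pow_left₀ hr.le m2 2
      have hpos : 0 < (y σ - q) ^ 2 := lt_of_lt_of_le (by positivity) hz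
      have := z_exp_le ((y σ - q) ^ 2 / (8 * (t' - σ)))
      rw [div_mul_eq_mul_div, div_le_one (by positivity)] at this
      rw [neg_div]
      calc Real.exp (-((y σ - q) ^ 2 / (8 * (t' - σ)))) ≤ (8 * (t' - σ)) / (y σ - q) ^ 2 := by
            rw [le_div_iff₀ hpos]; linarith
        _ ≤ (8 * (t' - t)) / r ^ 2 := by
            have : t < σ := hσ.1
            gcongr
        _ = _ := by ring
    calc _ ≤ ∫ σ in Ioo t t', Real.sqrt 2 * (8 / r ^ 2) * (t' - t) * lam σ := by
          refine setIntegral_mono_on (pint.sub (li.const_mul w)).abs (li.const_mul _) measurableSet_Ioo hb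
      _ = Real.sqrt 2 * (8 / r ^ 2) * (t' - t) * ∫ σ in Ioo t t', lam σ := integral_const_mul _ _
      _ ≤ Real.sqrt 2 * (8 / r ^ 2) * (t' - t) * (K * (t' - t)) := by
          have : 0 ≤ t' - t := by linarith
          have := Q.lam_int D ht ht' htt
          gcongr
      _ = _ := by ring
  have hq2 := abs_le.1 hq
  have g1 := gen y₁ 0 D.m1 (fun σ hσ => by
    have hm := Q.mid ht ht' ⟨hσ.1.le, hσ.2.le⟩
    have := Q.y1 σ hm
    refine ⟨D.mem1 σ (Q.times σ hm), ?_, Wt_of_le (by linarith)⟩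
    rw [abs_sub_comm]; exact (by linarith : r ≤ q - y₁ σ).trans (le_abs_self _))
  have g2 := gen y₂ 1 D.m2 (fun σ hσ => by
    have hm := Q.mid ht ht' ⟨hσ.1.le, hσ.2.le⟩
    have := Q.y2 σ hm
    refine ⟨D.mem2 σ (Q.times σ hm), ?_, Wt_of_gt (by linarith)⟩
    exact (by linarith : r ≤ y₂ σ - q).trans (le_abs_self _))
  simp only [mul_sub]
  rw [integral_sub (Wt_int (D.BB_int D.m1 h0 hT)) (Wt_int (D.BB_int D.m2 h0 hT))]
  rw [abs_le] at *
  constructor <;> linarith [g1.1, g1.2, g2.1, g2.2]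

end
end HG

namespace HG
open Set Filter Topology ENNReal

noncomputable def MM (p : ℝ → ℝ) (f : ℝ → ℝ → ℝ) (t : ℝ) : ℝ := ∫ x, Wt (p t) x * f x t ∂vI

set_option maxHeartbeats 2000000 in
lemma Sol.inc {a T : ℝ} {g p : ℝ → ℝ} {f : ℝ → ℝ → ℝ} (S : Sol a T g p f) {t₀ : ℝ} (ht₀ : t₀ ∈ Ioo 0 T) :
    ∃ C δ : ℝ, 0 ≤ C ∧ 0 < δ ∧ ∀ t t' ω, |t - t₀| ≤ δ → |t' - t₀| ≤ δ → t < t' → (∀ s ∈ Icc t t', |p s - p t| ≤ ω) →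
      |MM p f t' - MM p f t| ≤ C * (t' - t) * (Real.sqrt (t' - t) + ω) := by
  obtain ⟨ε, r, K, f1, f2, Q⟩ := S.loc ht₀
  have D := S.D
  obtain ⟨C1, hC1, hlip⟩ := Q.time_lip D
  obtain ⟨C2, hC2, hosc⟩ := Q.lam_osc D
  obtain ⟨C3, hC3, hsrc⟩ := Q.src_flux D
  set c := p t₀ with hcdef
  have hr := Q.hr
  have hK := Q.Kn
  obtain ⟨C4, hC4, hsemi⟩ := semi_flux (r := r / 2) (by linarith)
  set y₁ : ℝ → ℝ := fun s => p s - abar a p s with hy₁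
  set y₂ : ℝ → ℝ := fun s => p s + abar a p s with hy₂
  set lam := flux f p with hlam
  set δ := min ε (min (1 / 4) ((r / 4) ^ 2 / 2)) with hδ
  have hδ1 : δ ≤ ε := min_le_left _ _
  have hδ2 : δ ≤ 1 / 4 := (min_le_right _ _).trans (min_le_left _ _)
  have hδ3 : δ ≤ (r / 4) ^ 2 / 2 := (min_le_right _ _).trans (min_le_right _ _)
  refine ⟨C1 + C2 + C3 + C4 * K, δ, by positivity, lt_min Q.hε (lt_min (by norm_num) (by positivity)), ?_⟩
  intro t t' ω htδ htδ' htt hω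
  have ht : |t - t₀| ≤ ε := htδ.trans hδ1
  have ht' : |t' - t₀| ≤ ε := htδ'.trans hδ1
  have hh2 : t' - t ≤ 2 * δ := by linarith [(abs_le.1 htδ).1, (abs_le.1 htδ').2]
  set h := t' - t with hh
  have hh0 : 0 < h := by linarith
  have tI := Q.times t ht
  have tI' := Q.times t' ht'
  have hω0 : 0 ≤ ω := (abs_nonneg _).trans (hω t ⟨le_rfl, htt.le⟩)
  have hpc := Q.pc t ht
  have hpc' := Q.pc t' ht'
  have pI := S.p_mem t tI
  have pI' := S.p_mem t' tI'
  have fi := D.f_int tI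
  have fi' := D.f_int tI'
  -- part A : moving the cut
  have A : |(∫ x, Wt (p t') x * f x t' ∂vI) - ∫ x, Wt (p t) x * f x t' ∂vI| ≤ C1 * h * ω := by
    rw [← integral_sub (Wt_int fi') (Wt_int fi')]
    refine (abs_integral_le_integral_abs).trans ?_
    have hpt : ∀ x ∈ Ioc (-1 : ℝ) 1, |Wt (p t') x * f x t' - Wt (p t) x * f x t'| ≤ (uIoc (p t) (p t')).indicator (fun _ => C1 * h) x := by
      intro x hx
      by_cases hxu : x ∈ uIoc (p t) (p t')
      · rw [indicator_of_mem hxu]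
        have hxr : |x - c| ≤ r / 2 := by
          have h1 := abs_le.1 hpc
          have h2 := abs_le.1 hpc'
          rw [mem_uIoc] at hxu
          rw [abs_le]; rcases hxu with h | h <;> constructor <;> linarith [h.1, h.2]
        have L := hlip t t' ht ht' htt (by linarith) x hxr
        have L2 := abs_le.1 L
        have hab : |f x t'| ≤ C1 * h := by
          rw [mem_uIoc] at hxu
          rcases hxu with ⟨h1, h2⟩ | ⟨h1, h2⟩
          · have n1 := S.neg_right t tI x ⟨h1, hx.2⟩
            have n2 : 0 ≤ f x t' := by
              rcases h2.lt_or_eq with h3 | h3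
              · exact (S.pos_left t' tI' x ⟨hx.1.le, h3⟩).le
              · rw [h3, S.zero_at t' tI']
            rw [abs_of_nonneg n2]; linarith
          · have n1 := S.neg_right t' tI' x ⟨h1, hx.2⟩
            have n2 : 0 ≤ f x t := by
              rcases h2.lt_or_eq with h3 | h3
              · exact (S.pos_left t tI x ⟨hx.1.le, h3⟩).le
              · rw [h3, S.zero_at t tI]
            rw [abs_of_neg n1]; linarith
        rw [← sub_mul, abs_mul]
        refine (mul_le_of_le_one_left (abs_nonneg _) ?_).trans hab
        rcases le_or_gt x (p t') with h1 | h1 <;> rcases le_or_gt x (p t) with h2 | h2 <;>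
          simp [Wt_of_le, Wt_of_gt, h1, h2]
      · rw [indicator_of_notMem hxu]
        have : Wt (p t') x = Wt (p t) x := by
          rw [mem_uIoc] at hxu; push Not at hxu
          rcases le_or_gt x (p t') with h1 | h1 <;> rcases le_or_gt x (p t) with h2 | h2
          · rw [Wt_of_le h1, Wt_of_le h2]
          · exact absurd (hxu.1 h2) (by linarith)
          · exact absurd (hxu.2 h1) (by linarith)
          · rw [Wt_of_gt h1, Wt_of_gt h2]
        rw [this]; simp
    have hfin : volume (uIoc (p t) (p t')) ≠ ⊤ := by simp [uIoc]
    have ii : Integrable ((uIoc (p t) (p t')).indicator (fun _ => C1 * h)) volume :=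
      (integrableOn_const hfin).integrable_indicator measurableSet_uIoc
    calc _ ≤ ∫ x, (uIoc (p t) (p t')).indicator (fun _ => C1 * h) x ∂vI := by
          refine integral_mono_ae ((Wt_int fi').sub (Wt_int fi')).abs ii.restrict ?_
          filter_upwards [ae_restrict_mem measurableSet_Ioc] with x hx using hpt x hx
      _ ≤ ∫ x, (uIoc (p t) (p t')).indicator (fun _ => C1 * h) x := by
          refine integral_mono_measure Measure.restrict_le_self (ae_of_all _ fun x => indicator_nonneg (fun _ _ => by positivity) x) ii
      _ = C1 * h * |p t' - p t| := by
          rw [integral_indicator measurableSet_uIoc, setIntegral_const]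
          have : volume.real (uIoc (p t) (p t')) = |p t' - p t| := by
            rw [Measure.real, Real.volume_uIoc, ENNReal.toReal_ofReal (abs_nonneg _)]
          rw [this, smul_eq_mul]; ring
      _ ≤ C1 * h * ω := by
          gcongr; exact hω t' ⟨htt.le, le_rfl⟩
  -- part B
  have hp2 : |p t - c| ≤ r / 2 := by linarith
  have hc := Q.hc
  have B1 := hsemi K (p t) (f1 (p t) t) h (fun y => f y t) (by
    have := abs_sub_le (p t) c 0; simp only [sub_zero] at this; linarith) hh0 (by linarith) (Q.Loc D ht hp2) (S.zero_at t tI)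
  have B2 := hsrc t t' (p t) ht ht' htt (by linarith) hp2
  have B3 : (∫ x, Wt (p t) x * f x t' ∂vI) = (∫ x, Wt (p t) x * (∫ y, heatGamma x y h * f y t ∂vI) ∂vI)
      + ∫ x, Wt (p t) x * (BB y₁ lam t t' t' x - BB y₂ lam t t' t' x) ∂vI := by
    have i1 : Integrable (fun x => ∫ y, heatGamma x y h * f y t ∂vI) vI :=
      ker_int (Y := id) (θ := fun _ => h) aemeasurable_id aemeasurable_const fi
    have i2 : Integrable (fun x => BB y₁ lam t t' t' x - BB y₂ lam t t' t' x) vI := (D.BB_int D.m1 (t := t') tI.1.le tI'.2.le).sub (D.BB_int D.m2 (t := t') tI.1.le tI'.2.le)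
    rw [← integral_add (Wt_int i1) (Wt_int i2)]
    refine integral_congr_ae ?_
    filter_upwards [D.restart_ae tI.1 htt tI'.2] with x hx
    rw [hx]; ring
  have hlt := Q.lam_eq t ht
  -- part C
  have Cc : |(∫ σ in Ioo t t', lam σ) - h * lam t| ≤ C2 * (Real.sqrt h + ω) * h := by
    have li := D.lam_sub tI.1.le tI'.2.le
    have e : h * lam t = ∫ σ in Ioo t t', lam t := by
      rw [setIntegral_const]; simp [Measure.real, htt.le, hh]
    rw [e, ← integral_sub li (by simp)]
    have := norm_setIntegral_le_of_norm_le_const (μ := volume) (s := Ioo t t') (f := fun σ => lam σ - lam t) (C := C2 * (Real.sqrt h + ω)) (by simp) (by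
      intro σ hσ
      have := hosc t σ ht (Q.mid ht ht' ⟨hσ.1.le, hσ.2.le⟩) hσ.1 (by linarith [hσ.2]) (by linarith [hσ.2])
      rw [Real.norm_eq_abs]
      refine this.trans ?_
      have := hω σ ⟨hσ.1.le, hσ.2.le⟩
      have : σ - t ≤ h := by linarith [hσ.2]
      gcongr)
    rw [Real.norm_eq_abs] at this
    refine this.trans (le_of_eq ?_)
    simp [Measure.real, htt.le, hh]
  have hsq : h ≤ Real.sqrt h := Real.le_sqrt_of_sq_le (by nlinarith)
  have hs0 := Real.sqrt_nonneg h
  unfold MM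
  have e : (∫ x, Wt (p t') x * f x t' ∂vI) - (∫ x, Wt (p t) x * f x t ∂vI)
      = ((∫ x, Wt (p t') x * f x t' ∂vI) - ∫ x, Wt (p t) x * f x t' ∂vI)
      + ((∫ x, Wt (p t) x * (∫ y, heatGamma x y h * f y t ∂vI) ∂vI) - (∫ x, Wt (p t) x * f x t ∂vI) + f1 (p t) t * h)
      + ((∫ x, Wt (p t) x * (BB y₁ lam t t' t' x - BB y₂ lam t t' t' x) ∂vI) + ∫ σ in Ioo t t', lam σ)
      - ((∫ σ in Ioo t t', lam σ) - h * lam t) := by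
    rw [B3, hlt]; ring
  rw [e]
  have m1 : C3 * (h * h) ≤ C3 * (h * Real.sqrt h) := by gcongr
  have m2 : 0 ≤ C1 * (h * Real.sqrt h) := by positivity
  have m3 : 0 ≤ (C3 + C4 * K) * (h * ω) := by positivity
  rw [abs_le] at *
  constructor <;> nlinarith [A.1, A.2, B1.1, B1.2, B2.1, B2.2, Cc.1, Cc.2]

end HG

namespace HG
open Set Filter Topology ENNReal

lemma Sol.MM_deriv {a T : ℝ} {g p : ℝ → ℝ} {f : ℝ → ℝ → ℝ} (S : Sol a T g p f) {t₀ : ℝ} (ht₀ : t₀ ∈ Ioo 0 T) :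
    HasDerivAt (MM p f) 0 t₀ := by
  obtain ⟨C, δ, hC, hδ, H⟩ := S.inc ht₀
  rw [hasDerivAt_iff_isLittleO, Asymptotics.isLittleO_iff]
  intro c hc
  set η := c / (3 * (C + 1)) with hη
  have hη0 : 0 < η := by positivity
  have hηC : C * (3 * η) ≤ c := by
    rw [hη]; 
    have : C * (3 * (c / (3 * (C + 1)))) = c * (C / (C + 1)) := by field_simp
    rw [this]
    have : C / (C + 1) ≤ 1 := (div_le_one (by linarith)).2 (by linarith)
    nlinarith
  have hpc : ContinuousAt p t₀ := S.p_cont.continuousAt (isOpen_Ioo.mem_nhds ht₀)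
  obtain ⟨δ2, hδ2, hp⟩ := Metric.continuousAt_iff.1 hpc η hη0
  set ε := min δ (min (δ2 / 2) (η ^ 2)) with hε
  have hε0 : 0 < ε := lt_min hδ (lt_min (by linarith) (by positivity))
  have e1 : ε ≤ δ := min_le_left _ _
  have e2 : ε ≤ δ2 / 2 := (min_le_right _ _).trans (min_le_left _ _)
  have e3 : ε ≤ η ^ 2 := (min_le_right _ _).trans (min_le_right _ _)
  have key : ∀ t t', |t - t₀| ≤ ε → |t' - t₀| ≤ ε → t < t' → t' - t ≤ ε → |MM p f t' - MM p f t| ≤ c * (t' - t) := by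
    intro t t' ht ht' htt hd
    have A := H t t' (2 * η) (ht.trans e1) (ht'.trans e1) htt (by
      intro s hs
      have hs' : |s - t₀| ≤ ε := by
        rw [abs_le] at *; exact ⟨by linarith [hs.1], by linarith [hs.2]⟩
      have a1 := hp (x := s) (by rw [Real.dist_eq]; linarith)
      have a2 := hp (x := t) (by rw [Real.dist_eq]; linarith)
      rw [Real.dist_eq, abs_lt] at a1 a2
      rw [abs_le]; constructor <;> linarith [a1.1, a1.2, a2.1, a2.2])
    have hsq : Real.sqrt (t' - t) ≤ η := by
      rw [Real.sqrt_le_left hη0.le]; linarith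
    calc _ ≤ _ := A
      _ ≤ C * (t' - t) * (η + 2 * η) := by
          have : 0 ≤ t' - t := by linarith
          gcongr
      _ = C * (3 * η) * (t' - t) := by ring
      _ ≤ c * (t' - t) := by
          have : 0 ≤ t' - t := by linarith
          gcongr
  filter_upwards [Metric.ball_mem_nhds t₀ hε0] with t ht
  rw [Metric.mem_ball, Real.dist_eq] at ht
  simp only [smul_zero, sub_zero, Real.norm_eq_abs]
  have h0 : |t₀ - t₀| ≤ ε := by simpa using hε0.le
  rcases lt_trichotomy t t₀ with h | h | h
  · have := key t t₀ ht.le h0 h (by rw [abs_lt] at ht; linarith [ht.1])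
    rw [abs_sub_comm] at this
    rwa [abs_of_neg (show t - t₀ < 0 by linarith), neg_sub]
  · subst h; simp
  · have := key t₀ t h0 ht.le h (by rw [abs_lt] at ht; linarith [ht.2])
    rwa [abs_of_pos (show 0 < t - t₀ by linarith)]

lemma Sol.MM_const {a T : ℝ} {g p : ℝ → ℝ} {f : ℝ → ℝ → ℝ} (S : Sol a T g p f) {s t : ℝ}
    (hs : s ∈ Ioo 0 T) (ht : t ∈ Ioo 0 T) : MM p f s = MM p f t := by
  refine isOpen_Ioo.is_const_of_deriv_eq_zero isPreconnected_Ioo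
    (fun x hx => (S.MM_deriv hx).differentiableAt.differentiableWithinAt) (fun x hx => (S.MM_deriv hx).deriv) hs ht

lemma Sol.MM_neg {a T : ℝ} {g p : ℝ → ℝ} {f : ℝ → ℝ → ℝ} (S : Sol a T g p f) {t : ℝ} (ht : t ∈ Ioo 0 T) :
    MM p f t < 0 := by
  have hp := S.p_mem t ht
  have fi := Wt_int (c := p t) (S.D.f_int ht)
  have hnn : 0 ≤ᵐ[vI] fun x => -(Wt (p t) x * f x t) := by
    filter_upwards [ae_restrict_mem measurableSet_Ioc] with x hx
    rcases le_or_gt x (p t) with h | h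
    · simp [Wt_of_le h]
    · simp only [Wt_of_gt h, Pi.zero_apply]; linarith [S.neg_right t ht x ⟨h, hx.2⟩]
  have : 0 < ∫ x, -(Wt (p t) x * f x t) ∂vI := by
    rw [integral_pos_iff_support_of_nonneg_ae hnn fi.neg]
    have hsub : Ioc (p t) 1 ⊆ Function.support (fun x => -(Wt (p t) x * f x t)) := by
      intro x hx
      simp only [Function.mem_support, Wt_of_gt hx.1, one_mul]
      have := S.neg_right t ht x hx
      linarith
    refine lt_of_lt_of_le ?_ (measure_mono hsub)
    rw [vI, Measure.restrict_apply measurableSet_Ioc, inter_eq_left.2 (Ioc_subset_Ioc_left hp.1.le)]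
    simp; exact hp.2
  rw [integral_neg] at this
  unfold MM; linarith

/-- p stays away from 1 -/
lemma Sol.not_one {a T : ℝ} {g p : ℝ → ℝ} {f : ℝ → ℝ → ℝ} (S : Sol a T g p f) :
    ∃ η > 0, ∀ᶠ t in 𝓝[<] T, p t ≤ 1 - η := by
  have D := S.D
  have hT := D.hT
  set y₁ : ℝ → ℝ := fun s => p s - abar a p s with hy₁
  set y₂ : ℝ → ℝ := fun s => p s + abar a p s with hy₂
  set lam := flux f p with hlam
  have hmid : T / 2 ∈ Ioo 0 T := ⟨by linarith, by linarith⟩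
  set M := - MM p f (T / 2) with hM
  have hM0 : 0 < M := by have := S.MM_neg hmid; linarith
  -- tail
  have tail : ∃ s ∈ Ioo 0 T, ∫ σ in Ioo s T, lam σ ≤ M / 8 := by
    have hI : IntervalIntegrable lam volume 0 T := by
      rw [intervalIntegrable_iff_integrableOn_Ioo_of_le hT.le]; exact D.lam_int
    have hc := intervalIntegral.continuousOn_primitive_interval_left (μ := volume) (f := lam) (a := 0) (b := T) (by
      rw [uIcc_of_le hT.le, integrableOn_Icc_iff_integrableOn_Ioo]; exact D.lam_int)
    have hcT := hc T (by simp)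
    have hcT' : Tendsto (fun x => ∫ t in x..T, lam t) (𝓝[Ioo 0 T] T) (𝓝 0) := by
      have := hcT.mono_left (nhdsWithin_mono T (show Ioo 0 T ⊆ uIcc 0 T by rw [uIcc_of_le hT.le]; exact Ioo_subset_Icc_self))
      simpa using this
    have : (𝓝[Ioo 0 T] T).NeBot := by rw [nhdsWithin_Ioo_eq_nhdsLT hT]; infer_instance
    obtain ⟨s, hs1, hs2⟩ := ((hcT'.eventually (gt_mem_nhds (show 0 < M / 8 by linarith))).and self_mem_nhdsWithin).exists
    refine ⟨s, hs2, ?_⟩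
    rw [intervalIntegral.integral_of_le hs2.2.le, integral_Ioc_eq_integral_Ioo] at hs1
    exact hs1.le
  obtain ⟨s, hs, htail⟩ := tail
  set h0 := (T - s) / 2 with hh0
  have hh0p : 0 < h0 := by have := hs.2; linarith
  set A := (Real.sqrt (4 * Real.pi * h0))⁻¹ * SS T * mass T g lam with hA
  have hA0 : 0 ≤ A := by
    have := SS_nonneg T; have := D.mass_nonneg; positivity
  refine ⟨M / (4 * (A + 1)), by positivity, ?_⟩
  have hev : Ioo (T - h0) T ∈ 𝓝[<] T := Ioo_mem_nhdsLT (by linarith)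
  filter_upwards [hev] with t ht
  by_contra hcon
  push Not at hcon
  have hst : s < t := by have := ht.1; rw [hh0] at this; linarith [hs.2]
  have tI : t ∈ Ioo 0 T := ⟨hs.1.trans hst, ht.2⟩
  have pI := S.p_mem t tI
  have hMt : MM p f t = - M := by rw [hM, neg_neg]; exact S.MM_const tI hmid
  have i1 := D.BB_int D.m1 (a := s) (b := t) (t := t) hs.1.le ht.2.le
  have i2 := D.BB_int D.m2 (a := s) (b := t) (t := t) hs.1.le ht.2.le
  have n1 := D.BB_norm D.m1 (a := s) (b := t) (t := t) hs.1.le ht.2.le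
  have n2 := D.BB_norm D.m2 (a := s) (b := t) (t := t) hs.1.le ht.2.le
  have ii : Integrable ((Ioc (p t) 1).indicator (fun _ => A)) volume :=
      (integrableOn_const (by simp)).integrable_indicator measurableSet_Ioc
  have hbd : M ≤ ∫ x, ((Ioc (p t) 1).indicator (fun _ => A) x + (|BB y₁ lam s t t x| + |BB y₂ lam s t t x|)) ∂vI := by
    rw [← neg_neg M, ← hMt]
    unfold MM
    rw [← integral_neg]
    refine integral_mono_ae (Wt_int (D.f_int tI)).neg (ii.restrict.add (i1.abs.add i2.abs)) ?_
    filter_upwards [D.restart_ae hs.1 hst ht.2, ae_restrict_mem measurableSet_Ioc] with x hx hxI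
    have hxI' : x ∈ Icc (-1 : ℝ) 1 := ⟨hxI.1.le, hxI.2⟩
    rcases le_or_gt x (p t) with h | h
    · simp only [Wt_of_le h, zero_mul, neg_zero]
      have : 0 ≤ (Ioc (p t) 1).indicator (fun _ => A) x := indicator_nonneg (fun _ _ => hA0) x
      positivity
    · have hmem : x ∈ Ioc (p t) 1 := ⟨h, hxI.2⟩
      simp only [Wt_of_gt h, one_mul, indicator_of_mem hmem]
      rw [hx]
      have hker : |∫ y, heatGamma x y (t - s) * f y s ∂vI| ≤ A := by
        refine (abs_integral_le_integral_abs).trans ?_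
        have sI : s ∈ Ioo 0 T := hs
        calc _ ≤ ∫ y, ((Real.sqrt (4 * Real.pi * h0))⁻¹ * SS T) * |f y s| ∂vI := by
              refine integral_mono_of_nonneg (ae_of_all _ fun _ => abs_nonneg _) ((D.f_int sI).abs.const_mul _) ?_
              filter_upwards [ae_restrict_mem measurableSet_Ioc] with y hy
              rw [abs_mul, abs_of_nonneg (heatGamma_nonneg _ _ _)]
              refine mul_le_mul_of_nonneg_right ?_ (abs_nonneg _)
              have hle : h0 ≤ t - s := by have := ht.1; rw [hh0] at *; linarith
              have hts : 0 < t - s := by linarith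
              refine (heatGamma_le (T := T) hts (by linarith [hs.1, ht.2]) hxI' ⟨hy.1.le, hy.2⟩).trans ?_
              have := SS_nonneg T
              have he : Real.exp (-(x - y) ^ 2 / (4 * (t - s))) ≤ 1 := by
                rw [Real.exp_le_one_iff]
                apply div_nonpos_of_nonpos_of_nonneg _ (by linarith)
                linarith [sq_nonneg (x - y)]
              calc _ ≤ (Real.sqrt (4 * Real.pi * h0))⁻¹ * 1 * SS T := by gcongr
                _ = _ := by ring
          _ ≤ A := by
              rw [integral_const_mul, hA]
              have := SS_nonneg T
              exact mul_le_mul_of_nonneg_left (D.f_mass sI) (by positivity)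
      have k1 := neg_abs_le (∫ y, heatGamma x y (t - s) * f y s ∂vI)
      have k2 := neg_abs_le (BB y₁ lam s t t x)
      have k3 := le_abs_self (BB y₂ lam s t t x)
      linarith
  have i12 : Integrable (fun x => |BB y₁ lam s t t x| + |BB y₂ lam s t t x|) vI := i1.abs.add i2.abs
  rw [integral_add ii.restrict i12, integral_add i1.abs i2.abs] at hbd
  have hind : ∫ x, (Ioc (p t) 1).indicator (fun _ => A) x ∂vI ≤ A * (1 - p t) := by
    calc _ ≤ ∫ x, (Ioc (p t) 1).indicator (fun _ => A) x := by
          refine integral_mono_measure Measure.restrict_le_self (ae_of_all _ fun x => indicator_nonneg (fun _ _ => hA0) x) ii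
      _ = _ := by
          rw [integral_indicator measurableSet_Ioc, setIntegral_const]
          simp [Measure.real, pI.2.le]; ring
  have hle : ∫ σ in Ioo s t, lam σ ≤ M / 8 := by
    refine le_trans ?_ htail
    refine setIntegral_mono_set (D.lam_sub hs.1.le le_rfl) ?_ (Ioo_subset_Ioo le_rfl ht.2.le).eventuallyLE
    filter_upwards [ae_restrict_mem measurableSet_Ioo] with σ hσ using D.lam_nn σ ⟨hs.1.trans hσ.1, hσ.2⟩
  have h1 : A * (1 - p t) ≤ M / 4 := by
    have h2 : 1 - p t ≤ M / (4 * (A + 1)) := by linarith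
    calc _ ≤ (A + 1) * (M / (4 * (A + 1))) := by
          have : 0 ≤ 1 - p t := by linarith [pI.2]
          gcongr; linarith
      _ = M / 4 := by field_simp
  linarith

end HG

namespace HG
open Set Filter Topology ENNReal

set_option maxHeartbeats 2000000 in
lemma Sol.key {a T : ℝ} {g p : ℝ → ℝ} {f : ℝ → ℝ → ℝ} (S : Sol a T g p f) {R d : ℝ} (hd : 0 < d)
    (hda : 8 * d ≤ a) (hd1 : 8 * d ≤ 1 - R) (hd2 : 8 * d ≤ 1 + R) :
    ∃ B : ℝ, ∀ s t : ℝ, 0 < s → s < t → t < T → p s = R - d → (∀ σ ∈ Icc s t, R - d ≤ p σ ∧ p σ ≤ R + d) → |p t - R| ≤ d / 8 →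
      ((∀ σ ∈ Ioo s t, 6 * (d / 32) ≤ |(p σ - abar a p σ) - R|) ∧ (∀ σ ∈ Ioo s t, 6 * (d / 32) ≤ |(p σ + abar a p σ) - R|)) ∧
      ∀ z ∈ Metric.ball (R : ℂ) (2 * (d / 32)), ∫ y, ‖GC z y (t - s)‖ * |f y s| ∂vI ≤ B := by
  have D := S.D
  set y₁ : ℝ → ℝ := fun s => p s - abar a p s with hy₁
  set y₂ : ℝ → ℝ := fun s => p s + abar a p s with hy₂
  set lam := flux f p with hlam
  obtain ⟨C, hC0, hC⟩ := sqrt_exp_bound (ε := d ^ 2 / 8) (by positivity)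
  have hSS := SS_nonneg T
  have hT := D.hT
  set A := C * T * SS T with hA
  have hA0 : 0 ≤ A := by positivity
  refine ⟨SS T * (A * ∫ σ in Ioo 0 T, lam σ) + (SS T * A + A) * mass T g lam, ?_⟩
  intro s t hs hst htT hps hpσ hpt
  have ab : ∀ σ ∈ Icc s t, 7 * d ≤ abar a p σ := by
    intro σ hσ
    have := hpσ σ hσ
    refine le_min (by linarith) (le_min ?_ ?_) <;> linarith [this.1, this.2]
  have s1 : ∀ σ ∈ Ioo s t, y₁ σ ≤ R - 6 * d := by
    intro σ hσ
    have h1 := ab σ ⟨hσ.1.le, hσ.2.le⟩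
    have h2 := hpσ σ ⟨hσ.1.le, hσ.2.le⟩
    simp only [hy₁]; linarith [h2.2]
  have s2 : ∀ σ ∈ Ioo s t, R + 6 * d ≤ y₂ σ := by
    intro σ hσ
    have h1 := ab σ ⟨hσ.1.le, hσ.2.le⟩
    have h2 := hpσ σ ⟨hσ.1.le, hσ.2.le⟩
    simp only [hy₂]; linarith [h2.1]
  refine ⟨⟨fun σ hσ => ?_, fun σ hσ => ?_⟩, ?_⟩
  · have := s1 σ hσ
    simp only [hy₁] at this
    rw [abs_of_neg (by linarith)]; linarith
  · have := s2 σ hσ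
    simp only [hy₂] at this
    rw [abs_of_pos (by linarith)]; linarith
  intro z hz
  have sI : s ∈ Ioo 0 T := ⟨hs, hst.trans htT⟩
  have tI : t ∈ Ioo 0 T := ⟨hs.trans hst, htT⟩
  set x₀ := p t with hx₀
  have xI : x₀ ∈ Icc (-1 : ℝ) 1 := ⟨(S.p_mem t tI).1.le, (S.p_mem t tI).2.le⟩
  obtain ⟨hp1, hp2⟩ := abs_le.1 hpt
  set τ := t - s with hτ
  have hτ0 : 0 < τ := by linarith
  have hτT : τ ≤ T := by linarith
  set E := Real.exp ((d ^ 2 / 4) / (4 * τ)) with hE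
  have hE0 : 0 < E := Real.exp_pos _
  have hE1 : 1 ≤ E := Real.one_le_exp (by positivity)
  -- generic bound
  have gen : ∀ y ∈ Icc (-1 : ℝ) 1, ∀ θ, 0 < θ → θ ≤ τ → 3 / 4 * d ^ 2 ≤ (x₀ - y) ^ 2 → E * heatGamma x₀ y θ ≤ A := by
    intro y hy θ hθ hθτ hxy
    have hθT := hθτ.trans hτT
    have h1 := heatGamma_le hθ hθT xI hy
    have h2 : E ≤ Real.exp ((d ^ 2 / 4) / (4 * θ)) := by
      apply Real.exp_le_exp.2; gcongr
    calc E * heatGamma x₀ y θ ≤ Real.exp ((d ^ 2 / 4) / (4 * θ)) * ((Real.sqrt (4 * Real.pi * θ))⁻¹ * Real.exp (-(x₀ - y) ^ 2 / (4 * θ)) * SS T) := by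
          have := heatGamma_nonneg x₀ y θ
          gcongr
      _ = (Real.sqrt (4 * Real.pi * θ))⁻¹ * Real.exp ((d ^ 2 / 4) / (4 * θ) + -(x₀ - y) ^ 2 / (4 * θ)) * SS T := by
          rw [Real.exp_add]; ring
      _ ≤ (Real.sqrt (4 * Real.pi * θ))⁻¹ * Real.exp (-(d ^ 2 / 8) / (4 * θ)) * SS T := by
          rw [← add_div]
          gcongr
          nlinarith [sq_nonneg d]
      _ ≤ C * θ * SS T := by have := hC θ hθ; gcongr
      _ ≤ A := by rw [hA]; gcongr
  have sq_lb : ∀ y, y ≤ R - 5 * d ∨ R + 5 * d ≤ y → 3 / 4 * d ^ 2 ≤ (x₀ - y) ^ 2 := by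
    intro y hy
    rcases hy with h | h
    · nlinarith [show 4 * d ≤ x₀ - y by linarith]
    · nlinarith [show 4 * d ≤ y - x₀ by linarith]
  have b1 : ∀ σ ∈ Ioo s t, E * heatGamma x₀ (y₁ σ) (t - σ) ≤ A := by
    intro σ hσ
    exact gen _ (D.mem1 σ ⟨hs.trans hσ.1, hσ.2.trans htT⟩) _ (by linarith [hσ.2]) (by linarith [hσ.1])
      (sq_lb _ (Or.inl (by linarith [s1 σ hσ])))
  have b2 : ∀ σ ∈ Ioo s t, E * heatGamma x₀ (y₂ σ) (t - σ) ≤ A := by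
    intro σ hσ
    exact gen _ (D.mem2 σ ⟨hs.trans hσ.1, hσ.2.trans htT⟩) _ (by linarith [hσ.2]) (by linarith [hσ.1])
      (sq_lb _ (Or.inr (by linarith [s2 σ hσ])))
  have drop : ∀ G : ℝ, 0 ≤ G → E * G ≤ A → G ≤ A := fun G hG h => by nlinarith
  have i1 := D.past_int D.m1 (x := x₀) (t := t) hs.le htT.le (fun σ hσ => drop _ (heatGamma_nonneg _ _ _) (b1 σ hσ))
  have i2 := D.past_int D.m2 (x := x₀) (t := t) hs.le htT.le (fun σ hσ => drop _ (heatGamma_nonneg _ _ _) (b2 σ hσ))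
  have hres := D.restart hs hst htT xI i1 i2
  rw [S.zero_at t tI] at hres
  have hB2 : 0 ≤ BB y₂ lam s t t x₀ := setIntegral_nonneg measurableSet_Ioo fun σ hσ =>
    mul_nonneg (heatGamma_nonneg _ _ _) (D.lam_nn σ ⟨hs.trans hσ.1, hσ.2.trans htT⟩)
  have hB1 : E * BB y₁ lam s t t x₀ ≤ A * ∫ σ in Ioo 0 T, lam σ := by
    calc E * BB y₁ lam s t t x₀ = ∫ σ in Ioo s t, E * (heatGamma x₀ (y₁ σ) (t - σ) * lam σ) := by
          rw [BB, integral_const_mul]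
      _ ≤ ∫ σ in Ioo s t, A * lam σ := by
          refine setIntegral_mono_on (i1.const_mul E) ((D.lam_sub hs.le htT.le).const_mul A) measurableSet_Ioo fun σ hσ => ?_
          rw [← mul_assoc]
          exact mul_le_mul_of_nonneg_right (b1 σ hσ) (D.lam_nn σ ⟨hs.trans hσ.1, hσ.2.trans htT⟩)
      _ ≤ _ := by
          rw [integral_const_mul]
          exact mul_le_mul_of_nonneg_left (D.int_lam_le hs.le htT.le) hA0
  have fi := D.f_int sI
  have k1 : Integrable (fun y => -(SS T * E) * (heatGamma x₀ y τ * f y s)) vI := (bdd_ker xI hτ0 fi).const_mul _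
  have k2 : Integrable (fun y => (SS T * A + A) * |f y s|) vI := fi.abs.const_mul _
  obtain ⟨z1, z2⟩ := ball_re_im hz
  rw [abs_lt] at z1 z2
  have zI : z.re ∈ Icc (-1 : ℝ) 1 := ⟨by linarith [z1.1], by linarith [z1.2]⟩
  have him : z.im ^ 2 ≤ d ^ 2 / 256 := by nlinarith [z2.1, z2.2]
  calc ∫ y, ‖GC z y τ‖ * |f y s| ∂vI ≤ ∫ y, (-(SS T * E) * (heatGamma x₀ y τ * f y s) + (SS T * A + A) * |f y s|) ∂vI := by
        refine integral_mono_of_nonneg (ae_of_all _ fun _ => by positivity) (k1.add k2) ?_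
        filter_upwards [ae_restrict_mem measurableSet_Ioc] with y hy
        have yI : y ∈ Icc (-1 : ℝ) 1 := ⟨hy.1.le, hy.2⟩
        have hG := norm_GC_le hτ0 hτT zI yI
        have hgn := heatGamma_nonneg x₀ y τ
        -- the sign part
        have sgn : SS T * (E * heatGamma x₀ y τ * |f y s|) ≤ -(SS T * E) * (heatGamma x₀ y τ * f y s) + SS T * A * |f y s| ∨ y ≤ R - d := by
          rcases le_or_gt y (R - d) with h | h
          · exact Or.inr h
          · left
            have := S.neg_right s sI y ⟨by rw [hps]; exact h, hy.2⟩
            rw [abs_of_neg this]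
            nlinarith [mul_nonneg (mul_nonneg hSS hA0) (by linarith : 0 ≤ -f y s)]
        have sgn2 : 0 ≤ -(SS T * E) * (heatGamma x₀ y τ * f y s) + SS T * A * |f y s| := by
          rcases le_or_gt y (R - d) with h | h
          · have hb := gen y yI τ hτ0 le_rfl (by nlinarith [show 7 / 8 * d ≤ x₀ - y by linarith])
            have h1 : (E * heatGamma x₀ y τ) * f y s ≤ A * |f y s| := by
              calc _ ≤ (E * heatGamma x₀ y τ) * |f y s| := by
                    have := le_abs_self (f y s); gcongr
                _ ≤ _ := by gcongr
            nlinarith [mul_le_mul_of_nonneg_left h1 hSS]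
          · have := S.neg_right s sI y ⟨by rw [hps]; exact h, hy.2⟩
            have h3 : 0 ≤ SS T * E * (heatGamma x₀ y τ * -f y s) :=
              mul_nonneg (mul_nonneg hSS hE0.le) (mul_nonneg hgn (by linarith))
            have : 0 ≤ SS T * A * |f y s| := by positivity
            nlinarith
        rcases lt_or_ge |y - R| (d / 2) with hn | hf
        · -- near
          rw [abs_lt] at hn
          have hbase : (z.im ^ 2 - (z.re - y) ^ 2) ≤ d ^ 2 / 4 + -(x₀ - y) ^ 2 := by
            have e : (x₀ - y) ^ 2 - (z.re - y) ^ 2 = (x₀ - z.re) * (x₀ + z.re - 2 * y) := by ring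
            have e2 : |(x₀ - z.re) * (x₀ + z.re - 2 * y)| ≤ (3 / 16 * d) * (19 / 16 * d) := by
              rw [abs_mul]
              refine mul_le_mul ?_ ?_ (abs_nonneg _) (by positivity) <;> rw [abs_le] <;> constructor <;>
                linarith [z1.1, z1.2, hn.1, hn.2]
            have e3 := (abs_le.1 e2).2
            nlinarith
          have hK : ‖GC z y τ‖ ≤ SS T * (E * heatGamma x₀ y τ) := by
            calc _ ≤ _ := hG
              _ ≤ (Real.sqrt (4 * Real.pi * τ))⁻¹ * Real.exp ((d ^ 2 / 4 + -(x₀ - y) ^ 2) / (4 * τ)) * SS T := by gcongr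
              _ = SS T * (E * heatK (x₀ - y) τ) := by
                  rw [add_div, Real.exp_add, heatK]; ring
              _ ≤ _ := by
                  have := heatK_le_heatGamma x₀ y τ
                  gcongr
          have h1 : ‖GC z y τ‖ * |f y s| ≤ SS T * (E * heatGamma x₀ y τ * |f y s|) := by
            calc _ ≤ SS T * (E * heatGamma x₀ y τ) * |f y s| := by gcongr
              _ = _ := by ring
          rcases sgn with h | h
          · have : 0 ≤ A * |f y s| := by positivity
            have e : (SS T * A + A) * |f y s| = SS T * A * |f y s| + A * |f y s| := by ring
            simp only [e]; linarith
          · linarith [hn.1]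
        · have hbase : (z.im ^ 2 - (z.re - y) ^ 2) ≤ -(d ^ 2 / 8) := by
            have : (7 / 16 * d) ^ 2 ≤ (z.re - y) ^ 2 := by
              rw [← sq_abs (z.re - y)]
              refine pow_le_pow_left₀ (by positivity) ?_ 2
              have h1 := abs_sub_abs_le_abs_sub (y - R) (z.re - R)
              have h2 : |z.re - R| ≤ d / 16 := by rw [abs_le]; constructor <;> linarith [z1.1, z1.2]
              have e : y - R - (z.re - R) = -(z.re - y) := by ring
              rw [e, abs_neg] at h1
              linarith
            nlinarith
          have hK : ‖GC z y τ‖ ≤ A := by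
            calc _ ≤ _ := hG
              _ ≤ (Real.sqrt (4 * Real.pi * τ))⁻¹ * Real.exp (-(d ^ 2 / 8) / (4 * τ)) * SS T := by gcongr
              _ ≤ C * τ * SS T := by have := hC τ hτ0; gcongr
              _ ≤ A := by rw [hA]; gcongr
          have h1 : ‖GC z y τ‖ * |f y s| ≤ A * |f y s| := by gcongr
          have e : (SS T * A + A) * |f y s| = SS T * A * |f y s| + A * |f y s| := by ring
          simp only [e]; linarith
    _ = SS T * (E * (BB y₁ lam s t t x₀ - BB y₂ lam s t t x₀)) + (SS T * A + A) * ∫ y, |f y s| ∂vI := by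
        rw [integral_add k1 k2, integral_const_mul, integral_const_mul]
        have : ∫ y, heatGamma x₀ y τ * f y s ∂vI = -(BB y₁ lam s t t x₀ - BB y₂ lam s t t x₀) := by linarith
        rw [this]; ring
    _ ≤ _ := by
        have h1 := D.f_mass sI
        have h2 : E * (BB y₁ lam s t t x₀ - BB y₂ lam s t t x₀) ≤ A * ∫ σ in Ioo 0 T, lam σ := by nlinarith
        gcongr

lemma Sol.core {a T : ℝ} {g p : ℝ → ℝ} {f : ℝ → ℝ → ℝ} (S : Sol a T g p f) {R q : ℝ} (hR : -1 < R) (hq : q < R)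
    (hfr : ∃ᶠ t in 𝓝[<] T, p t < q) (hev : ∀ η > 0, ∀ᶠ t in 𝓝[<] T, p t < R + η)
    (hfr2 : ∀ η > 0, ∃ᶠ t in 𝓝[<] T, R - η < p t) :
    ∃ r > 0, ∀ m : ℕ, ∃ C : ℝ, ∀ᶠ t in 𝓝[<] T, |p t - R| ≤ r → ∀ x, |x - R| ≤ r →
      |iteratedDeriv m (fun z => f z t) x| ≤ C := by
  have hR1 : R < 1 := by
    obtain ⟨η, hη, h⟩ := S.not_one
    obtain ⟨t, h1, h2⟩ := ((hfr2 (η / 2) (by linarith)).and_eventually h).exists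
    linarith
  have ha := S.a_pos
  obtain ⟨d, hd, hda, hd1, hd2, hdq⟩ : ∃ d > 0, 8 * d ≤ a ∧ 8 * d ≤ 1 - R ∧ 8 * d ≤ 1 + R ∧ d ≤ R - q := by
    refine ⟨min (min a (R - q)) (min (1 - R) (1 + R)) / 8, ?_, ?_, ?_, ?_, ?_⟩
    · have : 0 < min (min a (R - q)) (min (1 - R) (1 + R)) := by
        refine lt_min (lt_min ha ?_) (lt_min ?_ ?_) <;> linarith
      linarith
    · have : min (min a (R - q)) (min (1 - R) (1 + R)) ≤ a := (min_le_left _ _).trans (min_le_left _ _)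
      linarith
    · have : min (min a (R - q)) (min (1 - R) (1 + R)) ≤ 1 - R := (min_le_right _ _).trans (min_le_left _ _)
      linarith
    · have : min (min a (R - q)) (min (1 - R) (1 + R)) ≤ 1 + R := (min_le_right _ _).trans (min_le_right _ _)
      linarith
    · have : min (min a (R - q)) (min (1 - R) (1 + R)) ≤ R - q := (min_le_left _ _).trans (min_le_right _ _)
      linarith
  obtain ⟨B, hB⟩ := S.key hd hda hd1 hd2
  obtain ⟨C₂, hC₂, hreg⟩ := S.D.reg (r := d / 32) (by positivity)
  refine ⟨d / 32, by positivity, fun m => ⟨m.factorial * (B + C₂) / (d / 32 / 2) ^ m, ?_⟩⟩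
  have hT := S.D.hT
  have hev1 : ∀ᶠ t in 𝓝[<] T, t ∈ Ioo 0 T := Ioo_mem_nhdsLT hT
  obtain ⟨s₀, hs₀, hs₀'⟩ := (mem_nhdsLT_iff_exists_Ioo_subset' hT).1 ((hev d hd).and hev1)
  have hev2 : ∀ᶠ t in 𝓝[<] T, t ∈ Ioo s₀ T := Ioo_mem_nhdsLT hs₀
  obtain ⟨s₁, hs1, hs2⟩ := (hfr.and_eventually hev2).exists
  have hev3 : ∀ᶠ t in 𝓝[<] T, t ∈ Ioo s₁ T := Ioo_mem_nhdsLT hs2.2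
  filter_upwards [hev3] with t ht hpt x hx
  have hsub : Icc s₁ t ⊆ Ioo s₀ T := fun σ hσ => ⟨hs2.1.trans_le hσ.1, hσ.2.trans_lt ht.2⟩
  have hc : ContinuousOn p (Icc s₁ t) := S.p_cont.mono fun σ hσ => (hs₀' (hsub hσ)).2
  have hK : IsCompact (Icc s₁ t ∩ p ⁻¹' Iic (R - d)) :=
    isCompact_Icc.of_isClosed_subset (hc.preimage_isClosed_of_isClosed isClosed_Icc isClosed_Iic) inter_subset_left
  obtain ⟨s, hs, hmax⟩ := hK.exists_isGreatest ⟨s₁, ⟨⟨le_rfl, ht.1.le⟩, by simp only [mem_preimage, mem_Iic]; linarith⟩⟩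
  have hpt' := abs_le.1 hpt
  have hsle : p s ≤ R - d := hs.2
  have hst : s < t := by
    rcases hs.1.2.lt_or_eq with h | h
    · exact h
    · rw [h] at hsle; linarith [hpt'.1]
  have hps : p s = R - d := by
    have hc2 : ContinuousOn p (Icc s t) := hc.mono (Icc_subset_Icc_left hs.1.1)
    obtain ⟨σ, hσ, hσ2⟩ := intermediate_value_Icc hst.le hc2 (show R - d ∈ Icc (p s) (p t) from ⟨hsle, by linarith [hpt'.1]⟩)
    have : σ ≤ s := hmax ⟨⟨hs.1.1.trans hσ.1, hσ.2⟩, by simp [hσ2]⟩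
    rw [le_antisymm hσ.1 this]; exact hσ2
  have s0 : 0 < s := (hs₀' (hsub hs.1)).2.1
  have hpσ : ∀ σ ∈ Icc s t, R - d ≤ p σ ∧ p σ ≤ R + d := by
    intro σ hσ
    have hσ1 : σ ∈ Icc s₁ t := ⟨hs.1.1.trans hσ.1, hσ.2⟩
    refine ⟨?_, (hs₀' (hsub hσ1)).1.le⟩
    by_contra hcon
    push Not at hcon
    have : σ ≤ s := hmax ⟨hσ1, hcon.le⟩
    rw [← le_antisymm hσ.1 this] at hcon; linarith
  obtain ⟨⟨c1, c2⟩, hz⟩ := hB s t s0 hst ht.2 hps hpσ (by linarith)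
  have hRc : |R| + 6 * (d / 32) ≤ 1 := by
    have : |R| ≤ 1 - 8 * d := abs_le.2 ⟨by linarith, by linarith⟩
    linarith
  exact (hreg R s t B s0 hst ht.2 hRc c1 c2 hz x hx m).1

end HG

namespace HG
open Set Filter Topology ENNReal

lemma abar_le (a : ℝ) (p : ℝ → ℝ) (s : ℝ) : abar a p s ≤ 1 - p s ∧ abar a p s ≤ 1 + p s :=
  ⟨(min_le_right _ _).trans (min_le_left _ _), (min_le_right _ _).trans (min_le_right _ _)⟩

lemma sol_of {a T : ℝ} {fI p : ℝ → ℝ} {f : ℝ → ℝ → ℝ} (hT : 0 < T) (ha : 0 < a) (hc : ContinuousOn fI (Icc (-1) 1))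
    (h : IsSolutionP a fI (Ioo 0 T) f p) (hint : IntegrableOn (flux f p) (Ioo 0 T)) : Sol a T fI p f := by
  have hab : ContinuousOn (fun s => abar a p s) (Ioo 0 T) := by
    unfold abar
    have := h.p_cont
    fun_prop
  have habn : ∀ s ∈ Ioo 0 T, 0 ≤ abar a p s := fun s hs => by
    have := h.p_mem s hs
    exact le_min ha.le (le_min (by linarith [this.2]) (by linarith [this.1]))
  refine ⟨ha, ⟨hT, ?_, ?_, ?_, ?_, ?_, ?_, hint, ?_⟩, h.p_cont, h.p_mem, h.zero_at, h.pos_left, h.neg_right⟩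
  · exact (hc.integrableOn_compact isCompact_Icc).mono_set Ioc_subset_Icc_self
  · exact (h.p_cont.sub hab).aemeasurable measurableSet_Ioo
  · exact (h.p_cont.add hab).aemeasurable measurableSet_Ioo
  · intro s hs
    have h1 := abar_le a p s; have h2 := habn s hs; have h3 := h.p_mem s hs
    constructor <;> linarith [h1.1, h1.2, h3.1, h3.2]
  · intro s hs
    have h1 := abar_le a p s; have h2 := habn s hs; have h3 := h.p_mem s hs
    constructor <;> linarith [h1.1, h1.2, h3.1, h3.2]
  · intro s hs
    have hp := h.p_mem s hs
    have hd := (h.diff_at s hs).hasDerivAt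
    unfold flux
    rw [neg_nonneg]
    have ht := hd.tendsto_slope
    have ht2 := ht.mono_left (nhdsWithin_mono (p s) (show Ioi (p s) ⊆ {p s}ᶜ from fun x hx => ne_of_gt hx))
    refine le_of_tendsto ht2 ?_
    filter_upwards [Ioo_mem_nhdsGT hp.2] with x hx
    rw [slope_def_field, h.zero_at s hs]
    have := h.neg_right s hs x ⟨hx.1, hx.2.le⟩
    exact div_nonpos_of_nonpos_of_nonneg (by linarith) (by linarith [hx.1])
  · intro t ht x hx
    rw [h.duhamel t ht x hx, intervalIntegral.integral_of_le (by norm_num), intervalIntegral.integral_of_le ht.1.le,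
      integral_Ioc_eq_integral_Ioo (x := 0)]

lemma vI_neg (F : ℝ → ℝ) : ∫ y, F (-y) ∂vI = ∫ y, F y ∂vI := by
  have := intervalIntegral.integral_comp_neg (a := -1) (b := 1) F
  rw [neg_neg, intervalIntegral.integral_of_le (by norm_num), intervalIntegral.integral_of_le (by norm_num)] at this
  exact this

lemma abar_neg (a : ℝ) (p : ℝ → ℝ) (s : ℝ) : abar a (fun t => - p t) s = abar a p s := by
  unfold abar
  rw [min_comm (1 - p s)]; ring_nf

lemma flux_neg (f : ℝ → ℝ → ℝ) (p : ℝ → ℝ) : flux (fun x t => - f (-x) t) (fun t => - p t) = flux f p := by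
  funext s
  unfold flux
  have e : deriv (fun x => - f (-x) s) (-p s) = - deriv (fun x => f (-x) s) (-p s) := deriv.fun_neg
  rw [e, deriv_comp_neg (fun x => f x s)]
  simp

lemma Sol.flip {a T : ℝ} {g p : ℝ → ℝ} {f : ℝ → ℝ → ℝ} (S : Sol a T g p f) :
    Sol a T (fun x => - g (-x)) (fun t => - p t) (fun x t => - f (-x) t) := by
  have D := S.D
  refine ⟨S.a_pos, ⟨D.hT, ?_, ?_, ?_, ?_, ?_, ?_, ?_, ?_⟩, S.p_cont.neg, ?_, ?_, ?_, ?_⟩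
  · have h : IntervalIntegrable g volume (-1) 1 := by
      rw [intervalIntegrable_iff_integrableOn_Ioc_of_le (by norm_num)]; exact D.g_int
    have h2 := (IntervalIntegrable.iff_comp_neg (f := g) (a := -1) (b := 1)).1 h
    rw [neg_neg] at h2
    have h3 := h2.symm.neg
    rw [intervalIntegrable_iff_integrableOn_Ioc_of_le (by norm_num)] at h3; exact h3
  · refine D.m2.neg.congr (ae_of_all _ fun s => ?_)
    simp only [abar_neg, Pi.neg_apply]; ring
  · refine D.m1.neg.congr (ae_of_all _ fun s => ?_)
    simp only [abar_neg, Pi.neg_apply]; ring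
  · intro s hs
    have := D.mem2 s hs
    simp only [abar_neg]; constructor <;> linarith [this.1, this.2]
  · intro s hs
    have := D.mem1 s hs
    simp only [abar_neg]; constructor <;> linarith [this.1, this.2]
  · rw [flux_neg]; exact D.lam_nn
  · rw [flux_neg]; exact D.lam_int
  · intro t ht x hx
    rw [flux_neg]
    simp only [abar_neg]
    rw [D.duh t ht (-x) ⟨by linarith [hx.2], by linarith [hx.1]⟩, neg_add]
    congr 1
    · rw [← vI_neg, ← integral_neg]
      refine integral_congr_ae (ae_of_all _ fun y => ?_)
      simp only [heatGamma_neg]; ring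
    · rw [← integral_neg]
      refine integral_congr_ae (ae_of_all _ fun s => ?_)
      have e1 : heatGamma x (-p s - abar a p s) (t - s) = heatGamma (-x) (p s + abar a p s) (t - s) := by
        rw [← heatGamma_neg]; congr 1; ring
      have e2 : heatGamma x (-p s + abar a p s) (t - s) = heatGamma (-x) (p s - abar a p s) (t - s) := by
        rw [← heatGamma_neg]; congr 1; ring
      simp only [e1, e2]; ring
  · intro t ht
    have := S.p_mem t ht
    constructor <;> linarith [this.1, this.2]
  · intro t ht
    simp [S.zero_at t ht]
  · intro t ht x hx
    have := S.neg_right t ht (-x) ⟨by linarith [hx.2], by linarith [hx.1]⟩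
    linarith
  · intro t ht x hx
    have := S.pos_left t ht (-x) ⟨by linarith [hx.2], by linarith [hx.1]⟩
    linarith

lemma iter_flip (F : ℝ → ℝ) (m : ℕ) (x : ℝ) : |iteratedDeriv m (fun z => - F (-z)) (-x)| = |iteratedDeriv m F x| := by
  have e : (fun z => - F (-z)) = -(fun z => F (-z)) := rfl
  rw [e, iteratedDeriv_neg, iteratedDeriv_comp_neg]
  simp [abs_mul]

lemma limsup_conv {T R r C : ℝ} {p : ℝ → ℝ} {G : ℝ → ℝ → ℝ} (hr : 0 < r)
    (h : ∀ᶠ t in 𝓝[<] T, |p t - R| ≤ r → ∀ x, |x - R| ≤ r → |G t x| ≤ C) {tn : ℕ → ℝ}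
    (h1 : ∀ n, tn n ∈ Ioo 0 T) (h2 : Tendsto tn atTop (𝓝 T)) (h3 : Tendsto (fun n => p (tn n)) atTop (𝓝 R))
    {x : ℝ} (hx : |x - R| ≤ r) : limsup (fun n => |G (tn n) x|) atTop ≤ C := by
  have ht : Tendsto tn atTop (𝓝[<] T) := tendsto_nhdsWithin_iff.2 ⟨h2, Eventually.of_forall fun n => (h1 n).2⟩
  have e1 := ht.eventually h
  have e2 : ∀ᶠ n in atTop, |p (tn n) - R| ≤ r := by
    filter_upwards [h3 (Metric.closedBall_mem_nhds R hr)] with n hn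
    simpa [Real.dist_eq] using hn
  refine limsup_le_of_le ?_ ?_
  · exact IsCoboundedUnder.of_frequently_ge (a := 0) (Frequently.of_forall fun n => abs_nonneg _)
  · filter_upwards [e1, e2] with n a b using a b x hx

lemma final (a tstar L R : ℝ) (fI : ℝ → ℝ) (f : ℝ → ℝ → ℝ) (p : ℝ → ℝ) (S : Sol a tstar fI p f)
    (hL : L = Filter.liminf p (nhdsWithin tstar (Set.Ioo 0 tstar)))
    (hR : R = Filter.limsup p (nhdsWithin tstar (Set.Ioo 0 tstar)))
    (hLR : L < R) :
    ∀ m : ℕ, ∃ C : ℝ, ∃ β₀ > (0:ℝ), ∀ β, 0 < β → β ≤ β₀ →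
      (∀ tn : ℕ → ℝ, (∀ n, tn n ∈ Set.Ioo (0:ℝ) tstar) →
        Filter.Tendsto tn Filter.atTop (nhds tstar) →
        Filter.Tendsto (fun n => p (tn n)) Filter.atTop (nhds R) →
        ∀ x ∈ Set.Icc (R - β) (R + β),
          Filter.limsup (fun n => |iteratedDeriv m (fun z => f z (tn n)) x|)
            Filter.atTop ≤ C) ∧
      (∀ tn : ℕ → ℝ, (∀ n, tn n ∈ Set.Ioo (0:ℝ) tstar) →
        Filter.Tendsto tn Filter.atTop (nhds tstar) →
        Filter.Tendsto (fun n => p (tn n)) Filter.atTop (nhds L) →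
        ∀ x ∈ Set.Icc (L - β) (L + β),
          Filter.limsup (fun n => |iteratedDeriv m (fun z => f z (tn n)) x|)
            Filter.atTop ≤ C) := by
  have hT := S.D.hT
  rw [nhdsWithin_Ioo_eq_nhdsLT hT] at hL hR
  have hI : ∀ᶠ t in 𝓝[<] tstar, t ∈ Ioo 0 tstar := Ioo_mem_nhdsLT hT
  have hlo : ∀ᶠ t in 𝓝[<] tstar, -1 ≤ p t := hI.mono fun t ht => (S.p_mem t ht).1.le
  have hhi : ∀ᶠ t in 𝓝[<] tstar, p t ≤ 1 := hI.mono fun t ht => (S.p_mem t ht).2.le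
  have bu : IsBoundedUnder (· ≤ ·) (𝓝[<] tstar) p := ⟨1, hhi⟩
  have bl : IsBoundedUnder (· ≥ ·) (𝓝[<] tstar) p := ⟨-1, hlo⟩
  have cu := bu.isCoboundedUnder_ge
  have cl := bl.isCoboundedUnder_le
  have hL1 : -1 ≤ L := by rw [hL]; exact le_liminf_of_le cu hlo
  have hR1 : R ≤ 1 := by rw [hR]; exact limsup_le_of_le cl hhi
  have r1 : ∀ η > 0, ∀ᶠ t in 𝓝[<] tstar, p t < R + η := fun η hη =>
    eventually_lt_of_limsup_lt (by rw [← hR]; linarith) bu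
  have r2 : ∀ b < R, ∃ᶠ t in 𝓝[<] tstar, b < p t := fun b hb =>
    frequently_lt_of_lt_limsup cl (by rw [← hR]; exact hb)
  have l1 : ∀ η > 0, ∀ᶠ t in 𝓝[<] tstar, L - η < p t := fun η hη =>
    eventually_lt_of_lt_liminf (by rw [← hL]; linarith) bl
  have l2 : ∀ b > L, ∃ᶠ t in 𝓝[<] tstar, p t < b := fun b hb =>
    frequently_lt_of_liminf_lt cu (by rw [← hL]; exact hb)
  obtain ⟨ra, hra, HA⟩ := S.core (R := R) (q := (L + R) / 2) (by linarith) (by linarith) (l2 _ (by linarith)) r1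
    (fun η hη => r2 _ (by linarith))
  obtain ⟨rb, hrb, HB⟩ := S.flip.core (R := -L) (q := -((L + R) / 2)) (by linarith) (by linarith)
    ((r2 ((L + R) / 2) (by linarith)).mono fun t ht => by linarith)
    (fun η hη => (l1 η hη).mono fun t ht => by linarith)
    (fun η hη => (l2 (L + η) (by linarith)).mono fun t ht => by linarith)
  intro m
  obtain ⟨CA, hA⟩ := HA m
  obtain ⟨CB, hB⟩ := HB m
  refine ⟨max CA CB, min ra rb, lt_min hra hrb, fun β hβ hβ' => ⟨?_, ?_⟩⟩
  · intro tn h1 h2 h3 x hx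
    refine (limsup_conv (G := fun t x => iteratedDeriv m (fun z => f z t) x) hra hA h1 h2 h3 ?_).trans (le_max_left _ _)
    have := hβ'.trans (min_le_left _ _)
    rw [abs_le]; constructor <;> linarith [hx.1, hx.2]
  · intro tn h1 h2 h3 x hx
    have key := (limsup_conv (G := fun t x => iteratedDeriv m (fun z => - f (-z) t) x) (x := -x) hrb hB h1 h2 h3.neg (by
      have := hβ'.trans (min_le_right _ _)
      rw [abs_le]; constructor <;> linarith [hx.1, hx.2]))
    have e : (fun n => |iteratedDeriv m (fun z => f z (tn n)) x|) = fun n => |iteratedDeriv m (fun z => - f (-z) (tn n)) (-x)| :=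
      funext fun n => (iter_flip (fun z => f z (tn n)) m x).symm
    rw [e]
    exact key.trans (le_max_right _ _)

end HG

/-- Derivative bounds in the puddle case (Proposition 4.3): if
`L = liminf_{t→t*} p(t) < R = limsup_{t→t*} p(t)`, then for every `m` there is
`C(m)` such that for all sufficiently small `β > 0` and every sequence
`t_n → t*` with `p(t_n) → R`, `limsup_n |∂ₓ^m f(x,t_n)| ≤ C(m)` on `[R−β, R+β]`;
and the parallel statement at `L`. -/
theorem statement17 (a a₀ lamI tstar L R : ℝ) (fI : ℝ → ℝ) (pI : ℝ)
    (f : ℝ → ℝ → ℝ) (p : ℝ → ℝ)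
    (ha : a ∈ Set.Ioo (0:ℝ) 1) (ha₀ : 0 < a₀) (ha₀' : a₀ < a / 4)
    (hI : IsInitialDatum fI pI a₀ lamI)
    (hsol : IsSolutionP a fI (Set.Ioo 0 tstar) f p)
    (hint : MeasureTheory.IntegrableOn (flux f p) (Set.Ioo 0 tstar))
    (hL : L = Filter.liminf p (nhdsWithin tstar (Set.Ioo 0 tstar)))
    (hR : R = Filter.limsup p (nhdsWithin tstar (Set.Ioo 0 tstar)))
    (hLR : L < R) :
    ∀ m : ℕ, ∃ C : ℝ, ∃ β₀ > (0:ℝ), ∀ β, 0 < β → β ≤ β₀ →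
      (∀ tn : ℕ → ℝ, (∀ n, tn n ∈ Set.Ioo (0:ℝ) tstar) →
        Filter.Tendsto tn Filter.atTop (nhds tstar) →
        Filter.Tendsto (fun n => p (tn n)) Filter.atTop (nhds R) →
        ∀ x ∈ Set.Icc (R - β) (R + β),
          Filter.limsup (fun n => |iteratedDeriv m (fun z => f z (tn n)) x|)
            Filter.atTop ≤ C) ∧
      (∀ tn : ℕ → ℝ, (∀ n, tn n ∈ Set.Ioo (0:ℝ) tstar) →
        Filter.Tendsto tn Filter.atTop (nhds tstar) →
        Filter.Tendsto (fun n => p (tn n)) Filter.atTop (nhds L) →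
        ∀ x ∈ Set.Icc (L - β) (L + β),
          Filter.limsup (fun n => |iteratedDeriv m (fun z => f z (tn n)) x|)
            Filter.atTop ≤ C) := by
  rcases le_or_gt tstar 0 with hT | hT
  · intro m
    refine ⟨0, 1, one_pos, fun β _ _ => ⟨?_, ?_⟩⟩
    · intro tn h1
      exact absurd ((h1 0).1.trans (h1 0).2) (by linarith)
    · intro tn h1
      exact absurd ((h1 0).1.trans (h1 0).2) (by linarith)
  · exact HG.final a tstar L R fI f p (HG.sol_of hT ha.1 hI.smooth.continuousOn hsol hint) hL hR hLR
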